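/- Let n > n₁ ≥ 2 and m > m₁ ≥ 2 be integers with F_n - F_{n₁} = T_m - T_{m₁}. Then max{(n-n₁)·log α, (m-m₁)·log α_T} < 1.66×10^30·(log n)², and moreover n < 8×10^51; here α = (1+√5)/2 and α_T is the unique real root of x³ - x² - x - 1. -/

import Mathlib

/-!
By the Binet formulas, a solution makes the linear form `n log φ - m log t + log μ` tiny, where `φ`
is the golden ratio, `t` the Tribonacci constant and `μ` depends on the gaps `n - n₁` and `m - m₁`.
The forms in which `F_{n₁}`, `T_{m₁}` or both are neglected are small as long as the corresponding
gaps are large.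

Baker's method bounds such forms from below. If one were too small, the exponential polynomial with
algebraic values and many zeros that Siegel's lemma provides would be small at further integers by
Hermite interpolation, hence zero there by Liouville's inequality, until it had more zeros than it
can have. Applied first to the form without smaller terms, then to those with one of them and at
last to the full form, this bounds one gap, both gaps and `n` in turn, and gives `n ≤ 2 ^ 4087`.

Two rounds of Baker–Davenport reduction with a convergent of `log φ / log t` lower the bound to
`n ≤ 477`, where the claim is trivial.
-/

/-- The Tribonacci sequence: T 0 = 0, T 1 = T 2 = 1,
    T (k+3) = T (k+2) + T (k+1) + T k. -/
def trib : ℕ → ℤ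
  | 0 => 0
  | 1 => 1
  | 2 => 1
  | n + 3 => trib (n + 2) + trib (n + 1) + trib n

namespace FibTrib

section Hermite

/-- The sequence `k ↦ g⁽ˢ⁾(z) / s!` for `g = Xᵏ`. A sequence `u : ℕ → ℝ` stands for the linear
functional on polynomials with `Xᵏ ↦ u k`, and `hasse z s` is evaluation of the `s`-th Hasse
derivative at `z`. -/
noncomputable def hasse (z : ℝ) (s k : ℕ) : ℝ := k.choose s * z ^ (k - s)

/-- The functional `g ↦ u ((g - g(ν)) / (X - ν))`, in terms of its values on monomials. -/
noncomputable def divDiff (ν : ℝ) : (ℕ → ℝ) →ₗ[ℝ] ℕ → ℝ where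
  toFun u k := ∑ i ∈ Finset.range k, ν ^ (k - 1 - i) * u i
  map_add' u v := by
    ext k
    simp only [Pi.add_apply, mul_add, Finset.sum_add_distrib]
  map_smul' c u := by
    ext k
    simp only [Pi.smul_apply, smul_eq_mul, RingHom.id_apply, Finset.mul_sum, mul_left_comm]

/-- `u` is a combination of the functionals `hasse z s`, `(z, s) ∈ I`, whose coefficients, weighted
by `2 ^ s`, have absolute sum at most `N`. The weight makes every `divDiff ν`, `ν ∈ ℕ`, at most
double `N`. -/
def IsHermiteComb (I : Finset (ℕ × ℕ)) (N : ℝ) (u : ℕ → ℝ) : Prop :=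
  ∃ b : ℕ × ℕ → ℝ, ∑ i ∈ I, 2 ^ i.2 * |b i| ≤ N ∧ u = ∑ i ∈ I, b i • hasse i.1 i.2

variable {I : Finset (ℕ × ℕ)} {N N' : ℝ} {u u' : ℕ → ℝ}

namespace IsHermiteComb

lemma mono (h : IsHermiteComb I N u) (hN : N ≤ N') : IsHermiteComb I N' u := by
  obtain ⟨b, hb, hu⟩ := h
  exact ⟨b, hb.trans hN, hu⟩

lemma zero : IsHermiteComb I 0 0 :=
  ⟨0, by simp, by simp⟩

lemma add (h : IsHermiteComb I N u) (h' : IsHermiteComb I N' u') :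
    IsHermiteComb I (N + N') (u + u') := by
  obtain ⟨b, hb, rfl⟩ := h
  obtain ⟨b', hb', rfl⟩ := h'
  refine ⟨b + b', ?_, by simp only [Pi.add_apply, add_smul, Finset.sum_add_distrib]⟩
  calc ∑ i ∈ I, 2 ^ i.2 * |(b + b') i|
      ≤ ∑ i ∈ I, (2 ^ i.2 * |b i| + 2 ^ i.2 * |b' i|) := by
        gcongr with i
        rw [← mul_add]
        gcongr
        exact abs_add_le _ _
    _ ≤ N + N' := by rw [Finset.sum_add_distrib]; exact add_le_add hb hb'

lemma smul (c : ℝ) (h : IsHermiteComb I N u) : IsHermiteComb I (|c| * N) (c • u) := by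
  obtain ⟨b, hb, rfl⟩ := h
  refine ⟨c • b, ?_, by simp only [Finset.smul_sum, Pi.smul_apply, smul_assoc]⟩
  simp only [Pi.smul_apply, smul_eq_mul, abs_mul, mul_left_comm _ |c|, ← Finset.mul_sum]
  gcongr

lemma sub (h : IsHermiteComb I N u) (h' : IsHermiteComb I N' u') :
    IsHermiteComb I (N + N') (u - u') := by
  simpa [← sub_eq_add_neg] using h.add (h'.smul (-1))

lemma hasse {z s : ℕ} (h : (z, s) ∈ I) : IsHermiteComb I (2 ^ s) (hasse z s) := by
  refine ⟨Pi.single (z, s) 1, le_of_eq ?_, ?_⟩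
  · rw [Finset.sum_eq_single_of_mem _ h (fun i _ hi ↦ by simp [hi])]
    simp
  · rw [Finset.sum_eq_single_of_mem _ h (fun i _ hi ↦ by simp [hi])]
    simp

lemma sum {κ : Type*} (A : Finset κ) {N : κ → ℝ} {u : κ → ℕ → ℝ}
    (h : ∀ a ∈ A, IsHermiteComb I (N a) (u a)) :
    IsHermiteComb I (∑ a ∈ A, N a) (∑ a ∈ A, u a) := by
  classical
  induction A using Finset.induction_on with
  | empty => simpa using zero
  | insert a A ha ih =>
    simp only [Finset.sum_insert ha]
    exact (h a (Finset.mem_insert_self _ _)).add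
      (ih fun b hb ↦ h b (Finset.mem_insert_of_mem hb))

end IsHermiteComb

lemma hasse_zero_succ (z : ℝ) (k : ℕ) : hasse z 0 (k + 1) = z * hasse z 0 k := by
  simp [hasse, pow_succ']

lemma hasse_succ_zero (z : ℝ) (s : ℕ) : hasse z (s + 1) 0 = 0 := by
  simp [hasse]

lemma hasse_succ_succ (z : ℝ) (s k : ℕ) :
    hasse z (s + 1) (k + 1) = z * hasse z (s + 1) k + hasse z s k := by
  unfold hasse
  rw [Nat.choose_succ_succ, Nat.add_sub_add_right]
  rcases lt_or_ge s k with h | h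
  · rw [show k - s = k - (s + 1) + 1 by omega]
    push_cast
    ring
  · rw [Nat.choose_eq_zero_of_lt (by omega : k < s + 1)]
    push_cast
    ring

lemma hasse_nonneg {z : ℝ} (hz : 0 ≤ z) (s k : ℕ) : 0 ≤ hasse z s k := by
  unfold hasse
  positivity

lemma divDiff_apply_zero (ν : ℝ) (u : ℕ → ℝ) : divDiff ν u 0 = 0 := by
  simp [divDiff]

lemma divDiff_apply_succ (ν : ℝ) (u : ℕ → ℝ) (k : ℕ) :
    divDiff ν u (k + 1) = ν * divDiff ν u k + u k := by
  simp only [divDiff, LinearMap.coe_mk, AddHom.coe_mk, Finset.sum_range_succ, Finset.mul_sum]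
  congr 1
  · refine Finset.sum_congr rfl fun i hi ↦ ?_
    rw [Finset.mem_range] at hi
    rw [show k + 1 - 1 - i = k - 1 - i + 1 by omega]
    ring
  · simp

lemma divDiff_hasse_self (ν : ℝ) (s : ℕ) : divDiff ν (hasse ν s) = hasse ν (s + 1) := by
  ext k
  induction k with
  | zero => rw [divDiff_apply_zero, hasse_succ_zero]
  | succ k ih => rw [divDiff_apply_succ, ih, hasse_succ_succ]

lemma divDiff_hasse_zero {z ν : ℝ} (h : z ≠ ν) :
    divDiff ν (hasse z 0) = (z - ν)⁻¹ • (hasse z 0 - hasse ν 0) := by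
  have h' : z - ν ≠ 0 := sub_ne_zero.mpr h
  ext k
  simp only [Pi.smul_apply, Pi.sub_apply, smul_eq_mul]
  induction k with
  | zero => simp [divDiff_apply_zero, hasse]
  | succ k ih =>
    rw [divDiff_apply_succ, ih, hasse_zero_succ, hasse_zero_succ]
    field_simp
    ring

lemma divDiff_hasse_succ {z ν : ℝ} (h : z ≠ ν) (s : ℕ) :
    divDiff ν (hasse z (s + 1)) = (z - ν)⁻¹ • (hasse z (s + 1) - divDiff ν (hasse z s)) := by
  have h' : z - ν ≠ 0 := sub_ne_zero.mpr h
  ext k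
  simp only [Pi.smul_apply, Pi.sub_apply, smul_eq_mul]
  induction k with
  | zero => simp [divDiff_apply_zero, hasse_succ_zero]
  | succ k ih =>
    rw [divDiff_apply_succ, ih, hasse_succ_succ, divDiff_apply_succ]
    field_simp
    ring

lemma abs_inv_natCast_sub_le_one (z ν : ℕ) : |((z : ℝ) - ν)⁻¹| ≤ 1 := by
  rcases eq_or_ne z ν with rfl | h
  · simp
  · rw [abs_inv]
    refine inv_le_one_of_one_le₀ ?_
    exact_mod_cast Int.one_le_abs (sub_ne_zero.mpr (Nat.cast_injective.ne h) : (z : ℤ) - ν ≠ 0)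

lemma isHermiteComb_divDiff_hasse {z ν : ℕ} (h : z ≠ ν) (s : ℕ) (hν : (ν, 0) ∈ I)
    (hz : ∀ i ≤ s, (z, i) ∈ I) : IsHermiteComb I (2 * 2 ^ s) (divDiff ν (hasse z s)) := by
  have hne : (z : ℝ) ≠ ν := Nat.cast_injective.ne h
  have hinv := abs_inv_natCast_sub_le_one z ν
  induction s with
  | zero =>
    rw [divDiff_hasse_zero hne]
    refine (((IsHermiteComb.hasse (hz 0 le_rfl)).sub (IsHermiteComb.hasse hν)).smul _).mono ?_
    rw [pow_zero]
    linarith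
  | succ s ih =>
    rw [divDiff_hasse_succ hne]
    refine (((IsHermiteComb.hasse (hz (s + 1) le_rfl)).sub
      (ih fun i hi ↦ hz i (by omega))).smul _).mono ?_
    rw [pow_succ', ← two_mul]
    exact mul_le_of_le_one_left (by positivity) hinv

/-- The first `j` of the node conditions `(z, s)`, `s < S`, in lexicographic order. -/
def hermiteNodes (S j : ℕ) : Finset (ℕ × ℕ) :=
  (Finset.range j ×ˢ Finset.range S).filter fun i ↦ i.1 * S + i.2 < j

lemma mem_hermiteNodes {S j z s : ℕ} : (z, s) ∈ hermiteNodes S j ↔ s < S ∧ z * S + s < j := by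
  simp only [hermiteNodes, Finset.mem_filter, Finset.mem_product, Finset.mem_range]
  refine ⟨fun h ↦ ⟨h.1.2, h.2⟩, fun h ↦ ⟨⟨?_, h.1⟩, h.2⟩⟩
  have := Nat.le_mul_of_pos_right z (Nat.zero_lt_of_lt h.1)
  omega

lemma hermiteNodes_mul (S Z : ℕ) :
    hermiteNodes S (S * Z) = Finset.range Z ×ˢ Finset.range S := by
  ext ⟨z, s⟩
  simp only [mem_hermiteNodes, Finset.mem_product, Finset.mem_range]
  constructor
  · rintro ⟨hs, h⟩
    exact ⟨by nlinarith, hs⟩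
  · rintro ⟨hz, hs⟩
    exact ⟨hs, by nlinarith⟩

lemma node_mem_hermiteNodes {S : ℕ} (hS : 0 < S) (j : ℕ) :
    (j / S, 0) ∈ hermiteNodes S (j + 1) :=
  mem_hermiteNodes.mpr ⟨hS, by have := Nat.div_mul_le_self j S; omega⟩

lemma IsHermiteComb.divDiff {S j : ℕ} (hS : 0 < S) (h : IsHermiteComb (hermiteNodes S j) N u) :
    IsHermiteComb (hermiteNodes S (j + 1)) (2 * N) (divDiff (j / S : ℕ) u) := by
  obtain ⟨b, hb, rfl⟩ := h
  simp only [map_sum, map_smul]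
  refine (IsHermiteComb.sum (hermiteNodes S j) (N := fun i ↦ |b i| * (2 * 2 ^ i.2)) ?_).mono ?_
  · rintro ⟨z, s⟩ hzs
    rw [mem_hermiteNodes] at hzs
    refine IsHermiteComb.smul _ ?_
    by_cases hz : z = j / S
    · subst hz
      have hj := Nat.lt_div_mul_add hS (a := j)
      rw [divDiff_hasse_self, ← pow_succ']
      exact IsHermiteComb.hasse (mem_hermiteNodes.mpr ⟨by omega, by omega⟩)
    · exact isHermiteComb_divDiff_hasse hz s (node_mem_hermiteNodes hS j) fun i hi ↦
        mem_hermiteNodes.mpr ⟨by omega, by omega⟩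
  · calc ∑ i ∈ hermiteNodes S j, |b i| * (2 * 2 ^ i.2)
        = 2 * ∑ i ∈ hermiteNodes S j, 2 ^ i.2 * |b i| := by
          rw [Finset.mul_sum]
          exact Finset.sum_congr rfl fun i _ ↦ by ring
      _ ≤ 2 * N := by gcongr

lemma abs_divDiff_le {ν x : ℝ} (h0 : 0 ≤ ν) (hx : ν ≤ x) {j : ℕ}
    (h : ∀ k, |u k| ≤ hasse x j k) (k : ℕ) : |divDiff ν u k| ≤ hasse x (j + 1) k := by
  induction k with
  | zero => simp [divDiff_apply_zero, hasse_succ_zero]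
  | succ k ih =>
    rw [divDiff_apply_succ, hasse_succ_succ]
    refine (abs_add_le _ _).trans (add_le_add ?_ (h k))
    rw [abs_mul, abs_of_nonneg h0]
    exact mul_le_mul hx ih (abs_nonneg _) (h0.trans hx)

/-- Newton's interpolation process: dividing the functional "evaluation at `x`" successively by
`X - ν` at the nodes `ν ≤ x` keeps it below the Hasse derivative at `x`, because each division
raises the order of that bound by one. -/
lemma exists_hermite_remainder {Z S x : ℕ} (hS : 0 < S) (hZ : Z ≤ x) {j : ℕ} (hj : j ≤ S * Z) :
    ∃ (c : ℝ) (r : ℕ → ℝ), 0 < c ∧ c ≤ 1 ∧ 1 ≤ c * (x : ℝ) ^ j ∧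
      IsHermiteComb (hermiteNodes S j) (2 ^ j - 1) r ∧
      ∀ k, |(c • hasse x 0 + r) k| ≤ hasse x j k := by
  induction j with
  | zero =>
    refine ⟨1, 0, one_pos, le_rfl, by simp, by simpa using IsHermiteComb.zero, fun k ↦ ?_⟩
    simp [abs_of_nonneg (hasse_nonneg (Nat.cast_nonneg x) 0 k)]
  | succ j ih =>
    obtain ⟨c, r, hc, hc1, hcx, hr, hbound⟩ := ih (by omega)
    have hν : j / S < Z := Nat.div_lt_of_lt_mul (by omega)
    have hνx : ((j / S : ℕ) : ℝ) + 1 ≤ x := by exact_mod_cast hν.trans_le hZ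
    set ν : ℝ := ((j / S : ℕ) : ℝ)
    have hν0 : 0 ≤ ν := Nat.cast_nonneg _
    have hpos : 0 < (x : ℝ) - ν := by linarith
    have hinv : ((x : ℝ) - ν)⁻¹ ≤ 1 := inv_le_one_of_one_le₀ (by linarith)
    have hc' : c * ((x : ℝ) - ν)⁻¹ ≤ 1 := mul_le_one₀ hc1 (by positivity) hinv
    refine ⟨c * ((x : ℝ) - ν)⁻¹, divDiff ν r + (-(c * ((x : ℝ) - ν)⁻¹)) • hasse ν 0,
      by positivity, hc', ?_, ?_, fun k ↦ ?_⟩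
    · have hx : 1 ≤ ((x : ℝ) - ν)⁻¹ * x := by
        rw [inv_mul_eq_div, one_le_div hpos]
        linarith
      calc (1 : ℝ) ≤ (c * x ^ j) * (((x : ℝ) - ν)⁻¹ * x) := one_le_mul_of_one_le_of_one_le hcx hx
        _ = c * ((x : ℝ) - ν)⁻¹ * x ^ (j + 1) := by ring
    · refine ((hr.divDiff hS).add
        ((IsHermiteComb.hasse (node_mem_hermiteNodes hS j)).smul _)).mono ?_
      rw [abs_neg, abs_of_nonneg (by positivity), pow_zero, pow_succ]
      linarith
    · convert abs_divDiff_le hν0 (by linarith) hbound k using 2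
      rw [map_add, map_smul, divDiff_hasse_zero (by linarith)]
      simp only [Pi.add_apply, Pi.smul_apply, Pi.sub_apply, smul_eq_mul]
      ring

lemma hasSum_hasse_exp (w z : ℝ) (s : ℕ) :
    HasSum (fun k : ℕ ↦ w ^ k / k.factorial * hasse z s k)
      (w ^ s * Real.exp (w * z) / s.factorial) := by
  have hexp : HasSum (fun k : ℕ ↦ (w * z) ^ k / k.factorial) (Real.exp (w * z)) := by
    rw [Real.exp_eq_exp_ℝ]
    exact NormedSpace.expSeries_div_hasSum_exp (w * z)
  rw [← (add_left_injective s).hasSum_iff, mul_div_right_comm]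
  · refine (hexp.mul_left (w ^ s / s.factorial)).congr_fun fun k ↦ ?_
    have hfact : (((k + s).choose s : ℕ) : ℝ) * k.factorial * s.factorial =
        (k + s).factorial := by
      exact_mod_cast Nat.add_choose_mul_factorial_mul_factorial k s
    have hchoose : (((k + s).choose s : ℕ) : ℝ) ≠ 0 := by
      exact_mod_cast (Nat.choose_pos (Nat.le_add_left s k)).ne'
    simp only [Function.comp, hasse, Nat.add_sub_cancel]
    rw [← hfact]
    field_simp
    ring
  · intro k hk
    have : k < s := by
      by_contra! h
      exact hk ⟨k - s, Nat.sub_add_cancel h⟩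
    simp [hasse, Nat.choose_eq_zero_of_lt this]

/-- Hermite interpolation of `exp (w * ·)` at the nodes `0, …, Z - 1` with multiplicity `S`,
evaluated at `x`. -/
theorem exists_hermite_exp {Z S x : ℕ} (hS : 0 < S) (hZ : Z ≤ x) :
    ∃ (c : ℝ) (b : ℕ × ℕ → ℝ), 0 < c ∧ 1 ≤ c * (x : ℝ) ^ (S * Z) ∧
      ∑ i ∈ Finset.range Z ×ˢ Finset.range S, 2 ^ i.2 * |b i| ≤ 2 ^ (S * Z) ∧
      ∀ w : ℝ, |c * Real.exp (w * x) + ∑ i ∈ Finset.range Z ×ˢ Finset.range S,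
        b i * (w ^ i.2 * Real.exp (w * i.1) / i.2.factorial)| ≤
        |w| ^ (S * Z) * Real.exp (|w| * x) / (S * Z).factorial := by
  obtain ⟨c, r, hc, -, hcx, ⟨b, hb, rfl⟩, hbound⟩ := exists_hermite_remainder hS hZ le_rfl
  rw [hermiteNodes_mul] at hb hbound
  refine ⟨c, b, hc, hcx, hb.trans (by linarith), fun w ↦ ?_⟩
  have hsum := ((hasSum_hasse_exp w x 0).mul_left c).add
    (hasSum_sum (s := Finset.range Z ×ˢ Finset.range S)
      fun i _ ↦ (hasSum_hasse_exp w i.1 i.2).mul_left (b i))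
  simp only [pow_zero, one_mul, Nat.factorial_zero, Nat.cast_one, div_one] at hsum
  have hmajor := hasSum_hasse_exp |w| x (S * Z)
  rw [← hsum.tsum_eq, ← hmajor.tsum_eq, ← Real.norm_eq_abs]
  refine tsum_of_norm_bounded hmajor.summable.hasSum fun k ↦ ?_
  calc ‖c * (w ^ k / k.factorial * hasse x 0 k) + ∑ i ∈ Finset.range Z ×ˢ Finset.range S,
        b i * (w ^ k / k.factorial * hasse i.1 i.2 k)‖
      = |w| ^ k / k.factorial * |(c • hasse x 0 +
          ∑ i ∈ Finset.range Z ×ˢ Finset.range S, b i • hasse i.1 i.2) k| := by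
        rw [Real.norm_eq_abs, ← abs_pow, ← Nat.abs_cast k.factorial, ← abs_div, ← abs_mul]
        simp only [Pi.add_apply, Pi.smul_apply, Finset.sum_apply, smul_eq_mul, mul_add,
          Finset.mul_sum, mul_left_comm, Nat.abs_cast]
    _ ≤ |w| ^ k / k.factorial * hasse x (S * Z) k := by
        gcongr
        exact hbound k

end Hermite

section Liouville

open Polynomial

/-- Cancelling a power of `X`, the constant coefficient is a nonzero integer, and it is up to sign
the product of the complex roots. -/
lemma one_le_norm_mul_pow_of_isRoot {P : ℤ[X]} (hP : P.Monic) {B : ℝ} (hB : 1 ≤ B)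
    (hroots : ∀ z : ℂ, (P.map (Int.castRingHom ℂ)).IsRoot z → ‖z‖ ≤ B) {x : ℂ}
    (hx : (P.map (Int.castRingHom ℂ)).IsRoot x) (hx0 : x ≠ 0) :
    1 ≤ ‖x‖ * B ^ (P.natDegree - 1) := by
  obtain ⟨Q, hPQ, hQ⟩ := exists_eq_pow_rootMultiplicity_mul_and_not_dvd P hP.ne_zero 0
  rw [C_0, sub_zero] at hPQ hQ
  generalize rootMultiplicity 0 P = k at hPQ
  have hQmonic : Q.Monic := (monic_X_pow k).of_mul_monic_left (hPQ ▸ hP)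
  have hdeg : Q.natDegree ≤ P.natDegree := by
    rw [hPQ, (monic_X_pow k).natDegree_mul hQmonic]
    omega
  have hPR : P.map (Int.castRingHom ℂ) = X ^ k * Q.map (Int.castRingHom ℂ) := by simp [hPQ]
  have hcoeff : (1 : ℝ) ≤ ‖(Q.map (Int.castRingHom ℂ)).coeff 0‖ := by
    rw [coeff_map, eq_intCast, Complex.norm_intCast]
    exact_mod_cast Int.one_le_abs (mt X_dvd_iff.mpr hQ)
  have hR := hQmonic.map (Int.castRingHom ℂ)
  rw [← hQmonic.natDegree_map (Int.castRingHom ℂ)] at hdeg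
  generalize Q.map (Int.castRingHom ℂ) = R at *
  have hxR : x ∈ R.roots := by
    rw [hPR, IsRoot, eval_mul, eval_pow, eval_X, mul_eq_zero] at hx
    exact (mem_roots hR.ne_zero).mpr (hx.resolve_left (pow_ne_zero _ hx0))
  obtain ⟨t, ht⟩ := Multiset.exists_cons_of_mem hxR
  have hsplit := IsAlgClosed.splits R
  have hcard : t.card + 1 = R.natDegree := by
    rw [hsplit.natDegree_eq_card_roots, ht, Multiset.card_cons]
  have hnorm : ‖t.prod‖ ≤ B ^ t.card := by
    refine (map_multiset_prod (normHom : ℂ →*₀ ℝ) t).trans_le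
      (Multiset.prod_map_le_pow_card (fun z _ ↦ norm_nonneg z) fun z hz ↦ hroots z ?_)
    have hzR : z ∈ R.roots := ht ▸ Multiset.mem_cons_of_mem hz
    simp [hPR, IsRoot, IsRoot.eq_zero (isRoot_of_mem_roots hzR)]
  calc 1 ≤ ‖x‖ * ‖t.prod‖ := by
        simpa [hsplit.coeff_zero_eq_prod_roots_of_monic hR, ht] using hcoeff
    _ ≤ ‖x‖ * B ^ t.card := by gcongr
    _ ≤ ‖x‖ * B ^ (P.natDegree - 1) := by gcongr; omega

end Liouville

section Size

open Matrix

lemma exists_int_vec_mulVec_eq_zero {ι J : Type*} [Fintype ι] [Fintype J] [Nonempty J]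
    (A : Matrix J ι ℤ) {B : ℝ} (hB : 1 ≤ B) (hA : ∀ j i, ‖A j i‖ ≤ B)
    (hcard : 2 * Fintype.card J ≤ Fintype.card ι) :
    ∃ p : ι → ℤ, p ≠ 0 ∧ A *ᵥ p = 0 ∧ ∀ i, |(p i : ℝ)| ≤ Fintype.card ι * B := by
  let := Matrix.seminormedAddCommGroup (m := J) (n := ι) (α := ℤ)
  have hJ : 0 < Fintype.card J := Fintype.card_pos
  have hcard' : (2 * Fintype.card J : ℝ) ≤ Fintype.card ι := by exact_mod_cast hcard
  have hι : (1 : ℝ) ≤ Fintype.card ι := by exact_mod_cast (by omega : 1 ≤ Fintype.card ι)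
  have hpos : (0 : ℝ) < Fintype.card ι - Fintype.card J := by
    rw [sub_pos]
    exact_mod_cast (by omega : Fintype.card J < Fintype.card ι)
  obtain ⟨p, hp0, hAp, hp⟩ := Int.Matrix.exists_ne_zero_int_vec_norm_le A (by omega) hJ
  refine ⟨p, hp0, hAp, fun i ↦ ?_⟩
  calc |(p i : ℝ)| = ‖p i‖ := (Int.norm_eq_abs _).symm
    _ ≤ ‖p‖ := norm_le_pi_norm p i
    _ ≤ _ := hp
    _ ≤ (Fintype.card ι * B) ^ (1 : ℝ) := by
        have hAB : max 1 ‖A‖ ≤ B := max_le hB ((Matrix.norm_le_iff (by linarith)).mpr hA)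
        refine (Real.rpow_le_rpow (by positivity) (by gcongr) (by positivity)).trans
          (Real.rpow_le_rpow_of_exponent_le (one_le_mul_of_one_le_of_one_le hι hB) ?_)
        rw [div_le_one hpos]
        linarith
    _ = Fintype.card ι * B := Real.rpow_one _

open scoped Matrix.Norms.Operator

variable {κ : Type*} [Fintype κ]

/-- `x` has size at most `ℓ` with respect to `e`: multiplication by `x` maps the entries of `e` to
integer combinations of them, with coefficients of absolute sum at most `ℓ` (the norm of an integer
matrix being its maximal absolute row sum). -/
def HasSize (e : κ → ℝ) (x ℓ : ℝ) : Prop :=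
  ∃ M : Matrix κ κ ℤ, ‖M‖ ≤ ℓ ∧ M.map ((↑) : ℤ → ℝ) *ᵥ e = x • e

lemma norm_map_intCast {ι 𝕜 : Type*} [Fintype ι] [RCLike 𝕜] (M : Matrix ι κ ℤ) :
    ‖M.map ((↑) : ℤ → 𝕜)‖ = ‖M‖ := by
  have hnorm (k : ℤ) : ‖(k : 𝕜)‖₊ = ‖k‖₊ := by
    ext
    rw [coe_nnnorm, coe_nnnorm, ← RCLike.ofReal_intCast, RCLike.norm_ofReal, Int.norm_eq_abs]
  simp only [linfty_opNorm_def, map_apply, hnorm]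

lemma norm_apply_le_linfty_opNorm {ι : Type*} [Fintype ι] (M : Matrix ι κ ℤ) (i : ι) (j : κ) :
    ‖M i j‖ ≤ ‖M‖ := by
  rw [linfty_opNorm_def]
  calc ‖M i j‖₊ ≤ ∑ k, ‖M i k‖₊ :=
        Finset.single_le_sum (f := fun k ↦ ‖M i k‖₊) (fun _ _ ↦ zero_le) (Finset.mem_univ j)
    _ ≤ _ := Finset.le_sup (f := fun i ↦ ∑ k, ‖M i k‖₊) (Finset.mem_univ i)

variable {e : κ → ℝ} {x y ℓ ℓ' : ℝ}

namespace HasSize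

lemma mono (h : HasSize e x ℓ) (hℓ : ℓ ≤ ℓ') : HasSize e x ℓ' := by
  obtain ⟨M, hM, hMe⟩ := h
  exact ⟨M, hM.trans hℓ, hMe⟩

lemma nonneg (h : HasSize e x ℓ) : 0 ≤ ℓ := by
  obtain ⟨M, hM, -⟩ := h
  exact (norm_nonneg M).trans hM

lemma zero : HasSize e 0 0 :=
  ⟨0, by simp, by ext i; simp [mulVec, dotProduct]⟩

lemma add (h : HasSize e x ℓ) (h' : HasSize e y ℓ') : HasSize e (x + y) (ℓ + ℓ') := by
  obtain ⟨M, hM, hMe⟩ := h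
  obtain ⟨M', hM', hMe'⟩ := h'
  exact ⟨M + M', (norm_add_le _ _).trans (add_le_add hM hM'), by
    rw [Matrix.map_add _ Int.cast_add, add_mulVec, hMe, hMe', add_smul]⟩

lemma intCast_mul (h : HasSize e x ℓ) (k : ℤ) : HasSize e (k * x) (|(k : ℝ)| * ℓ) := by
  obtain ⟨M, hM, hMe⟩ := h
  refine ⟨k • M, ?_, ?_⟩
  · rw [norm_smul, Int.norm_eq_abs]
    gcongr
  · rw [mul_smul, ← hMe, ← smul_mulVec]
    congr 1
    ext i j
    simp

lemma mul (h : HasSize e x ℓ) (h' : HasSize e y ℓ') : HasSize e (x * y) (ℓ * ℓ') := by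
  obtain ⟨M, hM, hMe⟩ := h
  obtain ⟨M', hM', hMe'⟩ := h'
  refine ⟨M * M', (norm_mul_le _ _).trans (mul_le_mul hM hM' (norm_nonneg _)
    ((norm_nonneg _).trans hM)), ?_⟩
  rw [Matrix.map_mul_intCast, ← mulVec_mulVec, hMe', mulVec_smul, hMe, smul_smul, mul_comm]

lemma one : HasSize e 1 1 := by
  classical
  refine ⟨1, ?_, by simp⟩
  cases isEmpty_or_nonempty κ
  · simp [linfty_opNorm_def]
  · exact norm_one.le

lemma pow (h : HasSize e x ℓ) (n : ℕ) : HasSize e (x ^ n) (ℓ ^ n) := by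
  induction n with
  | zero => simpa using one
  | succ n ih => simpa only [pow_succ] using ih.mul h

lemma sum {ι : Type*} (A : Finset ι) {x ℓ : ι → ℝ} (h : ∀ i ∈ A, HasSize e (x i) (ℓ i)) :
    HasSize e (∑ i ∈ A, x i) (∑ i ∈ A, ℓ i) := by
  classical
  induction A using Finset.induction_on with
  | empty => simpa only [Finset.sum_empty] using zero
  | insert a A ha ih =>
    simp only [Finset.sum_insert ha]
    exact (h a (Finset.mem_insert_self _ _)).add
      (ih fun b hb ↦ h b (Finset.mem_insert_of_mem hb))

lemma abs_le (h : HasSize e x ℓ) (he : e ≠ 0) : |x| ≤ ℓ := by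
  obtain ⟨M, hM, hMe⟩ := h
  refine le_of_mul_le_mul_right ?_ (norm_pos_iff.mpr he)
  calc |x| * ‖e‖ = ‖M.map ((↑) : ℤ → ℝ) *ᵥ e‖ := by rw [hMe, norm_smul, Real.norm_eq_abs]
    _ ≤ ‖M.map ((↑) : ℤ → ℝ)‖ * ‖e‖ := linfty_opNorm_mulVec _ _
    _ ≤ ℓ * ‖e‖ := by rw [norm_map_intCast]; gcongr

theorem one_le_abs_mul_pow (h : HasSize e x ℓ) (he : e ≠ 0) (hx : x ≠ 0) :
    1 ≤ |x| * ℓ ^ (Fintype.card κ - 1) := by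
  classical
  obtain ⟨M, hM, hMe⟩ := h
  obtain ⟨k, -⟩ := Function.ne_iff.mp he
  have : Nonempty κ := ⟨k⟩
  have hM1 : 1 ≤ ‖M‖ := by
    have hM0 : M ≠ 0 := by
      rintro rfl
      exact smul_ne_zero hx he (by rw [← hMe, Matrix.map_zero _ Int.cast_zero, zero_mulVec])
    obtain ⟨i, j, hij⟩ : ∃ i j, M i j ≠ 0 := by
      by_contra! hzero
      exact hM0 (Matrix.ext hzero)
    exact (Int.norm_eq_abs (M i j) ▸ mod_cast Int.one_le_abs hij : 1 ≤ ‖M i j‖).trans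
      (norm_apply_le_linfty_opNorm M i j)
  have hcharpoly : M.charpoly.map (Int.castRingHom ℂ) = (M.map ((↑) : ℤ → ℂ)).charpoly :=
    (charpoly_map M (Int.castRingHom ℂ)).symm
  have hroot : (M.charpoly.map (Int.castRingHom ℂ)).IsRoot x := by
    rw [hcharpoly, ← mem_spectrum_iff_isRoot_charpoly, ← spectrum_toLin']
    refine Module.End.HasEigenvalue.mem_spectrum
      (Module.End.hasEigenvalue_of_hasEigenvector (x := fun i ↦ (e i : ℂ)) ⟨?_, ?_⟩)
    · rw [Module.End.mem_eigenspace_iff, toLin'_apply]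
      ext i
      simpa [mulVec, dotProduct] using congrArg ((↑) : ℝ → ℂ) (congrFun hMe i)
    · simpa [funext_iff] using he
  have hbound (z : ℂ) (hz : (M.charpoly.map (Int.castRingHom ℂ)).IsRoot z) : ‖z‖ ≤ ‖M‖ := by
    rw [hcharpoly, ← mem_spectrum_iff_isRoot_charpoly] at hz
    exact (spectrum.norm_le_norm_of_mem hz).trans_eq (norm_map_intCast M)
  have hmain := one_le_norm_mul_pow_of_isRoot M.charpoly_monic hM1 hbound hroot
    (Complex.ofReal_ne_zero.mpr hx)
  rw [charpoly_natDegree_eq_dim, Complex.norm_real, Real.norm_eq_abs] at hmain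
  exact hmain.trans (by gcongr)

end HasSize

/-- It suffices to annihilate one row of each of the matrices `∑ i, p i • M j i`. -/
theorem exists_int_comb_eq_zero {ι J : Type*} [Fintype ι] [Fintype J] [Nonempty J]
    (he : e ≠ 0) {y : J → ι → ℝ} (hy : ∀ j i, HasSize e (y j i) ℓ) (hℓ : 1 ≤ ℓ)
    (hcard : 2 * (Fintype.card J * Fintype.card κ) ≤ Fintype.card ι) :
    ∃ p : ι → ℤ, p ≠ 0 ∧ (∀ i, |(p i : ℝ)| ≤ Fintype.card ι * ℓ) ∧
      ∀ j, ∑ i, p i * y j i = 0 := by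
  obtain ⟨k₀, hk₀⟩ := Function.ne_iff.mp he
  have : Nonempty κ := ⟨k₀⟩
  choose M hM hMe using hy
  obtain ⟨p, hp0, hMp, hp⟩ := exists_int_vec_mulVec_eq_zero
    (.of fun (jk : J × κ) i ↦ M jk.1 i k₀ jk.2) hℓ
    (fun jk i ↦ (norm_apply_le_linfty_opNorm (M jk.1 i) k₀ jk.2).trans (hM jk.1 i))
    (by rwa [Fintype.card_prod])
  refine ⟨p, hp0, hp, fun j ↦ mul_right_cancel₀ hk₀ ?_⟩
  have hrow (i : ι) : y j i * e k₀ = ∑ k, M j i k₀ k * e k := by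
    simpa [mulVec, dotProduct] using (congrFun (hMe j i) k₀).symm
  calc (∑ i, p i * y j i) * e k₀
      = ∑ k, ((∑ i, M j i k₀ k * p i : ℤ) : ℝ) * e k := by
        simp only [Finset.sum_mul, mul_assoc, hrow, Finset.mul_sum, Int.cast_sum, Int.cast_mul]
        rw [Finset.sum_comm]
        exact Finset.sum_congr rfl fun k _ ↦ Finset.sum_congr rfl fun i _ ↦ by ring
    _ = 0 * e k₀ := by
        rw [zero_mul]
        refine Finset.sum_eq_zero fun k _ ↦ ?_
        have hk : ∑ i, M j i k₀ k * p i = 0 := congrFun hMp (j, k)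
        rw [hk, Int.cast_zero, zero_mul]

end Size

section Independence

open IntermediateField Polynomial

lemma finrank_adjoin_simple_of_irreducible {K L : Type*} [Field K] [Field L] [Algebra K L] {x : L}
    {p : K[X]} (hirr : Irreducible p) (hmonic : p.Monic) (hx : aeval x p = 0) :
    Module.finrank K K⟮x⟯ = p.natDegree := by
  rw [adjoin.finrank ⟨p, hmonic, hx⟩, ← minpoly.eq_of_irreducible_of_monic hirr hx hmonic]

lemma exists_intCast_eq_of_isRoot {p : ℤ[X]} (hp : p.Monic) {r : ℚ} (hr : aeval r p = 0) :
    ∃ k : ℤ, (k : ℚ) = r :=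
  (IsIntegrallyClosed.isIntegral_iff (R := ℤ)).mp ⟨p, hp, hr⟩

lemma irreducible_goldenRatio_poly : Irreducible (X ^ 2 - X - 1 : ℚ[X]) := by
  have hdeg : (X ^ 2 - X - 1 : ℚ[X]).natDegree = 2 := by compute_degree!
  refine irreducible_of_degree_le_three_of_not_isRoot (by simp [hdeg]) fun r hr ↦ ?_
  have hr0 : r ^ 2 - r - 1 = 0 := by simpa [IsRoot] using hr
  obtain ⟨k, rfl⟩ := exists_intCast_eq_of_isRoot (p := X ^ 2 - X - 1) (by monicity!)
    (by simpa using hr0)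
  have hk : k * (k - 1) = 1 := by
    have : k ^ 2 - k - 1 = 0 := by exact_mod_cast hr0
    linarith
  rcases Int.eq_one_or_neg_one_of_mul_eq_one hk with rfl | rfl <;> omega

lemma irreducible_tribonacci_poly : Irreducible (X ^ 3 - X ^ 2 - X - 1 : ℚ[X]) := by
  have hdeg : (X ^ 3 - X ^ 2 - X - 1 : ℚ[X]).natDegree = 3 := by compute_degree!
  refine irreducible_of_degree_le_three_of_not_isRoot (by simp [hdeg]) fun r hr ↦ ?_
  have hr0 : r ^ 3 - r ^ 2 - r - 1 = 0 := by simpa [IsRoot] using hr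
  obtain ⟨k, rfl⟩ := exists_intCast_eq_of_isRoot (p := X ^ 3 - X ^ 2 - X - 1) (by monicity!)
    (by simpa using hr0)
  have hk : k * (k ^ 2 - k - 1) = 1 := by
    have : k ^ 3 - k ^ 2 - k - 1 = 0 := by exact_mod_cast hr0
    linarith
  rcases Int.eq_one_or_neg_one_of_mul_eq_one hk with rfl | rfl <;> omega

/-- Otherwise the quadratic field `ℚ(φ)` would be contained in the cubic field `ℚ(t)`. -/
lemma goldenRatio_pow_succ_ne_tribonacci_pow {t : ℝ} (ht : t ^ 3 = t ^ 2 + t + 1) (a b : ℕ) :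
    Real.goldenRatio ^ (a + 1) ≠ t ^ b := by
  intro hab
  have hfib : (Nat.fib (a + 1) : ℝ) ≠ 0 := by
    exact_mod_cast (Nat.fib_pos.mpr a.succ_pos).ne'
  have hmem : Real.goldenRatio ∈ ℚ⟮t⟯ := by
    have heq : Real.goldenRatio = (t ^ b - Nat.fib a) / Nat.fib (a + 1) := by
      rw [← hab, ← Real.goldenRatio_mul_fib_succ_add_fib]
      field_simp
      ring
    rw [heq]
    exact div_mem (sub_mem (pow_mem (mem_adjoin_simple_self ℚ t) _) (_root_.natCast_mem _ _))
      (_root_.natCast_mem _ _)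
  have hφ : Module.finrank ℚ ℚ⟮Real.goldenRatio⟯ = 2 := by
    rw [finrank_adjoin_simple_of_irreducible irreducible_goldenRatio_poly (by monicity!)
      (by simp [Real.goldenRatio_sq])]
    compute_degree!
  have ht3 : Module.finrank ℚ ℚ⟮t⟯ = 3 := by
    rw [finrank_adjoin_simple_of_irreducible irreducible_tribonacci_poly (by monicity!)
      (by simp [ht]; ring)]
    compute_degree!
  have hdvd := finrank_dvd_of_le_right (adjoin_simple_le_iff.mpr hmem)
  rw [hφ, ht3] at hdvd
  omega

lemma eq_and_eq_of_pow_mul_pow_eq {x y : ℝ} (hx : 1 < x) (hy : 1 < y)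
    (hxy : ∀ a b, x ^ (a + 1) ≠ y ^ b) {a b c d : ℕ} (h : x ^ a * y ^ b = x ^ c * y ^ d) :
    a = c ∧ b = d := by
  wlog hac : a ≤ c generalizing a b c d
  · exact (this h.symm (by omega)).imp Eq.symm Eq.symm
  obtain ⟨p, rfl⟩ := Nat.exists_eq_add_of_le hac
  rw [pow_add, mul_assoc] at h
  have hp : y ^ b = x ^ p * y ^ d := mul_left_cancel₀ (by positivity) h
  have hdb : d ≤ b := by
    by_contra! hbd
    have hlt : y ^ b < y ^ d := pow_lt_pow_right₀ hy hbd
    have hle : y ^ d ≤ x ^ p * y ^ d :=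
      le_mul_of_one_le_left (by positivity) (one_le_pow₀ hx.le)
    linarith
  obtain ⟨q, rfl⟩ := Nat.exists_eq_add_of_le hdb
  rw [pow_add, mul_comm] at hp
  have hq : x ^ p = y ^ q := (mul_right_cancel₀ (by positivity) hp).symm
  rcases p with _ | p
  · have hq0 : q = 0 := by
      by_contra hq0
      exact (one_lt_pow₀ hy hq0).ne hq
    simp [hq0]
  · exact (hxy p q hq).elim

end Independence

section ZeroEstimate

open Polynomial

variable {ι : Type*} [Fintype ι]

lemma sum_mul_eval_mul_eval_eq_zero {p x θ : ι → ℝ} {T N : ℕ}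
    (h : ∀ k < T, ∀ z < N, ∑ l, p l * x l ^ k * θ l ^ z = 0) {q r : ℝ[X]} (hq : q.natDegree < T)
    (hr : r.natDegree < N) : ∑ l, p l * (q.eval (x l) * r.eval (θ l)) = 0 := by
  simp only [eval_eq_sum_range' hq, eval_eq_sum_range' hr, Finset.sum_mul_sum]
  simp only [Finset.mul_sum]
  rw [Finset.sum_comm]
  refine Finset.sum_eq_zero fun k hk ↦ ?_
  rw [Finset.sum_comm]
  refine Finset.sum_eq_zero fun z hz ↦ ?_
  calc ∑ l, p l * (q.coeff k * x l ^ k * (r.coeff z * θ l ^ z))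
      = q.coeff k * r.coeff z * ∑ l, p l * x l ^ k * θ l ^ z := by
        rw [Finset.mul_sum]
        exact Finset.sum_congr rfl fun l _ ↦ by ring
    _ = 0 := by rw [h k (Finset.mem_range.mp hk) z (Finset.mem_range.mp hz), mul_zero]

lemma eval_prod_X_sub_C_eq_zero_iff {κ : Type*} {A : Finset κ} {a : κ → ℝ} {y : ℝ} :
    (∏ i ∈ A, (X - C (a i))).eval y = 0 ↔ ∃ i ∈ A, y = a i := by
  simp [eval_prod, Finset.prod_eq_zero_iff, sub_eq_zero]

/-- Zero estimate. To isolate the index `l₀`, multiply the polynomial in `θ` vanishing at the other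
values of `θ` by the polynomial in `x` vanishing at the other indices of the fibre of `θ`. -/
theorem eq_zero_of_sum_mul_pow_mul_pow_eq_zero {p x θ : ι → ℝ} {T N : ℕ}
    (h : ∀ k < T, ∀ z < N, ∑ l, p l * x l ^ k * θ l ^ z = 0) (hN : Fintype.card ι ≤ N)
    {c : ι → Fin T} (hc : ∀ l l', θ l = θ l' → c l = c l' → l = l')
    (hx : ∀ l l', θ l = θ l' → x l = x l' → l = l') : p = 0 := by
  classical
  funext l₀
  let A := (Finset.univ.image θ).erase (θ l₀)
  let B := ({l | θ l = θ l₀} : Finset ι).erase l₀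
  have hA : A.card < N := calc
    A.card < (Finset.univ.image θ).card := Finset.card_erase_lt_of_mem (by simp)
    _ ≤ N := Finset.card_image_le.trans hN
  have hB : B.card < T := calc
    B.card < ({l | θ l = θ l₀} : Finset ι).card := Finset.card_erase_lt_of_mem (by simp)
    _ ≤ (Finset.univ : Finset (Fin T)).card :=
      Finset.card_le_card_of_injOn c (fun _ _ ↦ Finset.mem_coe.mpr (Finset.mem_univ _))
        fun l hl l' hl' hll ↦ hc l l' (by simp_all) hll
    _ = T := Finset.card_fin T
  have hsum := sum_mul_eval_mul_eval_eq_zero h (q := ∏ l ∈ B, (X - C (x l)))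
    (r := ∏ a ∈ A, (X - C a)) (by rwa [natDegree_finsetProd_X_sub_C_eq_card])
    (by rwa [natDegree_finsetProd_X_sub_C_eq_card])
  rw [Finset.sum_eq_single l₀ (fun l _ hl ↦ ?_) (by simp)] at hsum
  · refine (mul_eq_zero.mp hsum).resolve_right (mul_ne_zero ?_ ?_)
    · rw [Ne, eval_prod_X_sub_C_eq_zero_iff]
      rintro ⟨l, hl, hxl⟩
      simp only [B, Finset.mem_erase, Finset.mem_filter_univ] at hl
      exact hl.1 (hx l l₀ hl.2 hxl.symm)
    · rw [Ne, eval_prod_X_sub_C_eq_zero_iff]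
      rintro ⟨a, ha, rfl⟩
      exact Finset.notMem_erase _ _ ha
  · by_cases hθ : θ l = θ l₀
    · rw [eval_prod_X_sub_C_eq_zero_iff.mpr ⟨l, by simp [B, hl, hθ], rfl⟩, zero_mul, mul_zero]
    · have hθ0 : (∏ a ∈ A, (X - C a)).eval (θ l) = 0 :=
        eval_prod_X_sub_C_eq_zero_iff.mpr ⟨θ l, by simp [A, hθ], rfl⟩
      rw [hθ0, mul_zero, mul_zero]

end ZeroEstimate

section Extrapolation

open Real Finset

lemma abs_exp_add_mul_sub_exp_mul_le {w d δ ζ z W : ℝ} (hw : |w| ≤ W) (hd : |d| ≤ δ) (hz : 0 ≤ z)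
    (hzζ : z ≤ ζ) (hδζ : δ * ζ ≤ 1) :
    |exp ((w + d) * z) - exp (w * z)| ≤ exp (W * ζ) * (2 * (δ * ζ)) := by
  have hdz : |d * z| ≤ δ * ζ := by
    rw [abs_mul, abs_of_nonneg hz]
    exact mul_le_mul hd hzζ hz ((abs_nonneg d).trans hd)
  have hwz : w * z ≤ W * ζ :=
    mul_le_mul ((le_abs_self w).trans hw) hzζ hz ((abs_nonneg w).trans hw)
  calc |exp ((w + d) * z) - exp (w * z)| = exp (w * z) * |exp (d * z) - 1| := by
        rw [← abs_of_pos (exp_pos (w * z)), ← abs_mul, abs_of_pos (exp_pos (w * z)), mul_sub,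
          ← exp_add, mul_one, add_mul]
    _ ≤ exp (W * ζ) * (2 * (δ * ζ)) := by
        gcongr
        linarith [abs_exp_sub_one_le (hdz.trans hδζ)]

variable {ι : Type*} [Fintype ι] {g w θ : ι → ℝ} {P W D : ℝ} {S Z ζ : ℕ}

lemma abs_sum_mul_le_card_mul {f : ι → ℝ} {E : ℝ} (hg : ∀ l, |g l| ≤ P) (hf : ∀ l, |f l| ≤ E) :
    |∑ l, g l * f l| ≤ Fintype.card ι * P * E := by
  calc |∑ l, g l * f l| ≤ ∑ l, |g l| * |f l| := by
        simpa only [abs_mul] using abs_sum_le_sum_abs (fun l ↦ g l * f l) univ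
    _ ≤ ∑ _l : ι, P * E := sum_le_sum fun l _ ↦
        mul_le_mul (hg l) (hf l) (abs_nonneg _) ((abs_nonneg _).trans (hg l))
    _ = Fintype.card ι * P * E := by rw [sum_const, card_univ, nsmul_eq_mul, mul_assoc]

lemma abs_sum_mul_pow_mul_exp_le (hW : 0 ≤ W) (hg : ∀ l, |g l| ≤ P)
    (hw : ∀ l, |w l| ≤ W) {s z : ℕ} (hθ : ∀ l, |θ l ^ z - exp (w l * z)| ≤ D)
    (hzero : ∑ l, g l * (w l ^ s * θ l ^ z) = 0) :
    |∑ l, g l * (w l ^ s * exp (w l * z))| ≤ Fintype.card ι * P * (W ^ s * D) := by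
  have hsub : ∑ l, g l * (w l ^ s * exp (w l * z)) =
      -∑ l, g l * (w l ^ s * (θ l ^ z - exp (w l * z))) := by
    simp only [mul_sub, sum_sub_distrib, hzero, zero_sub, neg_neg]
  rw [hsub, abs_neg]
  refine abs_sum_mul_le_card_mul hg fun l ↦ ?_
  rw [abs_mul, abs_pow]
  exact mul_le_mul (pow_le_pow_left₀ (abs_nonneg _) (hw l) s) (hθ l) (abs_nonneg _) (by positivity)

lemma abs_sum_hermite_le {b : ℕ × ℕ → ℝ} {μ : ℕ × ℕ → ℝ} {Q : ℝ} (hW : 0 ≤ W) (hQ : 0 ≤ Q)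
    (hb : ∑ i ∈ range Z ×ˢ range S, 2 ^ i.2 * |b i| ≤ 2 ^ (S * Z))
    (hμ : ∀ i ∈ range Z ×ˢ range S, |μ i| ≤ Q * W ^ i.2) :
    |∑ i ∈ range Z ×ˢ range S, b i / i.2.factorial * μ i| ≤
      2 ^ (S * Z) * (Q * exp (W / 2)) := by
  calc |∑ i ∈ range Z ×ˢ range S, b i / i.2.factorial * μ i|
      ≤ ∑ i ∈ range Z ×ˢ range S, 2 ^ i.2 * |b i| * (Q * exp (W / 2)) := by
        refine (abs_sum_le_sum_abs _ _).trans (sum_le_sum fun i hi ↦ ?_)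
        rw [abs_mul, abs_div, Nat.abs_cast]
        calc |b i| / i.2.factorial * |μ i| ≤ |b i| / i.2.factorial * (Q * W ^ i.2) := by
              gcongr
              exact hμ i hi
          _ = 2 ^ i.2 * |b i| * (Q * ((W / 2) ^ i.2 / i.2.factorial)) := by
              rw [div_pow]
              field_simp
          _ ≤ 2 ^ i.2 * |b i| * (Q * exp (W / 2)) := by
              gcongr
              exact pow_div_factorial_le_exp _ (by positivity) _
    _ ≤ 2 ^ (S * Z) * (Q * exp (W / 2)) := by
        rw [← sum_mul]
        gcongr

lemma mul_sum_exp_add_sum_hermite (I : Finset (ℕ × ℕ)) (b : ℕ × ℕ → ℝ) (c x : ℝ) :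
    c * ∑ l, g l * exp (w l * x) +
        ∑ i ∈ I, b i / i.2.factorial * ∑ l, g l * (w l ^ i.2 * exp (w l * i.1)) =
      ∑ l, g l * (c * exp (w l * x) +
        ∑ i ∈ I, b i * (w l ^ i.2 * exp (w l * i.1) / i.2.factorial)) := by
  simp only [mul_add, sum_add_distrib, mul_sum]
  rw [sum_comm]
  congr 1
  · exact sum_congr rfl fun l _ ↦ by ring
  · exact sum_congr rfl fun l _ ↦ sum_congr rfl fun i _ ↦ by ring

/-- The exponential polynomial `z ↦ ∑ l, g l * exp (w l * z)` almost vanishes to order `S` at the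
integers below `Z`, so Hermite interpolation bounds it at `ζ`. -/
theorem abs_sum_mul_pow_le_of_moments_eq_zero (hS : 0 < S) (hζ : Z ≤ ζ) (hP : 0 ≤ P) (hW : 0 ≤ W)
    (hD : 0 ≤ D) (hg : ∀ l, |g l| ≤ P) (hw : ∀ l, |w l| ≤ W)
    (hθ : ∀ l, ∀ z ≤ ζ, |θ l ^ z - exp (w l * z)| ≤ D)
    (hzero : ∀ s < S, ∀ z < Z, ∑ l, g l * (w l ^ s * θ l ^ z) = 0) :
    |∑ l, g l * θ l ^ ζ| ≤ Fintype.card ι * P *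
      ((ζ * W) ^ (S * Z) * exp (W * ζ) / (S * Z).factorial +
        D * (1 + (2 * ζ) ^ (S * Z) * exp (W / 2))) := by
  obtain ⟨c, b, hc, hcζ, hb, hinterp⟩ := exists_hermite_exp hS hζ
  set Q : ℝ := Fintype.card ι * P
  set ψ := ∑ l, g l * exp (w l * ζ) with hψ
  set R := ∑ i ∈ range Z ×ˢ range S,
    b i / i.2.factorial * ∑ l, g l * (w l ^ i.2 * exp (w l * i.1)) with hR
  have hRle : |R| ≤ 2 ^ (S * Z) * (Q * D * exp (W / 2)) := by
    refine abs_sum_hermite_le hW (by positivity) hb fun i hi ↦ ?_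
    obtain ⟨hz, hs⟩ := mem_product.mp hi
    rw [mem_range] at hz hs
    calc _ ≤ Q * (W ^ i.2 * D) := abs_sum_mul_pow_mul_exp_le hW hg hw
          (fun l ↦ hθ l i.1 (by omega)) (hzero i.2 hs i.1 hz)
      _ = Q * D * W ^ i.2 := by ring
  have hψR : |c * ψ + R| ≤ Q * (W ^ (S * Z) * exp (W * ζ) / (S * Z).factorial) := by
    rw [hψ, hR, mul_sum_exp_add_sum_hermite]
    refine abs_sum_mul_le_card_mul hg fun l ↦ (hinterp (w l)).trans ?_
    have := hw l
    gcongr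
  have hcψ : c * |ψ| ≤ Q * (W ^ (S * Z) * exp (W * ζ) / (S * Z).factorial) +
      2 ^ (S * Z) * (Q * D * exp (W / 2)) := by
    calc c * |ψ| = |c * ψ + R - R| := by rw [add_sub_cancel_right, abs_mul, abs_of_pos hc]
      _ ≤ _ := (abs_sub _ _).trans (add_le_add hψR hRle)
  have hθψ : |∑ l, g l * θ l ^ ζ - ψ| ≤ Q * D := by
    rw [← sum_sub_distrib]
    simp only [← mul_sub]
    exact abs_sum_mul_le_card_mul hg fun l ↦ hθ l ζ le_rfl
  calc |∑ l, g l * θ l ^ ζ| ≤ Q * D + |ψ| := by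
        linarith [abs_sub_abs_le_abs_sub (∑ l, g l * θ l ^ ζ) ψ]
    _ ≤ Q * D + (c * ζ ^ (S * Z)) * |ψ| := by
        gcongr
        exact le_mul_of_one_le_left (abs_nonneg _) hcζ
    _ = Q * D + ζ ^ (S * Z) * (c * |ψ|) := by ring
    _ ≤ Q * D + ζ ^ (S * Z) * (Q * (W ^ (S * Z) * exp (W * ζ) / (S * Z).factorial) +
          2 ^ (S * Z) * (Q * D * exp (W / 2))) := by gcongr
    _ = _ := by
        rw [mul_pow, mul_pow]
        ring

lemma sum_mul_linearForm_pow_eq_zero {x y : ι → ℝ} {a b : ℝ} {s z : ℕ}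
    (hzero : ∀ i j, i + j ≤ s → ∑ l, g l * (x l ^ i * y l ^ j * θ l ^ z) = 0) :
    ∑ l, g l * ((x l * a + y l * b) ^ s * θ l ^ z) = 0 := by
  have hbinom (l : ι) : g l * ((x l * a + y l * b) ^ s * θ l ^ z) = ∑ i ∈ range (s + 1),
      a ^ i * b ^ (s - i) * s.choose i * (g l * (x l ^ i * y l ^ (s - i) * θ l ^ z)) := by
    rw [add_pow, sum_mul, mul_sum]
    exact sum_congr rfl fun i _ ↦ by ring
  simp only [hbinom]
  rw [sum_comm]
  refine sum_eq_zero fun i hi ↦ ?_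
  have := mem_range.mp hi
  rw [← mul_sum, hzero i (s - i) (by omega), mul_zero]

end Extrapolation

section BakerMethod

open Real Finset

variable {ι κ : Type*} [Fintype ι] [Fintype κ] {e : κ → ℝ} {p x y : ι → ℤ} {θ d : ι → ℝ}
  {a₁ a₂ P V R X W δ : ℝ} {K S Z ζ i j z : ℕ}

/-- The derivative of order `(i, j)`, at the point `(z, z)`, of Baker's auxiliary function
`(z₁, z₂) ↦ ∑ l, p l * exp (x l * a₁ * z₁ + y l * a₂ * z₂)`, where `exp (x l * a₁ + y l * a₂)` is
replaced by the nearby algebraic number `θ l` and the factor `a₁ ^ i * a₂ ^ j` is dropped. -/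
def auxMoment (p x y : ι → ℤ) (θ : ι → ℝ) (i j z : ℕ) : ℝ :=
  ∑ l, p l * ((x l : ℝ) ^ i * (y l : ℝ) ^ j * θ l ^ z)

/-- The bound of Hermite interpolation at `ζ`, from order `S` at the integers below `Z`, for a
sum of exponentials of frequencies at most `W` known up to a relative error `exp (δ * ζ)`. -/
noncomputable def extrapolationBound (W δ : ℝ) (S Z ζ : ℕ) : ℝ :=
  (ζ * W) ^ (S * Z) * exp (W * ζ) / (S * Z).factorial +
    exp (W * ζ) * (2 * (δ * ζ)) * (1 + (2 * ζ) ^ (S * Z) * exp (W / 2))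

lemma abs_pow_mul_pow_le {a b : ℝ} (ha : |a| ≤ X) (hb : |b| ≤ X) (hX : 1 ≤ X) (hij : i + j ≤ K) :
    |a ^ i * b ^ j| ≤ X ^ K := by
  rw [abs_mul, abs_pow, abs_pow]
  calc |a| ^ i * |b| ^ j ≤ X ^ i * X ^ j := by gcongr
    _ = X ^ (i + j) := (pow_add _ _ _).symm
    _ ≤ X ^ K := pow_le_pow_right₀ hX hij

lemma hasSize_monomial {a b : ℤ} {η : ℝ} (hη : HasSize e η R) (ha : |(a : ℝ)| ≤ X)
    (hb : |(b : ℝ)| ≤ X) (hX : 1 ≤ X) (hij : i + j ≤ K) :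
    HasSize e ((a : ℝ) ^ i * (b : ℝ) ^ j * η ^ z) (X ^ K * R ^ z) := by
  have hR := hη.nonneg
  have h := (hη.pow z).intCast_mul (a ^ i * b ^ j)
  push_cast at h
  refine h.mono ?_
  gcongr
  exact abs_pow_mul_pow_le ha hb hX hij

lemma hasSize_pow_mul_auxMoment (hVθ : ∀ l, HasSize e (V * θ l) R) (hx : ∀ l, |(x l : ℝ)| ≤ X)
    (hy : ∀ l, |(y l : ℝ)| ≤ X) (hX : 1 ≤ X) (hp : ∀ l, |(p l : ℝ)| ≤ P) (hij : i + j ≤ K) :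
    HasSize e (V ^ z * auxMoment p x y θ i j z) (Fintype.card ι * P * X ^ K * R ^ z) := by
  have hsum : V ^ z * auxMoment p x y θ i j z =
      ∑ l, p l * ((x l : ℝ) ^ i * (y l : ℝ) ^ j * (V * θ l) ^ z) := by
    rw [auxMoment, mul_sum]
    exact sum_congr rfl fun l _ ↦ by ring
  have hcard : Fintype.card ι * P * X ^ K * R ^ z = ∑ _l : ι, P * (X ^ K * R ^ z) := by
    rw [sum_const, card_univ, nsmul_eq_mul]
    ring
  rw [hsum, hcard]
  refine HasSize.sum _ fun l _ ↦ ((hasSize_monomial (hVθ l) (hx l) (hy l) hX hij).intCast_mul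
    (p l)).mono ?_
  have hR := (hVθ l).nonneg
  exact mul_le_mul_of_nonneg_right (hp l) (by positivity)

/-- Siegel's lemma provides the auxiliary function. -/
lemma exists_auxMoment_eq_zero (he : e ≠ 0) (hV : V ≠ 0) (hVθ : ∀ l, HasSize e (V * θ l) R)
    (hR : 1 ≤ R) (hx : ∀ l, |(x l : ℝ)| ≤ X) (hy : ∀ l, |(y l : ℝ)| ≤ X) (hX : 1 ≤ X) (hK : 0 < K)
    (hZ : 0 < Z) (hcard : 2 * (K * K * Z * Fintype.card κ) ≤ Fintype.card ι) :
    ∃ p : ι → ℤ, p ≠ 0 ∧ (∀ l, |(p l : ℝ)| ≤ Fintype.card ι * (X ^ K * R ^ Z)) ∧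
      ∀ i j, i + j < K → ∀ z < Z, auxMoment p x y θ i j z = 0 := by
  let J := {k : Fin K × Fin K // (k.1 + k.2 : ℕ) < K} × Fin Z
  have hJ : Nonempty J := ⟨⟨(⟨0, hK⟩, ⟨0, hK⟩), by simpa using hK⟩, ⟨0, hZ⟩⟩
  have hJcard : Fintype.card J ≤ K * K * Z := by
    simp only [J, Fintype.card_prod, Fintype.card_fin]
    gcongr
    exact (Fintype.card_subtype_le _).trans (by simp)
  have hℓ : 1 ≤ X ^ K * R ^ Z :=
    one_le_mul_of_one_le_of_one_le (one_le_pow₀ hX) (one_le_pow₀ hR)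
  obtain ⟨p, hp0, hp, hzero⟩ := exists_int_comb_eq_zero (J := J) he
    (y := fun k l ↦ (x l : ℝ) ^ (k.1.1.1 : ℕ) * (y l : ℝ) ^ (k.1.1.2 : ℕ) * (V * θ l) ^ (k.2 : ℕ))
    (fun k l ↦ (hasSize_monomial (hVθ l) (hx l) (hy l) hX k.1.2.le).mono
      (by gcongr; exact k.2.2.le))
    hℓ ((Nat.mul_le_mul_left 2 (Nat.mul_le_mul_right _ hJcard)).trans hcard)
  refine ⟨p, hp0, hp, fun i j hij z hz ↦ ?_⟩
  have hmoment := hzero (⟨(⟨i, by omega⟩, ⟨j, by omega⟩), hij⟩, ⟨z, hz⟩)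
  refine (mul_eq_zero.mp (?_ : V ^ z * auxMoment p x y θ i j z = 0)).resolve_left
    (pow_ne_zero _ hV)
  rw [← hmoment, auxMoment, mul_sum]
  exact sum_congr rfl fun l _ ↦ by ring

lemma abs_auxMoment_le (hP : 0 ≤ P) (hW : 0 ≤ W) (hδ : 0 ≤ δ) (hp : ∀ l, |(p l : ℝ)| ≤ P)
    (hx : ∀ l, |(x l : ℝ)| ≤ X) (hy : ∀ l, |(y l : ℝ)| ≤ X) (hX : 1 ≤ X)
    (hθ : ∀ l, θ l = exp (x l * a₁ + y l * a₂ + d l)) (hw : ∀ l, |x l * a₁ + y l * a₂| ≤ W)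
    (hd : ∀ l, |d l| ≤ δ) (hS : 0 < S) (hζ : Z ≤ ζ) (hδζ : δ * ζ ≤ 1) (hij : i + j ≤ K)
    (hzero : ∀ i' j', i' + j' < i + j + S → ∀ z < Z, auxMoment p x y θ i' j' z = 0) :
    |auxMoment p x y θ i j ζ| ≤ Fintype.card ι * P * X ^ K * extrapolationBound W δ S Z ζ := by
  have hsum : auxMoment p x y θ i j ζ = ∑ l, p l * ((x l : ℝ) ^ i * (y l : ℝ) ^ j) * θ l ^ ζ := by
    simp only [auxMoment, mul_assoc]
  rw [hsum, mul_assoc (Fintype.card ι : ℝ)]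
  refine abs_sum_mul_pow_le_of_moments_eq_zero (w := fun l ↦ x l * a₁ + y l * a₂) hS hζ
    (by positivity) hW (by positivity) (fun l ↦ ?_) hw (fun l z hz ↦ ?_) fun s hs z hz ↦ ?_
  · rw [abs_mul]
    exact mul_le_mul (hp l) (abs_pow_mul_pow_le (hx l) (hy l) hX hij) (abs_nonneg _) hP
  · rw [hθ, ← exp_nat_mul, mul_comm (z : ℝ)]
    exact abs_exp_add_mul_sub_exp_mul_le (hw l) (hd l) z.cast_nonneg (by exact_mod_cast hz) hδζ
  · refine sum_mul_linearForm_pow_eq_zero fun i' j' hs' ↦ ?_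
    rw [← hzero (i + i') (j + j') (by omega) z hz, auxMoment]
    exact sum_congr rfl fun l _ ↦ by ring

/-- By Liouville's inequality a moment that is small enough vanishes. -/
lemma auxMoment_eq_zero_of_bound_lt_one {G B : ℝ} (he : e ≠ 0) (hV : V ≠ 0) (hVB : |V| ≤ B)
    (hsize : HasSize e (V ^ z * auxMoment p x y θ i j z) (G * R ^ z)) {E : ℝ}
    (hE : |auxMoment p x y θ i j z| ≤ E)
    (hlt : B ^ z * (G * R ^ z) ^ (Fintype.card κ - 1) * E < 1) : auxMoment p x y θ i j z = 0 := by
  by_contra hne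
  refine hlt.not_ge ?_
  have hℓ := hsize.nonneg
  have hB : 0 ≤ B := (abs_nonneg V).trans hVB
  calc (1 : ℝ) ≤ |V ^ z * auxMoment p x y θ i j z| * (G * R ^ z) ^ (Fintype.card κ - 1) :=
        hsize.one_le_abs_mul_pow he (mul_ne_zero (pow_ne_zero _ hV) hne)
    _ = |V| ^ z * (G * R ^ z) ^ (Fintype.card κ - 1) * |auxMoment p x y θ i j z| := by
        rw [abs_mul, abs_pow]
        ring
    _ ≤ B ^ z * (G * R ^ z) ^ (Fintype.card κ - 1) * E := by gcongr

/-- Baker's method: the vanishing of the auxiliary function, obtained from Siegel's lemma to order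
`K` at the integers below `Z`, propagates by extrapolation to order `K - j * S` at the integers
below `2 ^ j * Z`, until it contradicts the zero estimate. -/
theorem baker_method {T J : ℕ} {B G : ℝ} (he : e ≠ 0) (hV : V ≠ 0) (hVB : |V| ≤ B)
    (hVθ : ∀ l, HasSize e (V * θ l) R) (hR : 1 ≤ R) (hx : ∀ l, |(x l : ℝ)| ≤ X)
    (hy : ∀ l, |(y l : ℝ)| ≤ X) (hX : 1 ≤ X)
    (hθ : ∀ l, θ l = exp (x l * a₁ + y l * a₂ + d l)) (hW : 0 ≤ W)
    (hw : ∀ l, |x l * a₁ + y l * a₂| ≤ W) (hδ : 0 ≤ δ) (hd : ∀ l, |d l| ≤ δ) (hS : 0 < S)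
    (hZ : 0 < Z) (hT : 0 < T) {c : ι → Fin T} (hc : ∀ l l', θ l = θ l' → c l = c l' → l = l')
    (hxinj : ∀ l l', θ l = θ l' → x l = x l' → l = l')
    (hcard : 2 * (K * K * Z * Fintype.card κ) ≤ Fintype.card ι) (hJK : J * S + T ≤ K)
    (hJZ : Fintype.card ι ≤ 2 ^ J * Z)
    (hG : G = Fintype.card ι * (Fintype.card ι * (X ^ K * R ^ Z)) * X ^ K)
    (hbound : ∀ j < J, ∀ ζ : ℕ, 2 ^ j * Z ≤ ζ → ζ < 2 ^ (j + 1) * Z → δ * ζ ≤ 1 ∧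
      B ^ ζ * (G * R ^ ζ) ^ (Fintype.card κ - 1) *
        (G * extrapolationBound W δ S (2 ^ j * Z) ζ) < 1) : False := by
  obtain ⟨p, hp0, hp, hzero⟩ := exists_auxMoment_eq_zero he hV hVθ hR hx hy hX
    (by omega : 0 < K) hZ hcard
  have hvanish (k : ℕ) (hk : k ≤ J) : ∀ i j, i + j + k * S < K → ∀ z < 2 ^ k * Z,
      auxMoment p x y θ i j z = 0 := by
    induction k with
    | zero => simpa using hzero
    | succ k ih =>
      intro i j hij z hz
      specialize ih (by omega)
      rw [add_one_mul] at hij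
      rcases lt_or_ge z (2 ^ k * Z) with hzk | hzk
      · exact ih i j (by omega) z hzk
      obtain ⟨hδz, hlt⟩ := hbound k (by omega) z hzk hz
      refine auxMoment_eq_zero_of_bound_lt_one he hV hVB ?_ ?_ hlt
      · rw [hG]
        exact hasSize_pow_mul_auxMoment hVθ hx hy hX hp (by omega)
      · rw [hG]
        exact abs_auxMoment_le (by positivity) hW hδ hp hx hy hX hθ hw hd hS hzk hδz (by omega)
          fun i' j' hij' ↦ ih i' j' (by omega)
  have hp_zero : (fun l ↦ (p l : ℝ)) = 0 := by
    refine eq_zero_of_sum_mul_pow_mul_pow_eq_zero (x := fun l ↦ (x l : ℝ)) (θ := θ)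
      (fun k hk z hz ↦ ?_) le_rfl hc fun l l' h h' ↦ hxinj l l' h (by exact_mod_cast h')
    simpa [auxMoment, mul_assoc] using hvanish J le_rfl k 0 (by omega) z (by omega)
  exact hp0 (funext fun l ↦ by simpa using congrFun hp_zero l)

end BakerMethod

section LinearForm

open Real

variable {κ : Type*} [Fintype κ] {e : κ → ℝ} {α t u v γ cα ct H X W δ : ℝ} {L T n m : ℕ}

/-- The exponents of `α` after `γ` is replaced by `α ^ (-n) * t ^ m` in
`α ^ l.1 * t ^ l.2.1 * γ ^ l.2.2`. -/
def αExponent (n : ℕ) (l : Fin L × Fin L × Fin T) : ℤ := l.1 - n * l.2.2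

/-- The exponents of `t` after `γ` is replaced by `α ^ (-n) * t ^ m` in
`α ^ l.1 * t ^ l.2.1 * γ ^ l.2.2`. -/
def tExponent (m : ℕ) (l : Fin L × Fin L × Fin T) : ℤ := l.2.1 + m * l.2.2

/-- The monomials in `α`, `t` and `γ` out of which the auxiliary function is built. -/
noncomputable def monomialValue (α t γ : ℝ) (l : Fin L × Fin L × Fin T) : ℝ :=
  α ^ (l.1 : ℕ) * t ^ (l.2.1 : ℕ) * γ ^ (l.2.2 : ℕ)

lemma abs_αExponent_le (hX : (L + n * T : ℝ) ≤ X) (l : Fin L × Fin L × Fin T) :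
    |(αExponent n l : ℝ)| ≤ X := by
  have h₁ : ((l.1 : ℕ) : ℝ) ≤ L := by exact_mod_cast l.1.2.le
  have h₃ : ((l.2.2 : ℕ) : ℝ) ≤ T := by exact_mod_cast l.2.2.2.le
  calc |(αExponent n l : ℝ)| = |((l.1 : ℕ) : ℝ) - n * (l.2.2 : ℕ)| := by simp [αExponent]
    _ ≤ (l.1 : ℕ) + n * (l.2.2 : ℕ) := (abs_sub _ _).trans_eq (by
        rw [abs_mul, Nat.abs_cast, Nat.abs_cast, Nat.abs_cast])
    _ ≤ L + n * T := by gcongr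
    _ ≤ X := hX

lemma abs_tExponent_le (hX : (L + m * T : ℝ) ≤ X) (l : Fin L × Fin L × Fin T) :
    |(tExponent m l : ℝ)| ≤ X := by
  have h₂ : ((l.2.1 : ℕ) : ℝ) ≤ L := by exact_mod_cast l.2.1.2.le
  have h₃ : ((l.2.2 : ℕ) : ℝ) ≤ T := by exact_mod_cast l.2.2.2.le
  calc |(tExponent m l : ℝ)| = |((l.2.1 : ℕ) + m * (l.2.2 : ℕ) : ℝ)| := by simp [tExponent]
    _ = (l.2.1 : ℕ) + m * (l.2.2 : ℕ) := abs_of_nonneg (by positivity)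
    _ ≤ L + m * T := by gcongr
    _ ≤ X := hX

lemma exponents_add_error_eq (l : Fin L × Fin L × Fin T) :
    αExponent n l * log α + tExponent m l * log t +
        (l.2.2 : ℕ) * (log γ + n * log α - m * log t) =
      (l.1 : ℕ) * log α + (l.2.1 : ℕ) * log t + (l.2.2 : ℕ) * log γ := by
  simp only [αExponent, tExponent]
  push_cast
  ring

lemma monomialValue_eq_exp (hα : 0 < α) (ht : 0 < t) (hγ : 0 < γ) (l : Fin L × Fin L × Fin T) :
    monomialValue α t γ l = exp (αExponent n l * log α + tExponent m l * log t +
      (l.2.2 : ℕ) * (log γ + n * log α - m * log t)) := by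
  rw [exponents_add_error_eq, exp_add, exp_add, exp_nat_mul, exp_nat_mul, exp_nat_mul,
    exp_log hα, exp_log ht, exp_log hγ, monomialValue]

lemma abs_exponents_le (hα : 1 ≤ α) (ht : 1 ≤ t)
    (hδ : T * |log γ + n * log α - m * log t| ≤ δ)
    (hW : L * log α + L * log t + T * |log γ| + δ ≤ W) (l : Fin L × Fin L × Fin T) :
    |αExponent n l * log α + tExponent m l * log t| ≤ W := by
  have h₁ : ((l.1 : ℕ) : ℝ) ≤ L := by exact_mod_cast l.1.2.le
  have h₂ : ((l.2.1 : ℕ) : ℝ) ≤ L := by exact_mod_cast l.2.1.2.le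
  have h₃ : ((l.2.2 : ℕ) : ℝ) ≤ T := by exact_mod_cast l.2.2.2.le
  have hlogα := log_nonneg hα
  have hlogt := log_nonneg ht
  rw [eq_sub_of_add_eq (exponents_add_error_eq l)]
  calc _ ≤ |(l.1 : ℕ) * log α| + |(l.2.1 : ℕ) * log t| + |(l.2.2 : ℕ) * log γ| +
        |(l.2.2 : ℕ) * (log γ + n * log α - m * log t)| :=
        (abs_sub _ _).trans (by gcongr; exact abs_add_three _ _ _)
    _ = (l.1 : ℕ) * log α + (l.2.1 : ℕ) * log t + (l.2.2 : ℕ) * |log γ| +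
        (l.2.2 : ℕ) * |log γ + n * log α - m * log t| := by
        simp only [abs_mul, Nat.abs_cast, abs_of_nonneg hlogα, abs_of_nonneg hlogt]
    _ ≤ L * log α + L * log t + T * |log γ| + T * |log γ + n * log α - m * log t| := by gcongr
    _ ≤ W := by linarith

lemma hasSize_pow_mul_monomialValue (hα : HasSize e α cα) (ht : HasSize e t ct)
    (hu : HasSize e u H) (hv : HasSize e v H) (hv0 : v ≠ 0) (hcα : 1 ≤ cα) (hct : 1 ≤ ct)
    (l : Fin L × Fin L × Fin T) :
    HasSize e (v ^ T * monomialValue α t (u / v) l) (cα ^ L * ct ^ L * H ^ T) := by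
  have hH := hv.nonneg
  have hT : T - l.2.2 + l.2.2 = T := Nat.sub_add_cancel l.2.2.2.le
  have heq : v ^ T * monomialValue α t (u / v) l =
      α ^ (l.1 : ℕ) * t ^ (l.2.1 : ℕ) * (v ^ (T - l.2.2) * u ^ (l.2.2 : ℕ)) := by
    rw [monomialValue, div_pow]
    nth_rw 1 [← hT]
    rw [pow_add]
    field_simp
  rw [heq]
  refine (((hα.pow _).mul (ht.pow _)).mul ((hv.pow _).mul (hu.pow _))).mono ?_
  rw [← pow_add, hT]
  gcongr
  exacts [l.1.2.le, l.2.1.2.le]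

lemma eq_of_monomialValue_eq_of_snd_eq (hγ : 0 < γ)
    (hindep : ∀ a b c d, α ^ a * t ^ b = α ^ c * t ^ d → a = c ∧ b = d)
    {l l' : Fin L × Fin L × Fin T} (h : monomialValue α t γ l = monomialValue α t γ l')
    (hsnd : l.2.2 = l'.2.2) : l = l' := by
  rw [monomialValue, monomialValue, hsnd] at h
  obtain ⟨h₁, h₂⟩ := hindep _ _ _ _ (mul_right_cancel₀ (pow_pos hγ _).ne' h)
  exact Prod.ext (Fin.ext h₁) (Prod.ext (Fin.ext h₂) hsnd)

lemma snd_eq_of_αExponent_eq (hLn : L ≤ n) {l l' : Fin L × Fin L × Fin T}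
    (h : αExponent n l = αExponent n l') : l.2.2 = l'.2.2 := by
  simp only [αExponent] at h
  have hmul : ((l.1 : ℕ) : ℤ) - (l'.1 : ℕ) = n * ((l.2.2 : ℕ) - (l'.2.2 : ℕ)) := by linarith
  have hlt : |((l.1 : ℕ) : ℤ) - (l'.1 : ℕ)| < n := by
    rw [abs_lt]
    omega
  have hzero := Int.eq_zero_of_abs_lt_dvd ⟨_, hmul⟩ hlt
  have hn : (n : ℤ) ≠ 0 := by omega
  have := (mul_eq_zero.mp (hmul.symm.trans hzero)).resolve_left hn
  omega

theorem baker_method_linearForm {K S Z J : ℕ} {G : ℝ} (he : e ≠ 0) (hα : 1 < α) (ht : 1 < t)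
    (hu0 : 0 < u) (hv0 : 0 < v)
    (hindep : ∀ a b c d, α ^ a * t ^ b = α ^ c * t ^ d → a = c ∧ b = d)
    (hαsize : HasSize e α cα) (htsize : HasSize e t ct) (hu : HasSize e u H) (hv : HasSize e v H)
    (hcα : 1 ≤ cα) (hct : 1 ≤ ct) (hH : 1 ≤ H) (hLn : L ≤ n) (hX : 1 ≤ X)
    (hXn : (L + n * T : ℝ) ≤ X) (hXm : (L + m * T : ℝ) ≤ X) (hS : 0 < S) (hZ : 0 < Z) (hT : 0 < T)
    (hcard : 2 * (K * K * Z * Fintype.card κ) ≤ L * L * T) (hJK : J * S + T ≤ K)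
    (hJZ : L * L * T ≤ 2 ^ J * Z)
    (hδ : T * |log (u / v) + n * log α - m * log t| ≤ δ)
    (hW : L * log α + L * log t + T * |log (u / v)| + δ ≤ W)
    (hG : G = (L * L * T) ^ 2 * (X ^ K) ^ 2 * (cα ^ L * ct ^ L * H ^ T) ^ Z)
    (hbound : ∀ j < J, ∀ ζ : ℕ, 2 ^ j * Z ≤ ζ → ζ < 2 ^ (j + 1) * Z → δ * ζ ≤ 1 ∧
      (H ^ T) ^ ζ * (G * (cα ^ L * ct ^ L * H ^ T) ^ ζ) ^ (Fintype.card κ - 1) *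
        (G * extrapolationBound W δ S (2 ^ j * Z) ζ) < 1) : False := by
  have hγ0 : 0 < u / v := div_pos hu0 hv0
  have hδ0 : 0 ≤ δ := le_trans (by positivity) hδ
  have hW0 : 0 ≤ W := by
    have := log_pos hα
    have := log_pos ht
    exact le_trans (by positivity) hW
  have hcardι : Fintype.card (Fin L × Fin L × Fin T) = L * L * T := by
    simp [Fintype.card_prod, mul_assoc]
  have hsnd {l l' : Fin L × Fin L × Fin T} :=
    eq_of_monomialValue_eq_of_snd_eq (l := l) (l' := l') hγ0 hindep
  refine baker_method (x := αExponent n) (y := tExponent m) (V := v ^ T) (c := fun l ↦ l.2.2) he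
    (pow_pos hv0 T).ne' ?_ (hasSize_pow_mul_monomialValue hαsize htsize hu hv hv0.ne' hcα hct)
    ?_ (abs_αExponent_le hXn) (abs_tExponent_le hXm) hX
    (monomialValue_eq_exp (by linarith) (by linarith) hγ0) hW0
    (abs_exponents_le hα.le ht.le hδ hW) hδ0 (fun l ↦ ?_) hS hZ hT (fun l l' h h' ↦ hsnd h h')
    (fun l l' h h' ↦ hsnd h (snd_eq_of_αExponent_eq hLn h')) (hcardι ▸ hcard) hJK (hcardι ▸ hJZ)
    ?_ hbound
  · rw [abs_pow]
    exact pow_le_pow_left₀ (abs_nonneg v) (hv.abs_le he) T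
  · exact one_le_mul_of_one_le_of_one_le (one_le_mul_of_one_le_of_one_le (one_le_pow₀ hcα)
      (one_le_pow₀ hct)) (one_le_pow₀ hH)
  · rw [abs_mul, Nat.abs_cast]
    refine le_trans ?_ hδ
    gcongr
    exact_mod_cast l.2.2.2.le
  · rw [hG, hcardι]
    push_cast
    ring

end LinearForm

section Parameters

open Real

variable {L T Z Z₀ ζ M K b : ℕ} {B U W X Y δ G : ℝ}

lemma pow_le_exp_of_log_le {c k y : ℝ} {n : ℕ} (hc : 0 < c) (hk : log c ≤ k) (hy : n * k ≤ y) :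
    c ^ n ≤ exp y := by
  rw [← exp_log hc, ← exp_nat_mul, exp_le_exp]
  exact (by gcongr : n * log c ≤ n * k).trans hy

lemma log_eighteen_le : log 18 ≤ 2.891 := by
  have h : log 18 = log 2 + 2 * log 3 := by
    rw [show (18 : ℝ) = 2 * 3 ^ 2 by norm_num, log_mul (by norm_num) (by norm_num), log_pow]
    norm_num
  linarith [log_two_lt_d9, log_three_lt_d9]

lemma exp_thirteen_quarters_le : exp (13 / 4) ≤ 64 / 2.4 := by
  refine le_of_pow_le_pow_left₀ (n := 4) (by norm_num) (by norm_num) ?_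
  calc exp (13 / 4) ^ 4 = exp 1 ^ 13 := by
        rw [← exp_nat_mul, ← exp_nat_mul]
        norm_num
    _ ≤ 2.7182818286 ^ 13 := by
        gcongr
        exact exp_one_lt_d9.le
    _ ≤ (64 / 2.4) ^ 4 := by norm_num

/-- `M ^ M / M! ≤ exp M`, and `64 / 2.4` exceeds `exp (13 / 4)`. -/
lemma pow_mul_exp_div_factorial_le (hM : (M : ℝ) = 64 * Y) (hW : 0 ≤ ζ * W)
    (hζW : ζ * W ≤ 2.4 * Y) :
    (ζ * W) ^ M * exp (W * ζ) / M.factorial ≤ exp (-(141.6 * Y)) := by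
  have hstirling : (M : ℝ) ^ M / M.factorial ≤ exp M := pow_div_factorial_le_exp _ M.cast_nonneg M
  have hratio : ζ * W ≤ exp (-(13 / 4)) * M := by
    have hexp : 2.4 / 64 ≤ exp (-(13 / 4)) := by
      rw [exp_neg, ← inv_div]
      exact inv_anti₀ (exp_pos _) exp_thirteen_quarters_le
    calc ζ * W ≤ 2.4 / 64 * M := by linarith
      _ ≤ exp (-(13 / 4)) * M := by gcongr
  calc (ζ * W) ^ M * exp (W * ζ) / M.factorial
      ≤ (exp (-(13 / 4)) * M) ^ M * exp (2.4 * Y) / M.factorial := by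
        rw [mul_comm W]
        gcongr
    _ = exp (-(13 / 4)) ^ M * exp (2.4 * Y) * ((M : ℝ) ^ M / M.factorial) := by ring
    _ ≤ exp (-(13 / 4)) ^ M * exp (2.4 * Y) * exp M := by gcongr
    _ = exp (-(141.6 * Y)) := by
        rw [← exp_nat_mul, ← exp_add, ← exp_add, hM]
        ring_nf

lemma exp_mul_mul_one_add_pow_mul_exp_le (hM : (M : ℝ) = 64 * Y) (hY : 1 ≤ Y) (hB : 512 ≤ B)
    (hU : 46 * (B * Y) ≤ U) (hζW : ζ * W ≤ 2.4 * Y) (hW : W / 2 ≤ 0.6 * Y)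
    (hδ : 0 ≤ δ) (hδζ : 2 * (δ * ζ) ≤ exp (Y - U)) (hζB : (2 * ζ : ℝ) ≤ exp (0.7 * B)) :
    exp (W * ζ) * (2 * (δ * ζ)) * (1 + (2 * ζ) ^ M * exp (W / 2)) ≤ exp (-(141.6 * Y)) := by
  have hBY : 512 * Y ≤ B * Y := by gcongr
  have hpow : (2 * ζ : ℝ) ^ M ≤ exp (44.8 * (B * Y)) := by
    calc (2 * ζ : ℝ) ^ M ≤ exp (0.7 * B) ^ M := by gcongr
      _ = exp (44.8 * (B * Y)) := by
          rw [← exp_nat_mul, hM]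
          ring_nf
  have htail : 1 + (2 * ζ : ℝ) ^ M * exp (W / 2) ≤ exp (44.8 * (B * Y) + 2 * Y) := by
    have hone : (1 : ℝ) ≤ exp (44.8 * (B * Y) + 0.6 * Y) := one_le_exp (by positivity)
    have htwo : (2 : ℝ) ≤ exp (1.4 * Y) := by linarith [add_one_le_exp (1.4 * Y)]
    calc 1 + (2 * ζ : ℝ) ^ M * exp (W / 2)
        ≤ 1 + exp (44.8 * (B * Y)) * exp (0.6 * Y) := by gcongr
      _ ≤ 2 * exp (44.8 * (B * Y) + 0.6 * Y) := by
          rw [← exp_add]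
          linarith
      _ ≤ exp (1.4 * Y) * exp (44.8 * (B * Y) + 0.6 * Y) := by gcongr
      _ = exp (44.8 * (B * Y) + 2 * Y) := by
          rw [← exp_add]
          ring_nf
  calc exp (W * ζ) * (2 * (δ * ζ)) * (1 + (2 * ζ) ^ M * exp (W / 2))
      ≤ exp (2.4 * Y) * exp (Y - U) * exp (44.8 * (B * Y) + 2 * Y) := by
        rw [mul_comm W]
        gcongr
    _ = exp (5.4 * Y + 44.8 * (B * Y) - U) := by
        rw [← exp_add, ← exp_add]
        ring_nf
    _ ≤ exp (-(141.6 * Y)) := exp_le_exp.mpr (by linarith)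

lemma extrapolationBound_le {S : ℕ} (hS : ((S * Z : ℕ) : ℝ) = 64 * Y) (hY : 1 ≤ Y) (hB : 512 ≤ B)
    (hU : 46 * (B * Y) ≤ U) (hζW₀ : 0 ≤ ζ * W) (hζW : ζ * W ≤ 2.4 * Y) (hW : W / 2 ≤ 0.6 * Y)
    (hδ : 0 ≤ δ) (hδζ : 2 * (δ * ζ) ≤ exp (Y - U)) (hζB : (2 * ζ : ℝ) ≤ exp (0.7 * B)) :
    extrapolationBound W δ S Z ζ ≤ 2 * exp (-(141.6 * Y)) := by
  rw [two_mul]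
  exact add_le_add (pow_mul_exp_div_factorial_le hS hζW₀ hζW)
    (exp_mul_mul_one_add_pow_mul_exp_le hS hY hB hU hζW hW hδ hδζ hζB)

lemma two_mul_mul_le_exp_sub (hTL : 32 * T ≤ L) (hδ : δ = T * exp (-U)) (hζ : ζ < 2 * Z) :
    2 * (δ * ζ) ≤ exp (L * Z - U) := by
  have hTL' : (32 * T : ℝ) ≤ L := by exact_mod_cast hTL
  have hζ' : (ζ : ℝ) ≤ 2 * Z := by exact_mod_cast hζ.le
  have hTζ : 2 * (T * ζ : ℝ) ≤ exp (L * Z) := by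
    calc (2 * (T * ζ) : ℝ) ≤ 2 * (T * (2 * Z)) := by gcongr
      _ ≤ 32 * T * Z := by nlinarith [mul_nonneg T.cast_nonneg (α := ℝ) Z.cast_nonneg]
      _ ≤ L * Z := by gcongr
      _ ≤ exp (L * Z) := by linarith [add_one_le_exp (L * Z : ℝ)]
  calc 2 * (δ * ζ) = 2 * (T * ζ) * exp (-U) := by
        rw [hδ]
        ring
    _ ≤ exp (L * Z) * exp (-U) := by gcongr
    _ = exp (L * Z - U) := by rw [← exp_add, sub_eq_add_neg]

lemma auxCoeffBound_le (hB : 512 ≤ B) (hL : 32 ≤ L) (hZ₀ : (Z₀ : ℝ) = 9 * B ^ 2) (hZ : Z₀ ≤ Z)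
    (hK : (K : ℝ) = 64 * B * L) (hX : 0 < X) (hXB : log X ≤ B) (hN : (L * L * T : ℝ) ≤ exp B) :
    (L * L * T) ^ 2 * (X ^ K) ^ 2 * (18 ^ L) ^ Z₀ ≤ exp (17.15 * (L * Z)) := by
  have hL' : (32 : ℝ) ≤ L := by exact_mod_cast hL
  have hZ' : (Z₀ : ℝ) ≤ Z := by exact_mod_cast hZ
  have hLZ : L * (9 * B ^ 2) ≤ L * Z := by
    rw [← hZ₀]
    gcongr
  have hBLZ : 100000 * B ≤ L * Z := by nlinarith
  have hXK : X ^ K ≤ exp (7.12 * (L * Z)) := by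
    refine pow_le_exp_of_log_le hX hXB ?_
    rw [hK]
    linarith
  have h18 : ((18 : ℝ) ^ L) ^ Z₀ ≤ exp (2.891 * (L * Z)) := by
    rw [← pow_mul]
    refine pow_le_exp_of_log_le (by norm_num) log_eighteen_le ?_
    push_cast
    rw [hZ₀]
    linarith
  calc (L * L * T) ^ 2 * (X ^ K) ^ 2 * (18 ^ L) ^ Z₀
      ≤ exp (0.00001 * (L * Z)) ^ 2 * exp (7.12 * (L * Z)) ^ 2 * exp (2.891 * (L * Z)) := by
        have := hN.trans (exp_le_exp.mpr (by linarith : B ≤ 0.00001 * (L * Z)))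
        gcongr
    _ = exp (17.13102 * (L * Z)) := by
        rw [← exp_nat_mul, ← exp_nat_mul, ← exp_add, ← exp_add]
        push_cast
        ring_nf
    _ ≤ exp (17.15 * (L * Z)) := exp_le_exp.mpr (by nlinarith)

lemma liouvilleFactor_le (hG₀ : 0 ≤ G) (hG : G ≤ exp (17.15 * Y)) (hLζ : (L * ζ : ℝ) ≤ 2 * Y) :
    (3 ^ L) ^ ζ * (G * (18 ^ L) ^ ζ) ^ 5 * G ≤ exp (134.2 * Y) := by
  have h3 : ((3 : ℝ) ^ L) ^ ζ ≤ exp (2.2 * Y) := by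
    rw [← pow_mul]
    refine pow_le_exp_of_log_le (k := 1.0987) (by norm_num) (by linarith [log_three_lt_d9]) ?_
    push_cast
    linarith [(by positivity : (0 : ℝ) ≤ L * ζ)]
  have h18 : ((18 : ℝ) ^ L) ^ ζ ≤ exp (5.8 * Y) := by
    rw [← pow_mul]
    refine pow_le_exp_of_log_le (by norm_num) log_eighteen_le ?_
    push_cast
    linarith [(by positivity : (0 : ℝ) ≤ L * ζ)]
  calc (3 ^ L) ^ ζ * (G * (18 ^ L) ^ ζ) ^ 5 * G
      ≤ exp (2.2 * Y) * (exp (17.15 * Y) * exp (5.8 * Y)) ^ 5 * exp (17.15 * Y) := by gcongr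
    _ = exp (134.1 * Y) := by
        rw [← exp_add, ← exp_nat_mul, ← exp_add, ← exp_add]
        push_cast
        ring_nf
    _ ≤ exp (134.2 * Y) := exp_le_exp.mpr (by
        linarith [(by positivity : (0 : ℝ) ≤ L * ζ)])

lemma liouvilleFactor_mul_extrapolationBound_lt_one (hB : 512 ≤ B) (hL : 32 ≤ L)
    (hTL : 32 * T ≤ L) (hZ₀ : (Z₀ : ℝ) = 9 * B ^ 2) (hZ : Z₀ ≤ Z) (hζ : ζ < 2 * Z)
    (hK : (K : ℝ) = 64 * B * L) (hX : 0 < X) (hXB : log X ≤ B) (hN : (L * L * T : ℝ) ≤ exp B)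
    (hZB : (4 * Z : ℝ) ≤ exp (0.7 * B)) (hU : 46 * (B * (L * Z)) ≤ U) (hδ : δ = T * exp (-U))
    (hW : W = 1.2 * L) (hG : G = (L * L * T) ^ 2 * (X ^ K) ^ 2 * (18 ^ L) ^ Z₀) :
    δ * ζ ≤ 1 ∧ (3 ^ L) ^ ζ * (G * (18 ^ L) ^ ζ) ^ 5 *
      (G * extrapolationBound W δ (64 * L) Z ζ) < 1 := by
  have hL' : (32 : ℝ) ≤ L := by exact_mod_cast hL
  have hZ' : (Z₀ : ℝ) ≤ Z := by exact_mod_cast hZ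
  have hζ' : (ζ : ℝ) ≤ 2 * Z := by exact_mod_cast hζ.le
  have hZ1 : (1 : ℝ) ≤ Z := by nlinarith
  have hLY : (L : ℝ) ≤ L * Z := le_mul_of_one_le_right (by linarith) hZ1
  have hLζ : (L * ζ : ℝ) ≤ 2 * (L * Z) := by nlinarith
  have hδζ := two_mul_mul_le_exp_sub hTL hδ hζ
  have hBY : 512 * (L * Z) ≤ B * (L * Z) := by gcongr
  have hG₀ : 0 ≤ G := by
    rw [hG]
    positivity
  have hGle := hG.trans_le (auxCoeffBound_le hB hL hZ₀ hZ hK hX hXB hN)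
  have hE : extrapolationBound W δ (64 * L) Z ζ ≤ 2 * exp (-(141.6 * (L * Z))) := by
    refine extrapolationBound_le (by push_cast; ring) (by linarith) hB hU ?_ ?_ ?_
      (by rw [hδ]; positivity) hδζ (by linarith) <;> rw [hW]
    · positivity
    · linarith
    · linarith
  constructor
  · linarith [exp_le_one_iff.mpr (by linarith : (L * Z - U : ℝ) ≤ 0)]
  calc (3 ^ L) ^ ζ * (G * (18 ^ L) ^ ζ) ^ 5 * (G * extrapolationBound W δ (64 * L) Z ζ)
      = (3 ^ L) ^ ζ * (G * (18 ^ L) ^ ζ) ^ 5 * G * extrapolationBound W δ (64 * L) Z ζ := by ring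
    _ ≤ exp (134.2 * (L * Z)) * (2 * exp (-(141.6 * (L * Z)))) :=
        mul_le_mul (liouvilleFactor_le hG₀ hGle hLζ) hE (by
          rw [extrapolationBound, hδ, hW]
          positivity) (exp_pos _).le
    _ = 2 * exp (-(7.4 * (L * Z))) := by
        rw [mul_left_comm, ← exp_add]
        ring_nf
    _ ≤ 2 * exp (-1) := by
        gcongr
        linarith
    _ < 1 := by linarith [exp_neg_one_lt_d9]

end Parameters

section LowerBound

open Real

lemma log_le_of_le_golden {α : ℝ} (h₀ : 0 < α) (h : α ≤ 1.62) : log α ≤ 0.4853 := by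
  have hpow : log (α ^ 10) ≤ log (2 ^ 7) := by
    refine log_le_log (by positivity) ?_
    calc α ^ 10 ≤ 1.62 ^ 10 := by gcongr
      _ ≤ 2 ^ 7 := by norm_num
  rw [log_pow, log_pow] at hpow
  push_cast at hpow
  linarith [log_two_lt_d9]

lemma log_le_of_le_tribonacci {t : ℝ} (h₀ : 0 < t) (h : t ≤ 1.84) : log t ≤ 0.6162 := by
  have hpow : log (t ^ 9) ≤ log (2 ^ 8) := by
    refine log_le_log (by positivity) ?_
    calc t ^ 9 ≤ 1.84 ^ 9 := by gcongr
      _ ≤ 2 ^ 8 := by norm_num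
  rw [log_pow, log_pow] at hpow
  push_cast at hpow
  linarith [log_two_lt_d9]

lemma two_pow_le_exp_seven_tenths_mul {k : ℕ} {y : ℝ} (h : k ≤ y) :
    (2 : ℝ) ^ k ≤ exp (0.7 * y) :=
  pow_le_exp_of_log_le (k := 0.7) (by norm_num) (by linarith [log_two_lt_d9]) (by linarith)

/-- The conditions of Baker's method on the choice `T = 2 ^ (19 + 4 * b)`, `L = 2 ^ a * T`,
`K = 2 ^ (b + 6) * L`, `S = 64 * L`, `Z = 9 * 2 ^ (2 * b)` of parameters. -/
lemma baker_parameters {a b L T : ℕ} (hT : T = 2 ^ (19 + 4 * b)) (hL : L = 2 ^ a * T)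
    (hTL : T ≤ L) (hab : 2 * a + 60 + 12 * b ≤ 2 ^ b) :
    2 * (2 ^ (b + 6) * L * (2 ^ (b + 6) * L) * (9 * 2 ^ (2 * b)) * 6) ≤ L * L * T ∧
      (2 * a + 54 + 10 * b) * (64 * L) + T ≤ 2 ^ (b + 6) * L ∧
      L * L * T ≤ 2 ^ (2 * a + 54 + 10 * b) * (9 * 2 ^ (2 * b)) := by
  refine ⟨?_, ?_, ?_⟩
  · calc 2 * (2 ^ (b + 6) * L * (2 ^ (b + 6) * L) * (9 * 2 ^ (2 * b)) * 6)
        = L * L * (108 * 2 ^ (12 + 4 * b)) := by ring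
      _ ≤ L * L * (2 ^ 7 * 2 ^ (12 + 4 * b)) := by
          gcongr
          norm_num
      _ = L * L * T := by
          rw [hT]
          ring
  · calc (2 * a + 54 + 10 * b) * (64 * L) + T
        ≤ (2 * a + 54 + 10 * b + 1) * (64 * L) := by linarith
      _ ≤ 2 ^ b * (64 * L) := by
          gcongr
          omega
      _ = 2 ^ (b + 6) * L := by ring
  · calc L * L * T = 8 * (2 ^ (2 * a + 54 + 10 * b) * 2 ^ (2 * b)) := by
          rw [hL, hT]
          ring
      _ ≤ 2 ^ (2 * a + 54 + 10 * b) * (9 * 2 ^ (2 * b)) := by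
          rw [mul_left_comm]
          gcongr
          norm_num

lemma baker_size_bounds {a b j L T Z : ℕ} (hT : T = 2 ^ (19 + 4 * b)) (hL : L = 2 ^ a * T)
    (hab : 2 * a + 60 + 12 * b ≤ 2 ^ b) (hj : j < 2 * a + 54 + 10 * b)
    (hZ : Z = 2 ^ j * (9 * 2 ^ (2 * b))) :
    (L * L * T : ℝ) ≤ exp (2 ^ b) ∧ (4 * Z : ℝ) ≤ exp (0.7 * 2 ^ b) ∧
      (46 * (2 ^ b * (L * Z)) : ℝ) ≤ 2 ^ (81 + 3 * a + 17 * b) := by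
  have hab' : ((2 * a + 60 + 12 * b : ℕ) : ℝ) ≤ 2 ^ b := by exact_mod_cast hab
  have hZle : (Z : ℝ) ≤ 9 * 2 ^ (2 * a + 53 + 12 * b) := by
    calc (Z : ℝ) = 9 * 2 ^ (j + 2 * b) := by
          rw [hZ]
          push_cast
          ring
      _ ≤ 9 * 2 ^ (2 * a + 53 + 12 * b) :=
          mul_le_mul_of_nonneg_left (pow_le_pow_right₀ one_le_two (by omega)) (by norm_num)
  refine ⟨?_, ?_, ?_⟩
  · calc (L * L * T : ℝ) = 2 ^ (2 * a + 57 + 12 * b) := by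
          rw [hL, hT]
          push_cast
          ring
      _ ≤ 2 ^ (2 * a + 60 + 12 * b) := pow_le_pow_right₀ one_le_two (by omega)
      _ ≤ exp (0.7 * 2 ^ b) := two_pow_le_exp_seven_tenths_mul hab'
      _ ≤ exp (2 ^ b) := exp_le_exp.mpr (by linarith [pow_pos (two_pos (α := ℝ)) b])
  · calc (4 * Z : ℝ) ≤ 2 ^ 7 * 2 ^ (2 * a + 53 + 12 * b) := by
          linarith [pow_pos (two_pos (α := ℝ)) (2 * a + 53 + 12 * b)]
      _ = 2 ^ (2 * a + 60 + 12 * b) := by ring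
      _ ≤ exp (0.7 * 2 ^ b) := two_pow_le_exp_seven_tenths_mul hab'
  · calc (46 * (2 ^ b * (L * Z)) : ℝ)
        ≤ 46 * (2 ^ b * (L * (9 * 2 ^ (2 * a + 53 + 12 * b)))) := by gcongr
      _ = 414 * 2 ^ (72 + 3 * a + 17 * b) := by
          rw [hL, hT]
          push_cast
          ring
      _ ≤ 2 ^ 9 * 2 ^ (72 + 3 * a + 17 * b) := by
          gcongr
          norm_num
      _ = 2 ^ (81 + 3 * a + 17 * b) := by ring

lemma frequency_le {L T U α t x : ℝ} (hα : 0 < α) (hα' : α ≤ 1.62) (ht : 0 < t) (ht' : t ≤ 1.84)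
    (hx : |x| ≤ 2) (hT : 0 ≤ T) (hTL : 32 * T ≤ L) (hU : 0 ≤ U) :
    L * log α + L * log t + T * |x| + T * exp (-U) ≤ 1.2 * L := by
  have hL : 0 ≤ L := by linarith
  have hexp : exp (-U) ≤ 1 := exp_le_one_iff.mpr (by linarith)
  have hlogα : L * log α ≤ L * 0.4853 := by
    gcongr
    exact log_le_of_le_golden hα hα'
  have hlogt : L * log t ≤ L * 0.6162 := by
    gcongr
    exact log_le_of_le_tribonacci ht ht'
  have hTx : T * |x| ≤ T * 2 := by gcongr
  have hTexp : T * exp (-U) ≤ T * 1 := by gcongr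
  linarith

theorem exp_neg_two_pow_le_abs_linearForm {κ : Type*} [Fintype κ] {e : κ → ℝ} {α t u v : ℝ}
    {a b n m : ℕ} (hκ : Fintype.card κ = 6) (he : e ≠ 0) (hα : 1 < α) (hα' : α ≤ 1.62)
    (ht : 1 < t) (ht' : t ≤ 1.84)
    (hindep : ∀ i j k l, α ^ i * t ^ j = α ^ k * t ^ l → i = k ∧ j = l)
    (hαsize : HasSize e α 2) (htsize : HasSize e t 3) (hu₀ : 0 < u) (hv₀ : 0 < v)
    (hu : HasSize e u (3 ^ 2 ^ a)) (hv : HasSize e v (3 ^ 2 ^ a)) (ha : 5 ≤ a) (hb : 9 ≤ b)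
    (hab : 2 * a + 60 + 12 * b ≤ 2 ^ b) (hn : 2 * log n ≤ 2 ^ b) (hmn : m ≤ n)
    (hn' : 2 ^ (a + 19 + 4 * b) ≤ n) (huv : |log (u / v)| ≤ 2) :
    exp (-2 ^ (81 + 3 * a + 17 * b)) ≤ |log (u / v) + n * log α - m * log t| := by
  by_contra! hlt
  obtain ⟨T, hT⟩ : ∃ T : ℕ, T = 2 ^ (19 + 4 * b) := ⟨_, rfl⟩
  obtain ⟨L, hL⟩ : ∃ L : ℕ, L = 2 ^ a * T := ⟨_, rfl⟩
  obtain ⟨U, hU⟩ : ∃ U : ℝ, U = 2 ^ (81 + 3 * a + 17 * b) := ⟨_, rfl⟩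
  rw [← hU] at hlt
  have hT₁ : 1 ≤ T := hT ▸ Nat.one_le_two_pow
  have hTL : 32 * T ≤ L := by
    rw [hL]
    gcongr
    exact Nat.pow_le_pow_right (n := 2) (by norm_num) ha
  have hTL' : (32 * T : ℝ) ≤ L := by exact_mod_cast hTL
  have hT₁' : (1 : ℝ) ≤ T := by exact_mod_cast hT₁
  have hLn : L ≤ n := by
    rw [hL, hT, ← pow_add, ← add_assoc]
    exact hn'
  have hLn' : (L : ℝ) ≤ n := by exact_mod_cast hLn
  have hmn' : (m : ℝ) ≤ n := by exact_mod_cast hmn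
  have hHT : ((3 : ℝ) ^ 2 ^ a) ^ T = 3 ^ L := by rw [← pow_mul, hL]
  have hprod : (2 : ℝ) ^ L * 3 ^ L * (3 ^ 2 ^ a) ^ T = 18 ^ L := by
    rw [hHT, ← mul_pow, ← mul_pow]
    norm_num
  obtain ⟨hcard, hJK, hJZ⟩ := baker_parameters hT hL (by omega) hab
  refine baker_method_linearForm (X := n ^ 2) (δ := T * exp (-U)) (W := 1.2 * L)
    (J := 2 * a + 54 + 10 * b) (S := 64 * L) (K := 2 ^ (b + 6) * L) (Z := 9 * 2 ^ (2 * b))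
    he hα ht hu₀ hv₀ hindep hαsize htsize hu hv (by norm_num) (by norm_num)
    (one_le_pow₀ (by norm_num)) hLn (one_le_pow₀ (by linarith)) (by nlinarith) (by nlinarith)
    (by omega) (by positivity) hT₁
    (hκ ▸ hcard) hJK hJZ (mul_le_mul_of_nonneg_left hlt.le T.cast_nonneg) ?_ rfl ?_
  · exact frequency_le (by linarith) hα' (by linarith) ht' huv T.cast_nonneg hTL'
      (by rw [hU]; positivity)
  · intro j hj ζ _ hζ
    obtain ⟨hN, hZB, hLZ⟩ := baker_size_bounds hT hL hab hj rfl
    rw [hprod, hHT, hκ]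
    exact liouvilleFactor_mul_extrapolationBound_lt_one (B := 2 ^ b)
      (by exact_mod_cast Nat.pow_le_pow_right (n := 2) (by norm_num) hb) (by omega) hTL
      (by push_cast; ring) (Nat.le_mul_of_pos_left _ (by positivity))
      (by rw [← mul_assoc, ← pow_succ']; exact hζ) (by push_cast; ring) (by nlinarith)
      (by rw [log_pow]; exact_mod_cast hn) hN hZB (hU ▸ hLZ) rfl rfl rfl

end LowerBound

section Gap

open Real

/-- The factor `1 - x ^ k` left over when a difference of two `k`-separated powers is divided by
the larger one; the exponent `0` encodes the absence of the smaller power, with factor `1`. -/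
noncomputable def gapFactor (x : ℝ) (k : ℕ) : ℝ := if k = 0 then 1 else 1 - x ^ k

variable {x : ℝ} {k : ℕ}

@[simp] lemma gapFactor_zero (x : ℝ) : gapFactor x 0 = 1 := if_pos rfl

lemma gapFactor_of_pos (hk : 0 < k) : gapFactor x k = 1 - x ^ k := if_neg hk.ne'

lemma gapFactor_le_one (hx : 0 ≤ x) : gapFactor x k ≤ 1 := by
  unfold gapFactor
  split_ifs
  · exact le_rfl
  · linarith [pow_nonneg hx k]

lemma one_sub_le_gapFactor (hx : 0 ≤ x) (hx' : x ≤ 1) : 1 - x ≤ gapFactor x k := by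
  unfold gapFactor
  split_ifs with hk
  · linarith
  · linarith [pow_le_of_le_one hx hx' hk]

lemma log_gapFactor_nonpos (hx : 0 ≤ x) (hx' : x ≤ 1) : log (gapFactor x k) ≤ 0 :=
  log_nonpos ((sub_nonneg.mpr hx').trans (one_sub_le_gapFactor hx hx')) (gapFactor_le_one hx)

lemma neg_log_one_sub_le (hx : 0 ≤ x) (hx' : x ≤ 0.62) : -log (1 - x) ≤ 2.7 * x := by
  have hpos : 0 < 1 - x := by linarith
  have hle : (1 - x)⁻¹ - 1 ≤ 2.7 * x := by
    rw [sub_le_iff_le_add, inv_le_iff_one_le_mul₀ hpos]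
    nlinarith
  linarith [one_sub_inv_le_log_of_pos hpos]

lemma neg_log_gapFactor_le_pow (hx : 0 ≤ x) (hx' : x ≤ 0.62) (hk : 0 < k) :
    -log (gapFactor x k) ≤ 2.7 * x ^ k := by
  rw [gapFactor_of_pos hk]
  exact neg_log_one_sub_le (pow_nonneg hx k)
    ((pow_le_of_le_one hx (by linarith) hk.ne').trans hx')

lemma neg_log_gapFactor_le (hx : 0 ≤ x) (hx' : x ≤ 0.62) : -log (gapFactor x k) ≤ 2.7 * x := by
  rcases k.eq_zero_or_pos with rfl | hk
  · simpa using mul_nonneg (by norm_num) hx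
  · exact (neg_log_gapFactor_le_pow hx hx' hk).trans
      (by gcongr; exact pow_le_of_le_one hx (by linarith) hk.ne')

lemma inv_pow_eq_exp_neg_mul_log (hx : 0 < x) (k : ℕ) : x⁻¹ ^ k = exp (-(k * log x)) := by
  rw [exp_neg, mul_comm, ← rpow_def_of_pos hx, rpow_natCast, inv_pow]

lemma HasSize.gapFactor {κ : Type*} [Fintype κ] {e : κ → ℝ} {ℓ : ℝ} {k : ℕ}
    (h : HasSize e x ℓ) (hℓ : 1 ≤ ℓ) : HasSize e (gapFactor x k) (2 * ℓ ^ k) := by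
  have hpow : 1 ≤ ℓ ^ k := one_le_pow₀ hℓ
  unfold FibTrib.gapFactor
  split_ifs
  · exact HasSize.one.mono (by linarith)
  · rw [show 1 - x ^ k = 1 + (-1 : ℤ) * x ^ k by push_cast; ring]
    exact (HasSize.one.add ((h.pow k).intCast_mul (-1))).mono (by norm_num; linarith)

end Gap

section Field

open Real goldenRatio

variable {κ : Type*} [Fintype κ] {e : κ → ℝ} {x ℓ t : ℝ}

lemma hasSize_of_matrix (M : Matrix κ κ ℤ) (hℓ : 0 ≤ ℓ) (hnorm : ∀ i, (∑ j, |M i j| : ℝ) ≤ ℓ)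
    (hM : ∀ i, ∑ j, (M i j : ℝ) * e j = x * e i) : HasSize e x ℓ := by
  refine ⟨M, ?_, funext fun i ↦ by simpa [Matrix.mulVec, dotProduct] using hM i⟩
  lift ℓ to NNReal using hℓ
  rw [Matrix.linfty_opNorm_def]
  norm_cast
  refine Finset.sup_le fun i _ ↦ ?_
  rw [← NNReal.coe_le_coe]
  push_cast
  simpa [Int.norm_eq_abs] using hnorm i

/-- The `ℤ`-basis of the order `ℤ[φ, t]` made of the products of `1, φ` and `1, t, t²`. -/
noncomputable def orderBasis (t : ℝ) : Fin 6 → ℝ := ![1, t, t ^ 2, φ, φ * t, φ * t ^ 2]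

lemma orderBasis_ne_zero (t : ℝ) : orderBasis t ≠ 0 :=
  Function.ne_iff.mpr ⟨0, by simp [orderBasis]⟩

lemma hasSize_goldenRatio (t : ℝ) : HasSize (orderBasis t) φ 2 := by
  refine hasSize_of_matrix !![0, 0, 0, 1, 0, 0; 0, 0, 0, 0, 1, 0; 0, 0, 0, 0, 0, 1;
    1, 0, 0, 1, 0, 0; 0, 1, 0, 0, 1, 0; 0, 0, 1, 0, 0, 1] (by norm_num) ?_ ?_ <;> intro i
  · fin_cases i <;> simp [Fin.sum_univ_succ] <;> norm_num
  · fin_cases i <;> simp [orderBasis, Fin.sum_univ_succ]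
    · linear_combination -goldenRatio_sq
    · linear_combination -t * goldenRatio_sq
    · linear_combination -t ^ 2 * goldenRatio_sq

lemma hasSize_tribonacci (ht : t ^ 3 = t ^ 2 + t + 1) : HasSize (orderBasis t) t 3 := by
  refine hasSize_of_matrix !![0, 1, 0, 0, 0, 0; 0, 0, 1, 0, 0, 0; 1, 1, 1, 0, 0, 0;
    0, 0, 0, 0, 1, 0; 0, 0, 0, 0, 0, 1; 0, 0, 0, 1, 1, 1] (by norm_num) ?_ ?_ <;> intro i
  · fin_cases i <;> simp [Fin.sum_univ_succ] <;> norm_num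
  · fin_cases i <;> simp [orderBasis, Fin.sum_univ_succ]
    · ring
    · linear_combination -ht
    · ring
    · ring
    · linear_combination -φ * ht

lemma hasSize_inv_goldenRatio (t : ℝ) : HasSize (orderBasis t) φ⁻¹ 3 := by
  rw [inv_goldenRatio, ← one_sub_goldenConj, show -(1 - φ) = φ + (-1 : ℤ) * 1 by push_cast; ring]
  exact ((hasSize_goldenRatio t).add (HasSize.one.intCast_mul (-1))).mono (by norm_num)

lemma inv_tribonacci (ht : t ^ 3 = t ^ 2 + t + 1) : t⁻¹ = t ^ 2 - t - 1 :=
  inv_eq_of_mul_eq_one_right (by linear_combination ht)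

lemma hasSize_inv_tribonacci (ht : t ^ 3 = t ^ 2 + t + 1) : HasSize (orderBasis t) t⁻¹ 3 := by
  rw [inv_tribonacci ht]
  refine hasSize_of_matrix !![-1, -1, 1, 0, 0, 0; 1, 0, 0, 0, 0, 0; 0, 1, 0, 0, 0, 0;
    0, 0, 0, -1, -1, 1; 0, 0, 0, 1, 0, 0; 0, 0, 0, 0, 1, 0] (by norm_num) ?_ ?_ <;> intro i
  · fin_cases i <;> simp [Fin.sum_univ_succ] <;> norm_num
  · fin_cases i <;> simp [orderBasis, Fin.sum_univ_succ]
    · ring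
    · linear_combination -ht
    · linear_combination -t * ht
    · ring
    · linear_combination -φ * ht
    · linear_combination -φ * t * ht

lemma le_goldenRatio : 1.618 ≤ φ := by
  have : 2.236 ≤ √5 := le_sqrt_of_sq_le (by norm_num)
  rw [goldenRatio]
  linarith

lemma goldenRatio_le : φ ≤ 1.6181 := by
  have : √5 ≤ 2.2362 := sqrt_le_iff.mpr (by norm_num)
  rw [goldenRatio]
  linarith

lemma le_tribonacci (ht : t ^ 3 = t ^ 2 + t + 1) : 1.839 ≤ t := by
  by_contra! hlt
  nlinarith [mul_nonneg (sub_nonneg.mpr hlt.le) (sq_nonneg (t + 0.4195))]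

lemma tribonacci_le (ht : t ^ 3 = t ^ 2 + t + 1) : t ≤ 1.8394 := by
  by_contra! hlt
  have hfac : (t - 1) ^ 2 * (t + 1) = 2 := by linear_combination ht
  have : (1.8394 - 1) ^ 2 * (1.8394 + 1) ≤ (t - 1) ^ 2 * (t + 1) := by gcongr
  norm_num [hfac] at this

lemma inv_goldenRatio_le : φ⁻¹ ≤ 0.62 :=
  (inv_anti₀ (by norm_num) le_goldenRatio).trans (by norm_num)

lemma inv_tribonacci_le (ht : t ^ 3 = t ^ 2 + t + 1) : t⁻¹ ≤ 0.544 :=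
  (inv_anti₀ (by norm_num) (le_tribonacci ht)).trans (by norm_num)

lemma le_log_goldenRatio : 0.479 ≤ log φ := by
  have h : log (2 ^ 9) ≤ log (φ ^ 13) := log_le_log (by norm_num) <| calc
    (2 : ℝ) ^ 9 ≤ 1.618 ^ 13 := by norm_num
    _ ≤ φ ^ 13 := by gcongr; exact le_goldenRatio
  rw [log_pow, log_pow] at h
  push_cast at h
  linarith [log_two_gt_d9]

lemma le_log_tribonacci (ht : t ^ 3 = t ^ 2 + t + 1) : 0.6 ≤ log t := by
  have h : log (2 ^ 7) ≤ log (t ^ 8) := log_le_log (by norm_num) <| calc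
    (2 : ℝ) ^ 7 ≤ 1.839 ^ 8 := by norm_num
    _ ≤ t ^ 8 := by gcongr; exact le_tribonacci ht
  rw [log_pow, log_pow] at h
  push_cast at h
  linarith [log_two_gt_d9]

end Field

section NearSolution

open Real goldenRatio

variable {t : ℝ} {n m i j a b k : ℕ}

/-- The linear form in logarithms that is small for a solution of `F_n - F_i' = T_m - T_j'` with
`i = n - i'` and `j = m - j'`, where `i = 0` or `j = 0` means that the corresponding smaller term
is dropped. The fraction is the quotient of the Binet coefficients `1 / (2φ - 1)` and
`t / (3t² - 2t - 1)`. -/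
noncomputable def linForm (t : ℝ) (n m i j : ℕ) : ℝ :=
  n * log φ - m * log t + log ((3 * t ^ 2 - 2 * t - 1) / ((2 * φ - 1) * t))
    + log (gapFactor φ⁻¹ i) - log (gapFactor t⁻¹ j)

section Baker

lemma binet_quotient_bounds (ht : t ^ 3 = t ^ 2 + t + 1) :
    1 ≤ (3 * t ^ 2 - 2 * t - 1) / ((2 * φ - 1) * t) ∧
      (3 * t ^ 2 - 2 * t - 1) / ((2 * φ - 1) * t) ≤ 4 / 3 := by
  have := le_tribonacci ht
  have := tribonacci_le ht
  have := le_goldenRatio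
  have := goldenRatio_le
  have hpos : 0 < (2 * φ - 1) * t := by nlinarith
  rw [one_le_div hpos, div_le_iff₀ hpos]
  constructor <;> nlinarith

lemma gapFactor_pos {x : ℝ} (hx : 0 ≤ x) (hx' : x < 1) : 0 < gapFactor x k :=
  (sub_pos.mpr hx').trans_le (one_sub_le_gapFactor hx hx'.le)

lemma gapFactor_inv_goldenRatio_pos : 0 < gapFactor φ⁻¹ k :=
  gapFactor_pos (inv_pos.mpr goldenRatio_pos).le (by linarith [inv_goldenRatio_le])

lemma gapFactor_inv_tribonacci_pos (ht : t ^ 3 = t ^ 2 + t + 1) : 0 < gapFactor t⁻¹ k :=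
  gapFactor_pos (inv_nonneg.mpr (by linarith [le_tribonacci ht]))
    (by linarith [inv_tribonacci_le ht])

lemma linForm_eq_log_div (ht : t ^ 3 = t ^ 2 + t + 1) :
    linForm t n m i j = log (gapFactor φ⁻¹ i * (3 * t ^ 2 - 2 * t - 1) /
      (gapFactor t⁻¹ j * ((2 * φ - 1) * t))) + n * log φ - m * log t := by
  rw [linForm, mul_div_mul_comm, log_mul (div_ne_zero gapFactor_inv_goldenRatio_pos.ne'
    (gapFactor_inv_tribonacci_pos ht).ne') (by linarith [(binet_quotient_bounds ht).1]),
    log_div gapFactor_inv_goldenRatio_pos.ne' (gapFactor_inv_tribonacci_pos ht).ne']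
  ring

lemma abs_log_gapFactor_div_le (ht : t ^ 3 = t ^ 2 + t + 1) :
    |log (gapFactor φ⁻¹ i * (3 * t ^ 2 - 2 * t - 1) /
      (gapFactor t⁻¹ j * ((2 * φ - 1) * t)))| ≤ 2 := by
  obtain ⟨hle, hge⟩ := binet_quotient_bounds ht
  have hlog := log_le_sub_one_of_pos (by linarith : 0 < (3 * t ^ 2 - 2 * t - 1) / ((2 * φ - 1) * t))
  have hlog' := log_nonneg hle
  have hφ : 0 ≤ φ⁻¹ := (inv_pos.mpr goldenRatio_pos).le
  have hφ' := inv_goldenRatio_le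
  have htinv : 0 ≤ t⁻¹ := inv_nonneg.mpr (by linarith [le_tribonacci ht])
  have htinv' := inv_tribonacci_le ht
  have hform := linForm_eq_log_div (n := 0) (m := 0) (i := i) (j := j) ht
  simp only [linForm, Nat.cast_zero, zero_mul, sub_zero, zero_add, add_zero] at hform
  rw [← hform, abs_le]
  constructor <;>
    linarith [neg_log_gapFactor_le hφ hφ' (k := i), log_gapFactor_nonpos hφ (by linarith) (k := i),
      neg_log_gapFactor_le htinv (by linarith) (k := j),
      log_gapFactor_nonpos htinv (by linarith) (k := j)]

lemma hasSize_num (ht : t ^ 3 = t ^ 2 + t + 1) (hi : i + 4 ≤ k) :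
    HasSize (orderBasis t) (gapFactor φ⁻¹ i * (3 * t ^ 2 - 2 * t - 1)) (3 ^ k) := by
  have hsize := ((((hasSize_tribonacci ht).pow 2).intCast_mul 3).add
    ((hasSize_tribonacci ht).intCast_mul (-2))).add (HasSize.one.intCast_mul (-1))
  have hpow : (3 : ℝ) ^ (i + 4) ≤ 3 ^ k := pow_le_pow_right₀ (by norm_num) hi
  convert (((hasSize_inv_goldenRatio t).gapFactor (by norm_num) (k := i)).mul hsize).mono ?_ using 1
  · push_cast
    ring
  · rw [pow_add] at hpow
    norm_num
    linarith [pow_pos (by norm_num : (0 : ℝ) < 3) i]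

lemma hasSize_denom (ht : t ^ 3 = t ^ 2 + t + 1) (hj : j + 4 ≤ k) :
    HasSize (orderBasis t) (gapFactor t⁻¹ j * ((2 * φ - 1) * t)) (3 ^ k) := by
  have hsize := (((hasSize_goldenRatio t).intCast_mul 2).add (HasSize.one.intCast_mul (-1))).mul
    (hasSize_tribonacci ht)
  have hpow : (3 : ℝ) ^ (j + 4) ≤ 3 ^ k := pow_le_pow_right₀ (by norm_num) hj
  convert (((hasSize_inv_tribonacci ht).gapFactor (by norm_num) (k := j)).mul hsize).mono ?_ using 1
  · push_cast
    ring
  · rw [pow_add] at hpow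
    norm_num
    linarith [pow_pos (by norm_num : (0 : ℝ) < 3) j]

theorem exp_neg_two_pow_le_abs_linForm (ht : t ^ 3 = t ^ 2 + t + 1) (hi : i + 4 ≤ 2 ^ a)
    (hj : j + 4 ≤ 2 ^ a) (ha : 5 ≤ a) (hb : 9 ≤ b) (hab : 2 * a + 60 + 12 * b ≤ 2 ^ b)
    (hn : 2 * log n ≤ 2 ^ b) (hmn : m ≤ n) (hn' : 2 ^ (a + 19 + 4 * b) ≤ n) :
    exp (-2 ^ (81 + 3 * a + 17 * b)) ≤ |linForm t n m i j| := by
  have ht₁ := le_tribonacci ht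
  have hφ₁ := le_goldenRatio
  rw [linForm_eq_log_div ht]
  refine exp_neg_two_pow_le_abs_linearForm (Fintype.card_fin 6) (orderBasis_ne_zero t)
    one_lt_goldenRatio (goldenRatio_le.trans (by norm_num)) (by linarith)
    ((tribonacci_le ht).trans (by norm_num)) ?_ (hasSize_goldenRatio t) (hasSize_tribonacci ht)
    (mul_pos gapFactor_inv_goldenRatio_pos (by nlinarith))
    (mul_pos (gapFactor_inv_tribonacci_pos ht) (by nlinarith)) (hasSize_num ht hi)
    (hasSize_denom ht hj) ha hb hab hn hmn hn' (abs_log_gapFactor_div_le ht)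
  exact fun _ _ _ _ ↦ eq_and_eq_of_pow_mul_pow_eq one_lt_goldenRatio (by linarith)
    (goldenRatio_pow_succ_ne_tribonacci_pow ht)

end Baker

section GapPrinciple

/-- What the proof retains of a solution of `F_n - F_(n-a) = T_m - T_(m-b)`. -/
structure IsNearSolution (t : ℝ) (n m a b : ℕ) : Prop where
  one_le_left : 1 ≤ a
  left_le : a ≤ n
  one_le_right : 1 ≤ b
  right_le : b ≤ m
  le : m ≤ n
  mul_log_le : m * log t ≤ n * log φ + 2
  abs_linForm_le : |linForm t n m a b| ≤ 12 * exp (-(n * log φ))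

lemma le_add_five_of_exp_neg_le {U R : ℝ} (h : exp (-U) ≤ 100 * exp (-R)) : R ≤ U + 5 := by
  have h₁₀₀ : (100 : ℝ) ≤ exp 5 := calc
    (100 : ℝ) ≤ 2.7 ^ 5 := by norm_num
    _ ≤ exp 1 ^ 5 := by gcongr; linarith [exp_one_gt_d9]
    _ = exp 5 := by rw [← exp_nat_mul]; norm_num
  have : exp (-U) ≤ exp (5 - R) := calc
    exp (-U) ≤ 100 * exp (-R) := h
    _ ≤ exp 5 * exp (-R) := by gcongr
    _ = exp (5 - R) := by rw [← exp_add, sub_eq_add_neg]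
  linarith [exp_le_exp.mp this]

namespace IsNearSolution

variable {U U' : ℝ}

lemma exp_neg_le_left (hS : IsNearSolution t n m a b) :
    exp (-(n * log φ)) ≤ exp (-(a * log φ)) := by
  have hle : (a : ℝ) ≤ n := by exact_mod_cast hS.left_le
  have hlog := le_log_goldenRatio
  gcongr

lemma exp_neg_le_right (hS : IsNearSolution t n m a b) (ht : t ^ 3 = t ^ 2 + t + 1) :
    exp (-(n * log φ)) ≤ 7.4 * exp (-(b * log t)) := by
  have hle : b * log t ≤ m * log t := by
    have hlog := le_log_tribonacci ht
    gcongr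
    exact_mod_cast hS.right_le
  have h₂ : exp 2 ≤ 7.4 := calc
    exp 2 = exp 1 ^ 2 := by rw [← exp_nat_mul]; norm_num
    _ ≤ 2.72 ^ 2 := by gcongr; linarith [exp_one_lt_d9]
    _ ≤ 7.4 := by norm_num
  calc exp (-(n * log φ)) ≤ exp (2 + -(b * log t)) :=
        exp_le_exp.mpr (by linarith [hS.mul_log_le])
    _ = exp 2 * exp (-(b * log t)) := exp_add _ _
    _ ≤ 7.4 * exp (-(b * log t)) := by gcongr

lemma log_gapFactor_left_mem (hS : IsNearSolution t n m a b) :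
    log (gapFactor φ⁻¹ a) ∈ Set.Icc (-(2.7 * exp (-(a * log φ)))) 0 := by
  have hφ : 0 ≤ φ⁻¹ := (inv_pos.mpr goldenRatio_pos).le
  have hφ' := inv_goldenRatio_le
  refine ⟨?_, log_gapFactor_nonpos hφ (by linarith)⟩
  rw [← inv_pow_eq_exp_neg_mul_log goldenRatio_pos]
  linarith [neg_log_gapFactor_le_pow hφ hφ' hS.one_le_left]

lemma log_gapFactor_right_mem (hS : IsNearSolution t n m a b) (ht : t ^ 3 = t ^ 2 + t + 1) :
    log (gapFactor t⁻¹ b) ∈ Set.Icc (-(2.7 * exp (-(b * log t)))) 0 := by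
  have ht₀ : 0 < t := by linarith [le_tribonacci ht]
  have ht' : t⁻¹ ≤ 0.62 := (inv_tribonacci_le ht).trans (by norm_num)
  refine ⟨?_, log_gapFactor_nonpos (inv_pos.mpr ht₀).le (by linarith)⟩
  rw [← inv_pow_eq_exp_neg_mul_log ht₀]
  linarith [neg_log_gapFactor_le_pow (inv_pos.mpr ht₀).le ht' hS.one_le_right]

lemma mul_log_le_of_full (hS : IsNearSolution t n m a b) (hU : exp (-U) ≤ |linForm t n m a b|) :
    n * log φ ≤ U + 5 := by
  refine le_add_five_of_exp_neg_le (hU.trans (hS.abs_linForm_le.trans ?_))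
  gcongr
  norm_num

lemma mul_log_le_of_left (hS : IsNearSolution t n m a b) (ht : t ^ 3 = t ^ 2 + t + 1)
    (hU : exp (-U) ≤ |linForm t n m a 0|) : b * log t ≤ U + 5 := by
  have hfull := abs_le.mp hS.abs_linForm_le
  obtain ⟨hlow, hup⟩ := hS.log_gapFactor_right_mem ht
  have hn := hS.exp_neg_le_right ht
  refine le_add_five_of_exp_neg_le (hU.trans (abs_le.mpr ?_))
  simp only [linForm, gapFactor_zero, log_one, sub_zero] at hfull ⊢
  constructor <;> linarith

lemma mul_log_le_of_right (hS : IsNearSolution t n m a b) (hU : exp (-U) ≤ |linForm t n m 0 b|) :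
    a * log φ ≤ U + 5 := by
  have hfull := abs_le.mp hS.abs_linForm_le
  obtain ⟨hlow, hup⟩ := hS.log_gapFactor_left_mem
  have hn := hS.exp_neg_le_left
  refine le_add_five_of_exp_neg_le (hU.trans (abs_le.mpr ?_))
  simp only [linForm, gapFactor_zero, log_one, add_zero] at hfull ⊢
  constructor <;> linarith

lemma mul_log_le_or_of_empty (hS : IsNearSolution t n m a b) (ht : t ^ 3 = t ^ 2 + t + 1)
    (hU : exp (-U) ≤ |linForm t n m 0 0|) : a * log φ ≤ U + 5 ∨ b * log t ≤ U + 5 := by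
  have hfull := abs_le.mp hS.abs_linForm_le
  obtain ⟨hlow, hup⟩ := hS.log_gapFactor_left_mem
  obtain ⟨hlow', hup'⟩ := hS.log_gapFactor_right_mem ht
  have hn := hS.exp_neg_le_left
  have hn' := hS.exp_neg_le_right ht
  simp only [linForm, gapFactor_zero, log_one, add_zero, sub_zero] at hfull hU
  rcases le_total (exp (-(a * log φ))) (exp (-(b * log t))) with hle | hle
  · refine .inr (le_add_five_of_exp_neg_le (hU.trans (abs_le.mpr ?_)))
    constructor <;> linarith
  · refine .inl (le_add_five_of_exp_neg_le (hU.trans (abs_le.mpr ?_)))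
    constructor <;> linarith

theorem mul_log_le_and_mul_log_le (hS : IsNearSolution t n m a b) (ht : t ^ 3 = t ^ 2 + t + 1)
    (hUU' : U ≤ U') (hempty : exp (-U) ≤ |linForm t n m 0 0|)
    (hleft : a * log φ ≤ U + 5 → exp (-U') ≤ |linForm t n m a 0|)
    (hright : b * log t ≤ U + 5 → exp (-U') ≤ |linForm t n m 0 b|) :
    a * log φ ≤ U' + 5 ∧ b * log t ≤ U' + 5 := by
  rcases hS.mul_log_le_or_of_empty ht hempty with ha | hb
  · exact ⟨by linarith, hS.mul_log_le_of_left ht (hleft ha)⟩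
  · exact ⟨hS.mul_log_le_of_right (hright hb), by linarith⟩

end IsNearSolution

end GapPrinciple

section Bootstrap

lemma add_four_le_two_pow {x k k' : ℕ} {l : ℝ} (hk : 10 ≤ k) (hk' : k' = k + 2) (hl : 0.479 ≤ l)
    (h : x * l ≤ 2 ^ k + 5) : x + 4 ≤ 2 ^ k' := by
  have hpow : (2 : ℝ) ^ 10 ≤ 2 ^ k := pow_le_pow_right₀ (by norm_num) hk
  have hxl : (x : ℝ) * 0.479 ≤ x * l := by gcongr
  have : (x : ℝ) + 4 ≤ 2 ^ k' := by
    rw [hk', pow_add]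
    norm_num at hpow ⊢
    linarith
  exact_mod_cast this

lemma two_mul_log_le {k : ℕ} (hn : 0 < n) (h : n ≤ 2 ^ k) : 2 * log n ≤ 1.3863 * k := by
  have hlog : log n ≤ log (2 ^ k) :=
    log_le_log (by exact_mod_cast hn) (by exact_mod_cast h)
  rw [log_pow] at hlog
  have : k * log 2 ≤ k * 0.69315 := by
    gcongr
    linarith [log_two_lt_d9]
  linarith

namespace IsNearSolution

lemma le_two_pow_of_gaps_le (hS : IsNearSolution t n m a b) (ht : t ^ 3 = t ^ 2 + t + 1) {k B : ℕ}
    (hk : 5 ≤ k) (hB : 9 ≤ B) (ha : a + 4 ≤ 2 ^ k) (hb : b + 4 ≤ 2 ^ k)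
    (hkB : 2 * k + 60 + 12 * B ≤ 2 ^ B) (hn : 2 * log n ≤ 2 ^ B) :
    n ≤ 2 ^ (83 + 3 * k + 17 * B) := by
  by_contra! hlt
  have hn' : 2 ^ (k + 19 + 4 * B) ≤ n :=
    (Nat.pow_le_pow_right (by norm_num) (by omega)).trans hlt.le
  have hfull := hS.mul_log_le_of_full
    (exp_neg_two_pow_le_abs_linForm ht ha hb hk hB hkB hn hS.le hn')
  have := add_four_le_two_pow (k' := 83 + 3 * k + 17 * B) (by omega) (by ring) le_log_goldenRatio
    hfull
  omega

lemma le_two_pow_of_log_le (hS : IsNearSolution t n m a b) (ht : t ^ 3 = t ^ 2 + t + 1) {B : ℕ}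
    (hB : 9 ≤ B) (hB' : 814 + 148 * B ≤ 2 ^ B) (hn : 2 * log n ≤ 2 ^ B) :
    n ≤ 2 ^ (1214 + 221 * B) := by
  by_contra! hlt
  have hn' (k : ℕ) (hk : k ≤ 377 + 68 * B) : 2 ^ (k + 19 + 4 * B) ≤ n :=
    (Nat.pow_le_pow_right (by norm_num) (by omega)).trans hlt.le
  have hlog := le_log_goldenRatio
  have hlog' := le_log_tribonacci ht
  have hgap {x : ℕ} {l : ℝ} (hl : 0.479 ≤ l) (h : x * l ≤ 2 ^ (96 + 17 * B) + 5) :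
      x + 4 ≤ 2 ^ (98 + 17 * B) := add_four_le_two_pow (by omega) (by ring) hl h
  have hexp : 81 + 3 * (98 + 17 * B) + 17 * B = 375 + 68 * B := by ring
  obtain ⟨ha, hb⟩ := hS.mul_log_le_and_mul_log_le ht (U := 2 ^ (96 + 17 * B))
    (U' := 2 ^ (375 + 68 * B)) (pow_le_pow_right₀ (by norm_num) (by omega))
    (exp_neg_two_pow_le_abs_linForm (a := 5) ht (by norm_num) (by norm_num) le_rfl hB (by omega) hn
      hS.le (hn' 5 (by omega)))
    (fun ha ↦ hexp ▸ exp_neg_two_pow_le_abs_linForm ht (hgap hlog ha)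
      ((Nat.le_add_left 4 a).trans (hgap hlog ha)) (by omega) hB (by omega) hn hS.le
      (hn' _ (by omega)))
    (fun hb ↦ hexp ▸ exp_neg_two_pow_le_abs_linForm ht
      ((Nat.le_add_left 4 b).trans (hgap (by linarith) hb)) (hgap (by linarith) hb) (by omega) hB
      (by omega) hn hS.le (hn' _ (by omega)))
  have hle := hS.le_two_pow_of_gaps_le ht (k := 377 + 68 * B) (by omega) hB
    (add_four_le_two_pow (by omega) (by ring) hlog ha)
    (add_four_le_two_pow (by omega) (by ring) (by linarith) hb) (by omega) hn
  rw [show 83 + 3 * (377 + 68 * B) + 17 * B = 1214 + 221 * B by ring] at hle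
  omega

lemma two_mul_log_le_two_pow (hS : IsNearSolution t n m a b) (ht : t ^ 3 = t ^ 2 + t + 1) :
    2 * log n ≤ 2 ^ 13 := by
  have hstep (j : ℕ) (hj : 2 * log n ≤ 2 ^ (13 + (j + 1))) : 2 * log n ≤ 2 ^ (13 + j) := by
    have hpow : 614 * j + 12600 ≤ 2 ^ (14 + j) := by
      clear hj
      induction j with
      | zero => norm_num
      | succ j ih => rw [← add_assoc, pow_succ]; omega
    have hle := hS.le_two_pow_of_log_le ht (B := 13 + (j + 1)) (by omega)
      (by rw [show 13 + (j + 1) = 14 + j by ring]; omega) hj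
    have hlog := two_mul_log_le (hS.one_le_left.trans hS.left_le) hle
    have hpow' : (614 * j + 12600 : ℝ) ≤ 2 * 2 ^ (13 + j) := by
      rw [← pow_succ', show 13 + j + 1 = 14 + j by ring]
      exact_mod_cast hpow
    push_cast at hlog
    linarith [j.cast_nonneg (α := ℝ)]
  obtain ⟨j, hj⟩ := pow_unbounded_of_one_lt (2 * log n) (by norm_num : (1 : ℝ) < 2)
  have hj' : 2 * log n ≤ 2 ^ (13 + j) :=
    hj.le.trans (pow_le_pow_right₀ (by norm_num) (by omega))
  clear hj
  induction j with
  | zero => exact hj'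
  | succ j ih => exact ih (hstep j hj')

theorem le_two_pow_4087 (hS : IsNearSolution t n m a b) (ht : t ^ 3 = t ^ 2 + t + 1) :
    n ≤ 2 ^ 4087 := by
  simpa only [Nat.reduceMul, Nat.reduceAdd] using hS.le_two_pow_of_log_le ht (B := 13) (by norm_num)
    (by norm_num) (hS.two_mul_log_le_two_pow ht)

end IsNearSolution

end Bootstrap

end NearSolution

open Real goldenRatio

section Binet

lemma two_mul_goldenRatio_sub_one : 2 * φ - 1 = √5 := by
  rw [goldenRatio]
  ring

lemma abs_fib_sub_le (k : ℕ) : |(Nat.fib k : ℝ) - φ ^ k / (2 * φ - 1)| ≤ 0.45 := by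
  have h5 : 2.236 ≤ √5 := le_sqrt_of_sq_le (by norm_num)
  have hψ : |ψ| ^ k ≤ 1 := pow_le_one₀ (abs_nonneg _)
    (abs_le.mpr ⟨neg_one_lt_goldenConj.le, goldenConj_neg.le.trans zero_le_one⟩)
  rw [two_mul_goldenRatio_sub_one, coe_fib_eq, ← sub_div, sub_sub_cancel_left, abs_div, abs_neg,
    abs_pow, abs_of_nonneg (sqrt_nonneg 5), div_le_iff₀ (by linarith)]
  linarith

/-- The difference between `T_k` and the dominant term of its Binet formula. -/
noncomputable def tribError (t : ℝ) (k : ℕ) : ℝ :=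
  trib k - t / (3 * t ^ 2 - 2 * t - 1) * t ^ k

variable {t : ℝ}

lemma trib_add_two_add (ht : t ^ 3 = t ^ 2 + t + 1) (k : ℕ) :
    (trib (k + 2) : ℝ) + (t - 1) * trib (k + 1) + t⁻¹ * trib k = t ^ (k + 1) := by
  rw [inv_tribonacci ht]
  induction k with
  | zero => simp [trib]
  | succ k ih =>
    have hrec : trib (k + 1 + 2) = trib (k + 2) + trib (k + 1) + trib k := rfl
    rw [hrec, pow_succ t (k + 1), ← ih, show k + 1 + 1 = k + 2 from rfl]
    push_cast
    linear_combination -(trib k : ℝ) * ht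

lemma tribError_add_two (ht : t ^ 3 = t ^ 2 + t + 1) (k : ℕ) :
    tribError t (k + 2) = -(t - 1) * tribError t (k + 1) - t⁻¹ * tribError t k := by
  have ht₁ := le_tribonacci ht
  have hden : 3 * t ^ 2 - 2 * t - 1 ≠ 0 := by nlinarith
  have hpow : t / (3 * t ^ 2 - 2 * t - 1) * t ^ k * (t ^ 2 + (t - 1) * t + t⁻¹) = t ^ (k + 1) := by
    rw [inv_tribonacci ht,
      show t ^ 2 + (t - 1) * t + (t ^ 2 - t - 1) = 3 * t ^ 2 - 2 * t - 1 by ring,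
      mul_right_comm, div_mul_cancel₀ _ hden, pow_succ']
  have hrec := trib_add_two_add ht k
  simp only [tribError]
  rw [pow_succ t (k + 1), pow_succ t k] at *
  linear_combination hrec - hpow

lemma tribError_energy_le (ht : t ^ 3 = t ^ 2 + t + 1) (k : ℕ) :
    tribError t (k + 1) ^ 2 + (t - 1) * tribError t (k + 1) * tribError t k
      + t⁻¹ * tribError t k ^ 2 ≤ 0.1016 := by
  have ht₁ := le_tribonacci ht
  have ht₂ := tribonacci_le ht
  have hinv := inv_tribonacci_le ht
  have hinv₀ : 0 ≤ t⁻¹ := inv_nonneg.mpr (by linarith)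
  induction k with
  | zero =>
    obtain ⟨c, hc⟩ : ∃ c, c = t / (3 * t ^ 2 - 2 * t - 1) := ⟨_, rfl⟩
    have hden : 0 < 3 * t ^ 2 - 2 * t - 1 := by nlinarith
    have hc₁ : 0.336 ≤ c := by rw [hc, le_div_iff₀ hden]; nlinarith
    have hc₂ : c ≤ 0.3365 := by rw [hc, div_le_iff₀ hden]; nlinarith
    have hct : 0.617 ≤ c * t := by nlinarith
    have hct' : c * t ≤ 0.6196 := by nlinarith
    have hsq : (1 - c * t) ^ 2 ≤ 0.383 ^ 2 := by gcongr <;> linarith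
    have hcross : 0.839 * 0.3804 * 0.336 ≤ (t - 1) * (1 - c * t) * c :=
      mul_le_mul (mul_le_mul (by linarith) (by linarith) (by norm_num) (by linarith)) hc₁
        (by norm_num) (mul_nonneg (by linarith) (by linarith))
    have hinvc : t⁻¹ * c ^ 2 ≤ 0.544 * 0.3365 ^ 2 := by gcongr
    simp only [tribError, ← hc, trib]
    norm_num
    linarith
  | succ k ih =>
    have hstep : tribError t (k + 1 + 1) ^ 2 + (t - 1) * tribError t (k + 1 + 1) *
        tribError t (k + 1) + t⁻¹ * tribError t (k + 1) ^ 2 =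
        t⁻¹ * (tribError t (k + 1) ^ 2 + (t - 1) * tribError t (k + 1) * tribError t k
          + t⁻¹ * tribError t k ^ 2) := by
      rw [show k + 1 + 1 = k + 2 from rfl, tribError_add_two ht]
      ring
    rw [hstep]
    nlinarith

lemma abs_tribError_le (ht : t ^ 3 = t ^ 2 + t + 1) (k : ℕ) : |tribError t k| ≤ 0.54 := by
  have ht₁ := le_tribonacci ht
  have ht₂ := tribonacci_le ht
  have hsq : (t⁻¹ - (t - 1) ^ 2 / 4) * tribError t k ^ 2 ≤ 0.1016 := by
    linarith [sq_nonneg (tribError t (k + 1) + (t - 1) / 2 * tribError t k),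
      tribError_energy_le ht k]
  have hdisc : 0.366 ≤ t⁻¹ - (t - 1) ^ 2 / 4 := by
    rw [inv_tribonacci ht]
    nlinarith
  have hle : tribError t k ^ 2 ≤ 0.54 ^ 2 := by nlinarith [sq_nonneg (tribError t k)]
  exact abs_le_of_sq_le_sq hle (by norm_num)

end Binet

section NearSolution

lemma log_sub_log_le {x y d : ℝ} (hd : 0 < d) (hx : d ≤ x) (hy : d ≤ y) :
    log x - log y ≤ |x - y| / d := by
  have hy₀ := hd.trans_le hy
  rw [← log_div (hd.trans_le hx).ne' hy₀.ne']
  calc log (x / y) ≤ x / y - 1 := log_le_sub_one_of_pos (div_pos (hd.trans_le hx) hy₀)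
    _ = (x - y) / y := by rw [sub_div, div_self hy₀.ne']
    _ ≤ |x - y| / d := div_le_div₀ (abs_nonneg _) (le_abs_self _) hd hy

lemma abs_log_sub_log_le {x y d : ℝ} (hd : 0 < d) (hx : d ≤ x) (hy : d ≤ y) :
    |log x - log y| ≤ |x - y| / d :=
  abs_sub_le_iff.mpr ⟨log_sub_log_le hd hx hy, abs_sub_comm x y ▸ log_sub_log_le hd hy hx⟩

lemma pow_mul_gapFactor_inv {x : ℝ} (hx : x ≠ 0) {k n : ℕ} (hk : k < n) :
    x ^ n * gapFactor x⁻¹ (n - k) = x ^ n - x ^ k := by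
  rw [gapFactor_of_pos (by omega), mul_sub, mul_one, inv_pow_sub₀ hx hk.le]
  field_simp

variable {t : ℝ} {n m n₁ m₁ i j : ℕ}

lemma linForm_eq_log_sub_log (ht : t ^ 3 = t ^ 2 + t + 1) :
    linForm t n m i j = log (φ ^ n * gapFactor φ⁻¹ i / (2 * φ - 1)) -
      log (t / (3 * t ^ 2 - 2 * t - 1) * (t ^ m * gapFactor t⁻¹ j)) := by
  have ht₁ := le_tribonacci ht
  have hφ := le_goldenRatio
  have hden : 3 * t ^ 2 - 2 * t - 1 ≠ 0 := by nlinarith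
  have hgap := (gapFactor_inv_goldenRatio_pos (k := i)).ne'
  have hgap' := (gapFactor_inv_tribonacci_pos ht (k := j)).ne'
  have ht₀ : t ≠ 0 := by linarith
  have h5 : 2 * φ - 1 ≠ 0 := by linarith
  rw [linForm, log_div hden (mul_ne_zero h5 ht₀), log_mul h5 ht₀,
    log_div (mul_ne_zero (pow_ne_zero _ goldenRatio_ne_zero) hgap) h5,
    log_mul (pow_ne_zero _ goldenRatio_ne_zero) hgap,
    log_mul (div_ne_zero ht₀ hden) (mul_ne_zero (pow_ne_zero _ ht₀) hgap'),
    log_mul (pow_ne_zero _ ht₀) hgap', log_div ht₀ hden, log_pow, log_pow]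
  ring

lemma abs_dominant_sub_le (ht : t ^ 3 = t ^ 2 + t + 1) (hn : n₁ < n) (hm : m₁ < m)
    (h : (Nat.fib n : ℤ) - Nat.fib n₁ = trib m - trib m₁) :
    |φ ^ n * gapFactor φ⁻¹ (n - n₁) / (2 * φ - 1) -
      t / (3 * t ^ 2 - 2 * t - 1) * (t ^ m * gapFactor t⁻¹ (m - m₁))| ≤ 2 := by
  have ht₀ : t ≠ 0 := by linarith [le_tribonacci ht]
  have heq : (Nat.fib n : ℝ) - Nat.fib n₁ = trib m - trib m₁ := by exact_mod_cast h
  have hfib := abs_le.mp (abs_fib_sub_le n)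
  have hfib₁ := abs_le.mp (abs_fib_sub_le n₁)
  have htrib := abs_le.mp (abs_tribError_le ht m)
  have htrib₁ := abs_le.mp (abs_tribError_le ht m₁)
  simp only [tribError] at htrib htrib₁
  rw [pow_mul_gapFactor_inv goldenRatio_ne_zero hn, pow_mul_gapFactor_inv ht₀ hm, sub_div, mul_sub,
    abs_le]
  constructor <;> linarith

lemma le_goldenRatio_pow (hn : 20 ≤ n) : 15000 ≤ φ ^ n := calc
  (15000 : ℝ) ≤ 1.618 ^ 20 := by norm_num
  _ ≤ φ ^ 20 := by gcongr; exact le_goldenRatio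
  _ ≤ φ ^ n := pow_le_pow_right₀ one_lt_goldenRatio.le hn

lemma abs_linForm_le (ht : t ^ 3 = t ^ 2 + t + 1) (hn : n₁ < n) (hm : m₁ < m) (hn₂₀ : 20 ≤ n)
    (h : (Nat.fib n : ℤ) - Nat.fib n₁ = trib m - trib m₁) :
    |linForm t n m (n - n₁) (m - m₁)| ≤ 12 * φ⁻¹ ^ n := by
  have hdiff := abs_dominant_sub_le ht hn hm h
  have hpow := le_goldenRatio_pow hn₂₀
  have hφ := le_goldenRatio
  have hφ' := goldenRatio_le
  have hx : 0.169 * φ ^ n ≤ φ ^ n * gapFactor φ⁻¹ (n - n₁) / (2 * φ - 1) := by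
    have hgap : 1 - φ⁻¹ ≤ gapFactor φ⁻¹ (n - n₁) :=
      one_sub_le_gapFactor (by positivity) (inv_le_one_of_one_le₀ one_lt_goldenRatio.le)
    rw [le_div_iff₀ (by linarith)]
    nlinarith [inv_goldenRatio_le]
  have hy := (abs_le.mp hdiff).2
  rw [linForm_eq_log_sub_log ht]
  calc _ ≤ _ / (φ ^ n / 6) := abs_log_sub_log_le (by positivity) (by linarith) (by linarith)
    _ ≤ 2 / (φ ^ n / 6) := by gcongr
    _ = 12 * φ⁻¹ ^ n := by rw [inv_pow]; field_simp; norm_num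

lemma mul_log_le_of_abs_linForm_le (ht : t ^ 3 = t ^ 2 + t + 1)
    (h : |linForm t n m i j| ≤ 0.001) : m * log t ≤ n * log φ + 2 := by
  have hlow := (abs_le.mp h).1
  obtain ⟨hle, hge⟩ := binet_quotient_bounds ht
  have hquot := log_le_sub_one_of_pos (zero_lt_one.trans_le hle)
  have hgap := log_gapFactor_nonpos (inv_nonneg.mpr goldenRatio_pos.le)
    (inv_goldenRatio_le.trans (by norm_num)) (k := i)
  have hgap' := neg_log_gapFactor_le (inv_nonneg.mpr (by linarith [le_tribonacci ht]))
    ((inv_tribonacci_le ht).trans (by norm_num)) (k := j)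
  have hinv := inv_tribonacci_le ht
  rw [linForm] at hlow
  linarith

lemma le_of_mul_log_le (ht : t ^ 3 = t ^ 2 + t + 1) (hn : 20 ≤ n)
    (h : m * log t ≤ n * log φ + 2) : m ≤ n := by
  have hlog : (n : ℝ) * log φ ≤ n * 0.4853 := by
    gcongr
    exact log_le_of_le_golden goldenRatio_pos (goldenRatio_le.trans (by norm_num))
  have hlog' : (m : ℝ) * 0.6 ≤ m * log t := by
    gcongr
    exact le_log_tribonacci ht
  have hn' : (20 : ℝ) ≤ n := by exact_mod_cast hn
  have : (m : ℝ) ≤ n := by linarith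
  exact_mod_cast this

theorem isNearSolution_of_fib_sub_eq_trib_sub (ht : t ^ 3 = t ^ 2 + t + 1) (hn : n₁ < n)
    (hm : m₁ < m) (hn₂₀ : 20 ≤ n) (h : (Nat.fib n : ℤ) - Nat.fib n₁ = trib m - trib m₁) :
    IsNearSolution t n m (n - n₁) (m - m₁) := by
  have hform := abs_linForm_le ht hn hm hn₂₀ h
  have hsmall : φ⁻¹ ^ n ≤ 15000⁻¹ := by
    rw [inv_pow]
    exact inv_anti₀ (by norm_num) (le_goldenRatio_pow hn₂₀)
  have hlog := mul_log_le_of_abs_linForm_le ht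
    (hform.trans ((mul_le_mul_of_nonneg_left hsmall (by norm_num)).trans (by norm_num)))
  refine ⟨by omega, n.sub_le n₁, by omega, m.sub_le m₁, le_of_mul_log_le ht hn₂₀ hlog, hlog, ?_⟩
  rwa [← inv_pow_eq_exp_neg_mul_log goldenRatio_pos]

end NearSolution

section FixedPoint

open Real Finset

variable {P D E X Y : ℕ} {x y : ℝ}

lemma div_le_natDiv_add_one (a b : ℕ) : (a : ℝ) / b ≤ (a / b : ℕ) + 1 := by
  simpa only [Nat.floor_div_eq_div] using (Nat.lt_floor_add_one ((a : ℝ) / b)).le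

/-- The integer `Y` approximates the real `y` from below in fixed-point arithmetic with `P` binary
digits after the point, with an error of at most `E` units in the last place. -/
structure IsFloorApprox (P E Y : ℕ) (y : ℝ) : Prop where
  le : (Y : ℝ) ≤ y * 2 ^ P
  le_add : y * 2 ^ P ≤ Y + E

namespace IsFloorApprox

lemma nonneg (h : IsFloorApprox P E Y y) : 0 ≤ y :=
  nonneg_of_mul_nonneg_left ((Nat.cast_nonneg Y).trans h.le) (by positivity)

lemma mono (h : IsFloorApprox P E Y y) (hED : E ≤ D) : IsFloorApprox P D Y y :=
  ⟨h.le, h.le_add.trans (by gcongr)⟩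

protected lemma zero : IsFloorApprox P 0 0 0 := by constructor <;> simp

lemma add (hx : IsFloorApprox P D X x) (hy : IsFloorApprox P E Y y) :
    IsFloorApprox P (D + E) (X + Y) (x + y) := by
  obtain ⟨hx₁, hx₂⟩ := hx
  obtain ⟨hy₁, hy₂⟩ := hy
  constructor <;> push_cast <;> linarith

lemma one_sub (h₁ : (Y : ℝ) ≤ y * 2 ^ P + E) (h₂ : y * 2 ^ P ≤ Y + 1) (hy : y ≤ 1) :
    IsFloorApprox P (E + 1) (2 ^ P - Y - 1) (1 - y) := by
  rcases le_or_gt (2 ^ P) Y with hPY | hYP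
  · have hPY' : (2 ^ P : ℝ) ≤ Y := by exact_mod_cast hPY
    have hpos : (0 : ℝ) ≤ (1 - y) * 2 ^ P := mul_nonneg (by linarith) (by positivity)
    rw [Nat.sub_eq_zero_of_le hPY, Nat.zero_sub]
    constructor <;> push_cast <;> linarith
  · have hcast : ((2 ^ P - Y - 1 : ℕ) : ℝ) = 2 ^ P - Y - 1 := by
      rw [Nat.cast_sub (by lia), Nat.cast_sub hYP.le]
      push_cast
      rfl
    constructor <;> rw [hcast] <;> push_cast <;> linarith

lemma natDiv (h : IsFloorApprox P E Y y) {k : ℕ} (hk : 0 < k) :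
    IsFloorApprox P (E + 1) (Y / k) (y / k) := by
  have hk₀ : (1 : ℝ) ≤ k := by exact_mod_cast hk
  constructor <;> rw [div_mul_eq_mul_div]
  · calc ((Y / k : ℕ) : ℝ) ≤ Y / k := Nat.cast_div_le
      _ ≤ y * 2 ^ P / k := by gcongr; exact h.le
  · calc y * 2 ^ P / k ≤ (Y + E) / k := by gcongr; exact h.le_add
      _ = Y / k + E / k := add_div ..
      _ ≤ ((Y / k : ℕ) + 1) + E :=
        add_le_add (div_le_natDiv_add_one Y k) (div_le_self (Nat.cast_nonneg E) hk₀)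
      _ = (Y / k : ℕ) + (E + 1 : ℕ) := by push_cast; ring

lemma mul_shiftRight (hX : IsFloorApprox P D X x) (hY : IsFloorApprox P E Y y)
    (hx : x ≤ 2 / 3) (hy : y ≤ 2 / 3) (hED : 2 * E + 3 ≤ D) :
    IsFloorApprox P D ((X * Y) >>> P) (x * y) := by
  have hW : (0 : ℝ) < 2 ^ P := by positivity
  have hED' : 2 * (E : ℝ) + 3 ≤ D := by exact_mod_cast hED
  rw [Nat.shiftRight_eq_div_pow]
  have hfloor : ((X * Y / 2 ^ P : ℕ) : ℝ) * 2 ^ P ≤ X * Y := by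
    exact_mod_cast Nat.div_mul_le_self (X * Y) (2 ^ P)
  have hlt : (X * Y : ℝ) ≤ 2 ^ P * ((X * Y / 2 ^ P : ℕ) + 1) := by
    exact_mod_cast (Nat.lt_mul_div_succ (X * Y) (by positivity : 0 < 2 ^ P)).le
  have hY₀ := hY.nonneg
  have hx₀ := hX.nonneg
  constructor <;> refine le_of_mul_le_mul_right ?_ hW
  · calc ((X * Y / 2 ^ P : ℕ) : ℝ) * 2 ^ P ≤ X * Y := hfloor
      _ ≤ (x * 2 ^ P) * (y * 2 ^ P) := by gcongr; exacts [hX.le, hY.le]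
      _ = x * y * 2 ^ P * 2 ^ P := by ring
  · calc x * y * 2 ^ P * 2 ^ P = (x * 2 ^ P) * (y * 2 ^ P) := by ring
      _ ≤ (X + D) * (y * 2 ^ P) := by gcongr; exact hX.le_add
      _ = X * (y * 2 ^ P) + y * D * 2 ^ P := by ring
      _ ≤ X * (Y + E) + 2 / 3 * D * 2 ^ P := by gcongr; exact hY.le_add
      _ = X * Y + X * E + 2 / 3 * D * 2 ^ P := by ring
      _ ≤ 2 ^ P * ((X * Y / 2 ^ P : ℕ) + 1) + x * 2 ^ P * E + 2 / 3 * D * 2 ^ P := by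
        gcongr
        exact hX.le
      _ ≤ 2 ^ P * ((X * Y / 2 ^ P : ℕ) + 1) + 2 / 3 * 2 ^ P * E + 2 / 3 * D * 2 ^ P := by gcongr
      _ ≤ ((X * Y / 2 ^ P : ℕ) + D) * 2 ^ P := by nlinarith

lemma neg_log_one_sub_of_sum {i : ℕ}
    (hY : IsFloorApprox P E Y (∑ j ∈ range i, y ^ (j + 1) / (j + 1)))
    (hy₀ : 0 ≤ y) (hy : y ≤ 2 / 3) (htail : y ^ (i + 1) * 2 ^ P ≤ D) :
    IsFloorApprox P (E + 3 * D) Y (-log (1 - y)) := by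
  have hy₁ : |y| < 1 := by rw [abs_of_nonneg hy₀]; linarith
  have hsum : ∑ j ∈ range i, y ^ (j + 1) / (j + 1) ≤ -log (1 - y) :=
    sum_le_hasSum _ (fun j _ ↦ by positivity) (hasSum_pow_div_log_of_abs_lt_one hy₁)
  have htail' : -log (1 - y) ≤ ∑ j ∈ range i, y ^ (j + 1) / (j + 1) + 3 * y ^ (i + 1) := by
    have h := abs_log_sub_add_sum_range_le hy₁ i
    rw [abs_of_nonneg hy₀] at h
    have hfrac : y ^ (i + 1) / (1 - y) ≤ 3 * y ^ (i + 1) := by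
      rw [div_le_iff₀ (by linarith)]
      nlinarith [pow_nonneg hy₀ (i + 1)]
    linarith [neg_le_of_abs_le h]
  constructor
  · exact hY.le.trans (by gcongr)
  · calc -log (1 - y) * 2 ^ P
        ≤ (∑ j ∈ range i, y ^ (j + 1) / (j + 1) + 3 * y ^ (i + 1)) * 2 ^ P := by gcongr
      _ = (∑ j ∈ range i, y ^ (j + 1) / (j + 1)) * 2 ^ P + 3 * (y ^ (i + 1) * 2 ^ P) := by ring
      _ ≤ (Y + E) + 3 * D := by gcongr; exact hY.le_add
      _ = Y + (E + 3 * D : ℕ) := by push_cast; ring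

end IsFloorApprox

/-- `force v k` is `k v`; matching on `v` makes the kernel reduce `v` to a numeral before `k` is
unfolded. -/
def force {β : Type*} (v : ℕ) (k : ℕ → β) : β :=
  match v with
  | 0 => k 0
  | n + 1 => k (n + 1)

@[simp]
lemma force_eq {β : Type*} (v : ℕ) (k : ℕ → β) : force v k = k v := by
  cases v <;> rfl

/-- Continues the fixed-point Taylor series of `-log (1 - y)`, with `Y` standing for `y`, from the
state `X ≈ y ^ k`, `S ≈ ∑ j < k, y ^ j / j`, until the power underflows or the fuel runs out. -/
def logSeries (P Y : ℕ) : ℕ → ℕ → ℕ → ℕ → ℕ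
  | 0, _, _, S => S
  | _ + 1, 0, _, S => S
  | fuel + 1, X + 1, k, S =>
    force (S + (X + 1) / k) fun S ↦ force (((X + 1) * Y) >>> P) fun X ↦
      force (k + 1) fun k ↦ logSeries P Y fuel X k S

/-- Fixed-point value of `-log (1 - y)`, where `Y` stands for `y`. -/
def fixedLog (P Y : ℕ) : ℕ := logSeries P Y (2 * P) Y 1 0

/-- Error bound, in units in the last place, for the fixed-point logarithms below. -/
def logError (P : ℕ) : ℕ := 52 * P + 75

lemma isFloorApprox_logSeries (hY : IsFloorApprox P E Y y) (hy : y ≤ 2 / 3) (hED : 2 * E + 3 ≤ D)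
    {fuel i X S : ℕ} (hX : IsFloorApprox P D X (y ^ (i + 1)))
    (hS : IsFloorApprox P (i * (D + 1)) S (∑ j ∈ range i, y ^ (j + 1) / (j + 1)))
    (hfuel : y ^ (i + fuel + 1) * 2 ^ P ≤ D) :
    IsFloorApprox P ((i + fuel) * (D + 1) + 3 * D) (logSeries P Y fuel X (i + 1) S)
      (-log (1 - y)) := by
  have hy₀ := hY.nonneg
  induction fuel generalizing i X S with
  | zero => exact hS.neg_log_one_sub_of_sum hy₀ hy hfuel
  | succ fuel ih =>
    cases X with
    | zero =>
      refine (hS.neg_log_one_sub_of_sum hy₀ hy (by simpa using hX.le_add)).mono ?_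
      gcongr
      lia
    | succ X =>
      simp only [logSeries, force_eq]
      rw [show i + (fuel + 1) = i + 1 + fuel by ring] at hfuel ⊢
      refine ih ?_ ?_ hfuel
      · rw [pow_succ]
        exact hX.mul_shiftRight hY ((pow_le_of_le_one hy₀ (by linarith) i.succ_ne_zero).trans hy)
          hy hED
      · rw [sum_range_succ, add_mul, one_mul]
        simpa using hS.add (hX.natDiv i.succ_pos)

lemma isFloorApprox_fixedLog (hY : IsFloorApprox P E Y y) (hy : y ≤ 2 / 3) (hE : E ≤ 11) :
    IsFloorApprox P (logError P) (fixedLog P Y) (-log (1 - y)) := by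
  have hy₀ := hY.nonneg
  have htail : y ^ (0 + 2 * P + 1) * 2 ^ P ≤ 1 := by
    calc y ^ (0 + 2 * P + 1) * 2 ^ P ≤ (2 / 3) ^ (2 * P) * 2 ^ P := by
          rw [zero_add, pow_succ]
          gcongr
          exact (mul_le_of_le_one_right (by positivity) (by linarith)).trans (by gcongr)
      _ = (8 / 9) ^ P := by rw [pow_mul, ← mul_pow]; norm_num
      _ ≤ 1 := pow_le_one₀ (by norm_num) (by norm_num)
  have h := isFloorApprox_logSeries (D := 25) (fuel := 2 * P) (i := 0) (S := 0) (X := Y) hY hy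
    (by lia) (by simpa using hY.mono (by lia)) (by simpa using IsFloorApprox.zero)
    (htail.trans (by norm_num))
  exact h.mono (by rw [logError]; lia)

/-- Refines the floor `X` of `2 ^ k * y` bit by bit, `below k X` deciding whether `X ≤ 2 ^ k * y`.
The exponent is passed instead of the power because the kernel's hash of a numeral only sees its low
bits. -/
def bisect (below : ℕ → ℕ → Bool) : ℕ → ℕ → ℕ → ℕ
  | 0, _, X => X
  | fuel + 1, k, X =>
    force (k + 1) fun k ↦
      force (bif below k (2 * X + 1) then 2 * X + 1 else 2 * X) fun X ↦ bisect below fuel k X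

lemma isFloorApprox_bisect {below : ℕ → ℕ → Bool}
    (hbelow : ∀ k X : ℕ, below k X = true ↔ (X : ℝ) ≤ y * 2 ^ k) {fuel k X : ℕ}
    (hX : IsFloorApprox k 1 X y) : IsFloorApprox (k + fuel) 1 (bisect below fuel k X) y := by
  induction fuel generalizing k X with
  | zero => exact hX
  | succ fuel ih =>
    simp only [bisect, force_eq]
    rw [show k + (fuel + 1) = k + 1 + fuel by ring]
    refine ih ?_
    have hbelow' := hbelow (k + 1) (2 * X + 1)
    obtain ⟨h₁, h₂⟩ := hX
    rw [pow_succ'] at hbelow'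
    push_cast at hbelow' h₂
    cases hb : below (k + 1) (2 * X + 1) with
    | true =>
      rw [hb] at hbelow'
      have := hbelow'.1 rfl
      constructor <;> rw [cond_true, pow_succ'] <;> push_cast <;> linarith
    | false =>
      rw [hb] at hbelow'
      have := not_le.1 (mt hbelow'.2 Bool.false_ne_true)
      constructor <;> rw [cond_false, pow_succ'] <;> push_cast <;> linarith

end FixedPoint

section BakerDavenport

open Real

variable {P B w A Z L₁ L₂ n p q e G : ℕ} {ℓ₁ ℓ₂ x y ν : ℝ}

-- The Baker–Davenport reduction in the form of Dujella and Pethő, cleared of denominators.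
lemma sub_mul_abs_le_mul_abs_linForm {g : ℝ} (hg : ∀ k : ℤ, g ≤ |q * ν - k * ℓ₂|) (m : ℕ) :
    g - n * |q * ℓ₁ - p * ℓ₂| ≤ q * |n * ℓ₁ - m * ℓ₂ + ν| := by
  have hid : (q * (n * ℓ₁ - m * ℓ₂ + ν) : ℝ)
      = (q * ν - (q * m - n * p : ℤ) * ℓ₂) + n * (q * ℓ₁ - p * ℓ₂) := by
    push_cast
    ring
  have habs := abs_sub_abs_le_abs_add (q * ν - (q * m - n * p : ℤ) * ℓ₂) (n * (q * ℓ₁ - p * ℓ₂))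
  rw [← hid, abs_mul, abs_mul, Nat.abs_cast, Nat.abs_cast] at habs
  linarith [hg (q * m - n * p)]

lemma le_abs_sub_sub_mul_of_le_mod {A Z L : ℕ} (hGL : 2 * G < L)
    (h : 2 * G ≤ (A % L + (L - Z % L) + G) % L) (k : ℤ) : (G : ℤ) ≤ |(A - Z - k * L : ℤ)| := by
  by_contra! hlt
  obtain ⟨hlo, hhi⟩ := abs_lt.1 hlt
  have hZ := (Nat.mod_lt Z (by lia : 0 < L)).le
  have hmod : ((A % L + (L - Z % L) + G : ℕ) : ℤ) % L = A - Z - k * L + G := by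
    have hid : ((A % L + (L - Z % L) + G : ℕ) : ℤ)
        = A - Z - k * L + G + L * (k + 1 - A / L + Z / L) := by
      rw [Nat.cast_add, Nat.cast_add, Nat.cast_sub hZ]
      push_cast
      linear_combination Int.mul_ediv_add_emod A L - Int.mul_ediv_add_emod Z L
    rw [hid, Int.add_mul_emod_self_left, Int.emod_eq_of_lt] <;> lia
  have : ((2 * G : ℕ) : ℤ) ≤ A - Z - k * L + G := by
    rw [← hmod]
    exact_mod_cast h
  push_cast at this
  linarith

lemma abs_sub_mul_two_pow_le (hA : IsFloorApprox P (2 * e) A x) (hZ : IsFloorApprox P e Z y) :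
    |(A - Z : ℝ) - 2 ^ P * (x - y)| ≤ 2 * e := by
  obtain ⟨hA₁, hA₂⟩ := hA
  obtain ⟨hZ₁, hZ₂⟩ := hZ
  push_cast at hA₂
  have : (0 : ℝ) ≤ e := Nat.cast_nonneg e
  rw [abs_le]
  constructor <;> linarith

lemma sub_le_two_pow_mul_abs_of_le_mod (hL : IsFloorApprox P e L₂ ℓ₂)
    (hA : IsFloorApprox P (2 * e) A x) (hZ : IsFloorApprox P e Z y) (hℓ₂ : 0.6 ≤ ℓ₂)
    (hℓ₂' : ℓ₂ ≤ 1) (hxy : |x - y| ≤ 2) (hq : 0 < q) (hGL : 2 * G < L₂)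
    (h : 2 * G ≤ ((q * A) % L₂ + (L₂ - (q * Z) % L₂) + G) % L₂) (k : ℤ) :
    (G : ℝ) - 10 * q * e ≤ 2 ^ P * |q * (x - y) - k * ℓ₂| := by
  have hW : (0 : ℝ) < 2 ^ P := by positivity
  have hq₁ : (1 : ℝ) ≤ q := by exact_mod_cast hq
  rcases le_or_gt |(k : ℝ)| (8 * q) with hk | hk
  · have hint : (G : ℝ) ≤ |(q * (A - Z) - k * L₂ : ℝ)| := by
      have := le_abs_sub_sub_mul_of_le_mod hGL h k
      push_cast at this
      rw [mul_sub]
      exact_mod_cast this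
    have hLerr : |(L₂ : ℝ) - 2 ^ P * ℓ₂| ≤ e := by
      rw [abs_le]
      constructor <;> linarith [hL.le, hL.le_add, Nat.cast_nonneg (α := ℝ) e]
    calc (G : ℝ) - 10 * q * e
        ≤ |(q * (A - Z) - k * L₂ : ℝ)| - (q * (2 * e) + 8 * q * e) := by linarith
      _ ≤ |(q * (A - Z) - k * L₂ : ℝ)|
          - |q * ((A - Z) - 2 ^ P * (x - y)) - k * (L₂ - 2 ^ P * ℓ₂)| := by
        gcongr
        refine (abs_sub _ _).trans ?_
        rw [abs_mul, abs_mul, Nat.abs_cast]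
        gcongr
        exact abs_sub_mul_two_pow_le hA hZ
      _ ≤ |q * (A - Z) - k * L₂ - (q * ((A - Z) - 2 ^ P * (x - y)) - k * (L₂ - 2 ^ P * ℓ₂))| :=
        abs_sub_abs_le_abs_sub _ _
      _ = |2 ^ P * (q * (x - y) - k * ℓ₂)| := by ring_nf
      _ = 2 ^ P * |q * (x - y) - k * ℓ₂| := by rw [abs_mul, abs_of_pos hW]
  · have hG : (G : ℝ) ≤ 2 ^ P := by
      have : (2 * G : ℝ) ≤ L₂ := by exact_mod_cast hGL.le
      nlinarith [hL.le, Nat.cast_nonneg (α := ℝ) G]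
    have hfar : 1 ≤ |q * (x - y) - k * ℓ₂| := by
      have hsub := abs_sub_abs_le_abs_sub (k * ℓ₂) (q * (x - y))
      rw [abs_sub_comm, abs_mul, abs_mul, Nat.abs_cast, abs_of_nonneg (by linarith : 0 ≤ ℓ₂)]
        at hsub
      nlinarith
    nlinarith [mul_nonneg (Nat.cast_nonneg (α := ℝ) q) (Nat.cast_nonneg (α := ℝ) e)]

/-- Gap that forces `|n * ℓ₁ - m * ℓ₂ + ν| ≥ 2 ^ (-w)` for all `n ≤ 2 ^ B`, when `p / q` is the
rational approximation to `ℓ₁ / ℓ₂` and `L₁`, `L₂` are fixed-point values of `ℓ₁`, `ℓ₂` with error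
`e`. -/
def gapThreshold (P B w e L₁ L₂ p q : ℕ) : ℕ :=
  10 * q * e + 2 ^ B * ((q * L₁ - p * L₂) + (p * L₂ - q * L₁) + (q + p) * e)
    + (2 ^ P * q / 2 ^ w + 1)

lemma two_pow_mul_abs_le (hL₁ : IsFloorApprox P e L₁ ℓ₁) (hL₂ : IsFloorApprox P e L₂ ℓ₂) :
    2 ^ P * |q * ℓ₁ - p * ℓ₂| ≤ ((q * L₁ - p * L₂) + (p * L₂ - q * L₁) + (q + p) * e : ℕ) := by
  have hsub : (q * L₁ - p * L₂ : ℝ) ≤ (q * L₁ - p * L₂ : ℕ) := by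
    rw [sub_le_iff_le_add]
    exact_mod_cast le_tsub_add
  have hsub' : (p * L₂ - q * L₁ : ℝ) ≤ (p * L₂ - q * L₁ : ℕ) := by
    rw [sub_le_iff_le_add]
    exact_mod_cast le_tsub_add
  rw [← abs_of_pos (by positivity : (0 : ℝ) < 2 ^ P), ← abs_mul, abs_le]
  push_cast
  have h₁ := mul_le_mul_of_nonneg_left hL₁.le (Nat.cast_nonneg (α := ℝ) q)
  have h₂ := mul_le_mul_of_nonneg_left hL₁.le_add (Nat.cast_nonneg (α := ℝ) q)
  have h₃ := mul_le_mul_of_nonneg_left hL₂.le (Nat.cast_nonneg (α := ℝ) p)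
  have h₄ := mul_le_mul_of_nonneg_left hL₂.le_add (Nat.cast_nonneg (α := ℝ) p)
  have hqe : (0 : ℝ) ≤ q * e := by positivity
  have hpe : (0 : ℝ) ≤ p * e := by positivity
  constructor <;> linarith [hqe, hpe, Nat.cast_nonneg (α := ℝ) (q * L₁ - p * L₂),
    Nat.cast_nonneg (α := ℝ) (p * L₂ - q * L₁)]

theorem two_pow_inv_le_abs_of_le_mod (hL₁ : IsFloorApprox P e L₁ ℓ₁)
    (hL₂ : IsFloorApprox P e L₂ ℓ₂) (hA : IsFloorApprox P (2 * e) A x)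
    (hZ : IsFloorApprox P e Z y) (hℓ₂ : 0.6 ≤ ℓ₂) (hℓ₂' : ℓ₂ ≤ 1) (hxy : |x - y| ≤ 2) (hq : 0 < q)
    (hG : gapThreshold P B w e L₁ L₂ p q = G) (hGL : 2 * G < L₂)
    (h : 2 * G ≤ ((q * A) % L₂ + (L₂ - (q * Z) % L₂) + G) % L₂) (hn : n ≤ 2 ^ B) (m : ℕ) :
    ((2 : ℝ) ^ w)⁻¹ ≤ |n * ℓ₁ - m * ℓ₂ + (x - y)| := by
  have hW : (0 : ℝ) < 2 ^ P := by positivity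
  have hq₀ : (0 : ℝ) < q := by exact_mod_cast hq
  have hgap (k : ℤ) : ((G : ℝ) - 10 * q * e) / 2 ^ P ≤ |q * (x - y) - k * ℓ₂| := by
    rw [div_le_iff₀' hW]
    exact sub_le_two_pow_mul_abs_of_le_mod hL₂ hA hZ hℓ₂ hℓ₂' hxy hq hGL h k
  have happrox : n * (2 ^ P * |q * ℓ₁ - p * ℓ₂|)
      ≤ 2 ^ B * ((q * L₁ - p * L₂) + (p * L₂ - q * L₁) + (q + p) * e : ℕ) :=
    mul_le_mul (by exact_mod_cast hn) (two_pow_mul_abs_le hL₁ hL₂) (by positivity) (by positivity)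
  have hround : (2 ^ P * q : ℝ) / 2 ^ w ≤ (2 ^ P * q / 2 ^ w : ℕ) + 1 := by
    rw [div_le_iff₀' (by positivity)]
    exact_mod_cast (Nat.lt_mul_div_succ (2 ^ P * q) (by positivity : 0 < 2 ^ w)).le
  have hthreshold : (G : ℝ) = 10 * q * e
      + 2 ^ B * ((q * L₁ - p * L₂) + (p * L₂ - q * L₁) + (q + p) * e : ℕ)
      + ((2 ^ P * q / 2 ^ w : ℕ) + 1) := by
    rw [← hG, gapThreshold]
    push_cast
    rfl
  have hmain := sub_mul_abs_le_mul_abs_linForm (n := n) (p := p) (ℓ₁ := ℓ₁) hgap m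
  rw [div_sub' hW.ne', div_le_iff₀' hW] at hmain
  refine le_of_mul_le_mul_left ?_ (mul_pos hW hq₀)
  calc 2 ^ P * q * ((2 : ℝ) ^ w)⁻¹ = 2 ^ P * q / 2 ^ w := (div_eq_mul_inv _ _).symm
    _ ≤ G - 10 * q * e - 2 ^ P * (n * |q * ℓ₁ - p * ℓ₂|) := by linarith
    _ ≤ 2 ^ P * (q * |n * ℓ₁ - m * ℓ₂ + (x - y)|) := hmain
    _ = _ := by ring

end BakerDavenport

section Quotient

open Real goldenRatio

variable {P C S k : ℕ} {t x s : ℝ}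

/-- Decides `X ≤ 2 ^ k * φ⁻¹`, as `φ⁻¹` is the positive root of `x ^ 2 + x = 1`. -/
def belowInvGoldenRatio (k X : ℕ) : Bool := Nat.ble (X * (X + 2 ^ k)) (2 ^ k * 2 ^ k)

/-- Decides `X ≤ 2 ^ k * t⁻¹` for the Tribonacci constant `t`, as `t⁻¹` is the positive root of
`x ^ 3 + x ^ 2 + x = 1`. -/
def belowInvTribonacci (k X : ℕ) : Bool :=
  Nat.ble (X * (X * (X + 2 ^ k) + 2 ^ k * 2 ^ k)) (2 ^ k * 2 ^ k * 2 ^ k)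

lemma belowInvGoldenRatio_iff (k X : ℕ) :
    belowInvGoldenRatio k X = true ↔ (X : ℝ) ≤ φ⁻¹ * 2 ^ k := by
  have hroot : (φ⁻¹ * 2 ^ k) * (φ⁻¹ * 2 ^ k + 2 ^ k) = 2 ^ k * 2 ^ k := by
    have hφ' : φ⁻¹ ^ 2 + φ⁻¹ = 1 := by
      rw [inv_goldenRatio]
      linear_combination goldenConj_sq
    linear_combination (2 ^ k * 2 ^ k : ℝ) * hφ'
  have hcast : X * (X + 2 ^ k) ≤ 2 ^ k * 2 ^ k ↔ (X : ℝ) * (X + 2 ^ k) ≤ 2 ^ k * 2 ^ k := by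
    exact_mod_cast Iff.rfl
  rw [belowInvGoldenRatio, Nat.ble_eq, hcast, ← hroot]
  refine ⟨fun h ↦ ?_, fun h ↦ by gcongr⟩
  contrapose! h
  gcongr

lemma belowInvTribonacci_iff (ht : t ^ 3 = t ^ 2 + t + 1) (k X : ℕ) :
    belowInvTribonacci k X = true ↔ (X : ℝ) ≤ t⁻¹ * 2 ^ k := by
  have ht₀ : 0 < t := by linarith [le_tribonacci ht]
  have hroot : (t⁻¹ * 2 ^ k) * ((t⁻¹ * 2 ^ k) * (t⁻¹ * 2 ^ k + 2 ^ k) + 2 ^ k * 2 ^ k)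
      = 2 ^ k * 2 ^ k * 2 ^ k := by
    field_simp
    linarith
  have hcast : X * (X * (X + 2 ^ k) + 2 ^ k * 2 ^ k) ≤ 2 ^ k * 2 ^ k * 2 ^ k ↔
      (X : ℝ) * (X * (X + 2 ^ k) + 2 ^ k * 2 ^ k) ≤ 2 ^ k * 2 ^ k * 2 ^ k := by
    exact_mod_cast Iff.rfl
  rw [belowInvTribonacci, Nat.ble_eq, hcast, ← hroot]
  refine ⟨fun h ↦ ?_, fun h ↦ by gcongr⟩
  contrapose! h
  gcongr

lemma binet_quotient_eq (ht : t ^ 3 = t ^ 2 + t + 1) :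
    (3 * t ^ 2 - 2 * t - 1) / ((2 * φ - 1) * t)
      = (1 + 2 * t⁻¹ + 3 * t⁻¹ ^ 2) / (1 + 2 * φ⁻¹) := by
  have ht₀ : 0 < t := by linarith [le_tribonacci ht]
  have hφ := le_goldenRatio
  rw [div_eq_div_iff (by nlinarith) (by positivity)]
  have hφ' : 1 + 2 * φ⁻¹ = 2 * φ - 1 := by
    rw [inv_goldenRatio]
    linarith [goldenRatio_add_goldenConj]
  rw [hφ']
  field_simp
  linear_combination (3 : ℝ) * ht

/-- Fixed-point value of `1 - (1 + 2 * c) / (1 + 2 * s + 3 * s ^ 2)`, where `C` and `S` stand for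
`c` and `s`. -/
def fixedQuotient (P C S : ℕ) : ℕ :=
  2 ^ P - (2 ^ P + 2 * (C + 1)) * (2 ^ P * 2 ^ P) / (2 ^ P * 2 ^ P + 2 * S * 2 ^ P + 3 * S * S) - 1

lemma quotient_denom_bounds (hS : IsFloorApprox P 1 S s) :
    (2 ^ P * 2 ^ P + 2 * S * 2 ^ P + 3 * S * S : ℝ) ≤ (1 + 2 * s + 3 * s ^ 2) * (2 ^ P * 2 ^ P) ∧
      (1 + 2 * s + 3 * s ^ 2) * (2 ^ P * 2 ^ P)
        ≤ 2 ^ P * 2 ^ P + 2 * S * 2 ^ P + 3 * S * S + (2 + 6 * s) * 2 ^ P := by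
  obtain ⟨h₁, h₂⟩ := hS
  push_cast at h₂
  have hW : (1 : ℝ) ≤ 2 ^ P := one_le_pow₀ one_le_two
  constructor <;> nlinarith [Nat.cast_nonneg (α := ℝ) S]

lemma quotient_numer_bounds {c r : ℝ} (hC : IsFloorApprox P 1 C c) (hS : IsFloorApprox P 1 S s)
    (hs : s ≤ 0.55) (hr₀ : 0 ≤ r) (hr₁ : r ≤ 1)
    (hr : r * (1 + 2 * s + 3 * s ^ 2) = 1 + 2 * c) :
    r * 2 ^ P * (2 ^ P * 2 ^ P + 2 * S * 2 ^ P + 3 * S * S)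
        ≤ (2 ^ P + 2 * (C + 1)) * (2 ^ P * 2 ^ P) ∧
      (2 ^ P + 2 * (C + 1)) * (2 ^ P * 2 ^ P : ℝ)
        ≤ (r * 2 ^ P + 10) * (2 ^ P * 2 ^ P + 2 * S * 2 ^ P + 3 * S * S) := by
  obtain ⟨hD_le, hD_ge⟩ := quotient_denom_bounds hS
  obtain ⟨hC₁, hC₂⟩ := hC
  push_cast at hC₂
  have hs₀ := hS.nonneg
  have hW : (0 : ℝ) < 2 ^ P := by positivity
  have hD₁ : (2 ^ P * 2 ^ P : ℝ) ≤ 2 ^ P * 2 ^ P + 2 * S * 2 ^ P + 3 * S * S := by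
    rw [add_assoc]
    exact le_add_of_nonneg_right (by positivity)
  set K := 1 + 2 * s + 3 * s ^ 2
  set D := (2 ^ P * 2 ^ P + 2 * S * 2 ^ P + 3 * S * S : ℝ)
  generalize (2 : ℝ) ^ P = W at *
  constructor
  · calc r * W * D ≤ r * W * (K * (W * W)) := by gcongr
      _ = (W + 2 * (c * W)) * (W * W) := by linear_combination W * W * W * hr
      _ ≤ (W + 2 * (C + 1)) * (W * W) := by gcongr
  · calc (W + 2 * (C + 1)) * (W * W) ≤ (W + 2 * (c * W + 1)) * (W * W) := by gcongr
      _ = r * W * (K * (W * W)) + 2 * (W * W) := by linear_combination -W * W * W * hr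
      _ ≤ r * W * (D + (2 + 6 * s) * W) + 2 * (W * W) := by gcongr
      _ = r * W * D + r * ((2 + 6 * s) * (W * W)) + 2 * (W * W) := by ring
      _ ≤ r * W * D + 1 * ((2 + 6 * 0.55) * (W * W)) + 2 * (W * W) := by gcongr
      _ ≤ (r * W + 10) * D := by linarith [mul_pos hW hW]

lemma isFloorApprox_fixedQuotient {c : ℝ} (hC : IsFloorApprox P 1 C c) (hS : IsFloorApprox P 1 S s)
    (hs : s ≤ 0.55) (hquot : 1 + 2 * c ≤ 1 + 2 * s + 3 * s ^ 2) :
    IsFloorApprox P 11 (fixedQuotient P C S) (1 - (1 + 2 * c) / (1 + 2 * s + 3 * s ^ 2)) := by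
  have hs₀ := hS.nonneg
  have hc₀ := hC.nonneg
  have hK : 0 < 1 + 2 * s + 3 * s ^ 2 := by positivity
  have hr₁ := (div_le_one hK).2 hquot
  obtain ⟨hN₁, hN₂⟩ := quotient_numer_bounds hC hS hs (by positivity) hr₁ (div_mul_cancel₀ _ hK.ne')
  have hD₀ : (0 : ℝ) < 2 ^ P * 2 ^ P + 2 * S * 2 ^ P + 3 * S * S := by positivity
  refine IsFloorApprox.one_sub (E := 10) ?_ ?_ hr₁
  · refine Nat.cast_div_le.trans ?_
    push_cast
    rwa [div_le_iff₀ hD₀]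
  · refine le_trans ?_ (div_le_natDiv_add_one _ _)
    push_cast
    rwa [le_div_iff₀ hD₀]

end Quotient

section ReductionCheck

open Real goldenRatio

variable {P B Q w f g C S L M n i j k : ℕ} {t y : ℝ}

lemma isFloorApprox_log (hC : IsFloorApprox P 1 C y⁻¹) (hy : 1 ≤ y) (hy' : y ≤ 2) :
    IsFloorApprox P (logError P) (fixedLog P (2 ^ P - C - 1)) (log y) := by
  have hinv : 2⁻¹ ≤ y⁻¹ := inv_anti₀ (by linarith) hy'
  have h := isFloorApprox_fixedLog
    (IsFloorApprox.one_sub (E := 0) (by simpa using hC.le) (by simpa using hC.le_add)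
      (inv_le_one_of_one_le₀ hy))
    (by linarith) (by norm_num)
  rwa [sub_sub_cancel, log_inv, neg_neg] at h

lemma isFloorApprox_log_binet_quotient (ht : t ^ 3 = t ^ 2 + t + 1)
    (hC : IsFloorApprox P 1 C φ⁻¹) (hS : IsFloorApprox P 1 S t⁻¹) :
    IsFloorApprox P (logError P) (fixedLog P (fixedQuotient P C S))
      (log ((3 * t ^ 2 - 2 * t - 1) / ((2 * φ - 1) * t))) := by
  obtain ⟨hquot₁, hquot₂⟩ := binet_quotient_bounds ht
  rw [binet_quotient_eq ht] at *
  have hφ : 0 < 1 + 2 * φ⁻¹ := by positivity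
  rw [one_le_div hφ] at hquot₁
  rw [div_le_iff₀ hφ] at hquot₂
  have h := isFloorApprox_fixedLog
    (isFloorApprox_fixedQuotient hC hS ((inv_tribonacci_le ht).trans (by norm_num)) hquot₁)
    (sub_le_comm.1 (by rw [le_div_iff₀] <;> linarith)) le_rfl
  rwa [sub_sub_cancel, ← log_inv, inv_div] at h

/-- The residues modulo `L` of `q * (M - log (gapFactor y k))`, `k ≤ fuel`, in fixed-point
arithmetic: `Y` stands for `y`, and initially `X = Y` and `acc = [q * M % L]`. -/
def residues (P L q M Y : ℕ) : ℕ → ℕ → List ℕ → List ℕ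
  | 0, _, acc => acc
  | fuel + 1, X, acc =>
    force (q * (M + fixedLog P X) % L) fun r ↦ force ((X * Y) >>> P) fun X ↦
      residues P L q M Y fuel X (r :: acc)

lemma mem_residues_of_mem {q Y fuel X r : ℕ} {acc : List ℕ} (hr : r ∈ acc) :
    r ∈ residues P L q M Y fuel X acc := by
  induction fuel generalizing X acc with
  | zero => exact hr
  | succ fuel ih =>
    simp only [residues, force_eq]
    exact ih (List.mem_cons_of_mem _ hr)

lemma exists_mem_residues_of_pos {q Y fuel X : ℕ} {acc : List ℕ} (hY : IsFloorApprox P 1 Y y)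
    (hy : y ≤ 2 / 3) (hX : IsFloorApprox P 5 X (y ^ (i + 1))) (hik : i < k) (hk : k ≤ i + fuel) :
    ∃ N, IsFloorApprox P (logError P) N (-log (1 - y ^ k)) ∧
      q * (M + N) % L ∈ residues P L q M Y fuel X acc := by
  have hpow (l : ℕ) : y ^ (l + 1) ≤ 2 / 3 :=
    (pow_le_of_le_one hY.nonneg (by linarith) l.succ_ne_zero).trans hy
  induction fuel generalizing i X acc with
  | zero => lia
  | succ fuel ih =>
    simp only [residues, force_eq]
    rcases (Nat.succ_le_of_lt hik).eq_or_lt with rfl | hik'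
    · exact ⟨_, isFloorApprox_fixedLog hX (hpow i) (by norm_num),
        mem_residues_of_mem List.mem_cons_self⟩
    · refine ih (i := i + 1) ?_ hik' (by lia)
      rw [pow_succ]
      exact hX.mul_shiftRight hY (hpow i) hy (by norm_num)

lemma exists_mem_residues {q Y fuel : ℕ} (hY : IsFloorApprox P 1 Y y) (hy : y ≤ 2 / 3)
    (hk : k ≤ fuel) :
    ∃ N, IsFloorApprox P (logError P) N (-log (gapFactor y k)) ∧
      q * (M + N) % L ∈ residues P L q M Y fuel Y [q * M % L] := by
  rcases k.eq_zero_or_pos with rfl | hk₀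
  · exact ⟨0, by simpa using IsFloorApprox.zero.mono (Nat.zero_le _),
      mem_residues_of_mem (by simp)⟩
  · rw [gapFactor_of_pos hk₀]
    exact exists_mem_residues_of_pos (i := 0) hY hy (by simpa using hY.mono (by norm_num)) hk₀
      (by lia)

/-- The first denominator that is at least `bound` among the convergents of `a / b`, where `q₀` and
`q₁` are consecutive denominators and initially `(q₀, q₁) = (1, 0)`. -/
def convergentDenom (bound : ℕ) : ℕ → ℕ → ℕ → ℕ → ℕ → ℕ
  | 0, _, _, _, q₁ => q₁
  | fuel + 1, a, b, q₀, q₁ =>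
    bif Nat.ble bound q₁ then q₁ else
      force (a % b) fun r ↦ force (a / b * q₁ + q₀) fun q₂ ↦ convergentDenom bound fuel b r q₁ q₂

/-- Whether every residue in `as` is at circular distance at least `G` modulo `L` from every residue
in `bs`. -/
def areApart (G L : ℕ) (as bs : List ℕ) : Bool :=
  as.all fun a ↦ bs.all fun b ↦ Nat.ble (2 * G) ((a + (L - b) + G) % L)

/-- The Baker–Davenport reduction for `linForm t n m i j` with `n ≤ 2 ^ B`, `i ≤ f` and `j ≤ g`: a
computation with `P` binary digits and a convergent denominator `q ≥ 2 ^ Q` that returns `true` only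
if all these linear forms exceed `2 ^ (-w)` in absolute value. -/
def reductionCheck (P B Q w f g : ℕ) : Bool :=
  force (bisect belowInvGoldenRatio P 0 0) fun C ↦
  force (bisect belowInvTribonacci P 0 0) fun S ↦
  force (fixedLog P (2 ^ P - C - 1)) fun L₁ ↦
  force (fixedLog P (2 ^ P - S - 1)) fun L₂ ↦
  force (fixedLog P (fixedQuotient P C S)) fun M ↦
  force (convergentDenom (2 ^ Q) (2 * P) L₁ L₂ 1 0) fun q ↦
  force ((q * L₁ + L₂ / 2) / L₂) fun p ↦
  force (gapThreshold P B w (logError P) L₁ L₂ p q) fun G ↦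
    Nat.ble 1 q && Nat.ble (2 * G + 1) L₂ &&
      areApart G L₂ (residues P L₂ q M S g S [q * M % L₂]) (residues P L₂ q 0 C f C [q * 0 % L₂])

lemma areApart_iff {G : ℕ} {as bs : List ℕ} :
    areApart G L as bs = true ↔ ∀ a ∈ as, ∀ b ∈ bs, 2 * G ≤ (a + (L - b) + G) % L := by
  simp only [areApart, List.all_eq_true, Nat.ble_eq]

lemma isFloorApprox_inv_goldenRatio :
    IsFloorApprox P 1 (bisect belowInvGoldenRatio P 0 0) φ⁻¹ := by
  have hφ := inv_pos.2 goldenRatio_pos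
  simpa using isFloorApprox_bisect (k := 0) (X := 0) (fuel := P) belowInvGoldenRatio_iff
    ⟨by simpa using hφ.le, by simpa using inv_goldenRatio_le.trans (by norm_num)⟩

lemma isFloorApprox_inv_tribonacci (ht : t ^ 3 = t ^ 2 + t + 1) :
    IsFloorApprox P 1 (bisect belowInvTribonacci P 0 0) t⁻¹ := by
  have ht₀ : 0 < t := by linarith [le_tribonacci ht]
  simpa using isFloorApprox_bisect (k := 0) (X := 0) (fuel := P) (belowInvTribonacci_iff ht)
    ⟨by simpa using ht₀.le, by simpa using (inv_tribonacci_le ht).trans (by norm_num)⟩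

lemma abs_log_quotient_sub_le (ht : t ^ 3 = t ^ 2 + t + 1) :
    |log ((3 * t ^ 2 - 2 * t - 1) / ((2 * φ - 1) * t)) + -log (gapFactor t⁻¹ j)
      - -log (gapFactor φ⁻¹ i)| ≤ 2 := by
  obtain ⟨hquot₁, hquot₂⟩ := binet_quotient_bounds ht
  have hlog₀ := log_nonneg hquot₁
  have hlog₁ := log_le_sub_one_of_pos (zero_lt_one.trans_le hquot₁)
  have ht₀ : 0 < t := by linarith [le_tribonacci ht]
  have ht' := inv_tribonacci_le ht
  have hφ' := inv_goldenRatio_le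
  have hφ₀ := inv_pos.2 goldenRatio_pos
  have ht₁ := inv_pos.2 ht₀
  rw [abs_le]
  constructor <;> linarith [log_gapFactor_nonpos (k := j) ht₁.le (by linarith),
    neg_log_gapFactor_le (k := j) ht₁.le (by linarith),
    log_gapFactor_nonpos (k := i) hφ₀.le (by linarith),
    neg_log_gapFactor_le (k := i) hφ₀.le hφ']

theorem two_pow_inv_le_abs_linForm (ht : t ^ 3 = t ^ 2 + t + 1)
    (h : reductionCheck P B Q w f g = true) (hn : n ≤ 2 ^ B) (m : ℕ) (hi : i ≤ f) (hj : j ≤ g) :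
    ((2 : ℝ) ^ w)⁻¹ ≤ |linForm t n m i j| := by
  simp only [reductionCheck, force_eq, Bool.and_eq_true, Nat.ble_eq, areApart_iff] at h
  obtain ⟨⟨hq, hGL⟩, hapart⟩ := h
  have ht₁ := le_tribonacci ht
  have ht₂ := tribonacci_le ht
  have hC := isFloorApprox_inv_goldenRatio (P := P)
  have hS := isFloorApprox_inv_tribonacci (P := P) ht
  have hlog : log t ≤ 1 := by linarith [log_le_sub_one_of_pos (by linarith : 0 < t)]
  obtain ⟨Y, hY, hYmem⟩ := exists_mem_residues hS ((inv_tribonacci_le ht).trans (by norm_num)) hj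
  obtain ⟨Z, hZ, hZmem⟩ := exists_mem_residues hC (inv_goldenRatio_le.trans (by norm_num)) hi
  have hA := (isFloorApprox_log_binet_quotient ht hC hS).add hY
  rw [← two_mul] at hA
  have hgap := hapart _ hYmem _ hZmem
  rw [zero_add] at hgap
  have hmain := two_pow_inv_le_abs_of_le_mod
    (isFloorApprox_log hC one_lt_goldenRatio.le goldenRatio_lt_two.le)
    (isFloorApprox_log hS (by linarith) (by linarith)) hA hZ (le_log_tribonacci ht) hlog
    (abs_log_quotient_sub_le ht) hq rfl hGL hgap hn m
  rw [linForm]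
  convert hmain using 2
  ring

end ReductionCheck

open Real goldenRatio

section Descent

-- `2 ^ 4087` and `2 ^ 275` are the bounds for `n` that Baker's method gives without a bound for the
-- gaps and with the gaps at most `6000` and `5000`. If the linear forms are at least `2 ^ (-w)`,
-- the gaps are at most `(0.6932 * w + 5) / 0.479` and `(0.6932 * w + 5) / 0.6`, whence `f` and `g`.
lemma reductionCheck_left : reductionCheck 8260 4087 4103 4121 6000 0 = true := by
  decide +kernel

lemma reductionCheck_right : reductionCheck 8260 4087 4103 4121 0 5000 = true := by
  decide +kernel

lemma reductionCheck_full : reductionCheck 640 275 295 322 477 381 = true := by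
  decide +kernel

lemma exp_neg_le_two_pow_inv (w : ℕ) : exp (-(0.6932 * w)) ≤ ((2 : ℝ) ^ w)⁻¹ := by
  have hlog : log 2 ≤ 0.6932 := log_two_lt_d9.le.trans (by norm_num)
  calc exp (-(0.6932 * w)) ≤ exp (-(log 2 * w)) := by gcongr
    _ = ((2 : ℝ) ^ w)⁻¹ := by rw [exp_neg, mul_comm, exp_nat_mul, exp_log two_pos]

lemma le_of_mul_le_mul {x f : ℕ} {c l U : ℝ} (hc : 0 < c) (hl : c ≤ l) (h : x * l ≤ U)
    (hU : U ≤ c * f) : x ≤ f := by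
  have : (x : ℝ) * c ≤ f * c := calc
    (x : ℝ) * c ≤ x * l := by gcongr
    _ ≤ f * c := by linarith
  exact_mod_cast le_of_mul_le_mul_right this hc

namespace IsNearSolution

variable {t : ℝ} {n m a b w f g : ℕ}

lemma gaps_le (hS : IsNearSolution t n m a b) (ht : t ^ 3 = t ^ 2 + t + 1)
    (hleft : ∀ i ≤ f, ((2 : ℝ) ^ w)⁻¹ ≤ |linForm t n m i 0|)
    (hright : ∀ j ≤ g, ((2 : ℝ) ^ w)⁻¹ ≤ |linForm t n m 0 j|)
    (hf : (0.6932 * w + 5 : ℝ) ≤ 0.479 * f) (hg : (0.6932 * w + 5 : ℝ) ≤ 0.6 * g) :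
    a ≤ f ∧ b ≤ g := by
  have ha (h : a * log φ ≤ 0.6932 * w + 5) : a ≤ f :=
    le_of_mul_le_mul (by norm_num) le_log_goldenRatio h hf
  have hb (h : b * log t ≤ 0.6932 * w + 5) : b ≤ g :=
    le_of_mul_le_mul (by norm_num) (le_log_tribonacci ht) h hg
  obtain ⟨ha', hb'⟩ := hS.mul_log_le_and_mul_log_le ht le_rfl
    ((exp_neg_le_two_pow_inv w).trans (hleft 0 f.zero_le))
    (fun h ↦ (exp_neg_le_two_pow_inv w).trans (hleft a (ha h)))
    (fun h ↦ (exp_neg_le_two_pow_inv w).trans (hright b (hb h)))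
  exact ⟨ha ha', hb hb'⟩

lemma le_two_pow_275_of_gaps_le (hS : IsNearSolution t n m a b)
    (ht : t ^ 3 = t ^ 2 + t + 1) (ha : a ≤ 6000) (hb : b ≤ 5000) : n ≤ 2 ^ 275 := by
  have hn := hS.le_two_pow_of_gaps_le ht (k := 13) (B := 13) (by norm_num) (by norm_num) (by lia)
    (by lia) (by norm_num) (hS.two_mul_log_le_two_pow ht)
  have hlog := two_mul_log_le (hS.one_le_left.trans hS.left_le) hn
  simpa only [Nat.reduceMul, Nat.reduceAdd] using hS.le_two_pow_of_gaps_le ht (k := 13) (B := 9)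
    (by norm_num) (by norm_num) (by lia) (by lia) (by norm_num) (hlog.trans (by norm_num))

theorem le_477 (hS : IsNearSolution t n m a b) (ht : t ^ 3 = t ^ 2 + t + 1) : n ≤ 477 := by
  have hn := hS.le_two_pow_4087 ht
  obtain ⟨ha, hb⟩ := hS.gaps_le ht
    (fun _ hi ↦ two_pow_inv_le_abs_linForm ht reductionCheck_left hn m hi le_rfl)
    (fun _ hj ↦ two_pow_inv_le_abs_linForm ht reductionCheck_right hn m le_rfl hj)
    (by norm_num) (by norm_num)
  have hlin {i j : ℕ} (hi : i ≤ 477) (hj : j ≤ 381) :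
      ((2 : ℝ) ^ 322)⁻¹ ≤ |linForm t n m i j| :=
    two_pow_inv_le_abs_linForm ht reductionCheck_full
      (hS.le_two_pow_275_of_gaps_le ht ha hb) m hi hj
  obtain ⟨ha', hb'⟩ := hS.gaps_le ht (fun _ hi ↦ hlin hi (Nat.zero_le _))
    (fun _ hj ↦ hlin (Nat.zero_le _) hj) (by norm_num) (by norm_num)
  exact le_of_mul_le_mul (by norm_num) le_log_goldenRatio
    (hS.mul_log_le_of_full ((exp_neg_le_two_pow_inv 322).trans (hlin ha' hb'))) (by norm_num)

end IsNearSolution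

end Descent

section SmallIndices

lemma monotone_trib : Monotone trib := by
  have hnonneg (k : ℕ) : 0 ≤ trib k ∧ 0 ≤ trib (k + 1) ∧ trib (k + 1) ≤ trib (k + 2) := by
    induction k with
    | zero => simp [trib]
    | succ k ih =>
      have : trib (k + 3) = trib (k + 2) + trib (k + 1) + trib k := rfl
      lia
  refine monotone_nat_of_le_succ fun k ↦ ?_
  cases k with
  | zero => simp [trib]
  | succ k => exact (hnonneg k).2.2

lemma le_trib_add_two (k : ℕ) : (k : ℤ) ≤ trib (k + 2) := by
  induction k with
  | zero => simp [trib]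
  | succ k ih =>
    have hrec : trib (k + 3) = trib (k + 2) + trib (k + 1) + trib k := rfl
    have hone : trib 1 ≤ trib (k + 1) := monotone_trib (by lia)
    have hzero : trib 0 ≤ trib k := monotone_trib k.zero_le
    simp only [trib] at hone hzero
    push_cast
    rw [show k + 1 + 2 = k + 3 from rfl]
    lia

variable {n m n₁ m₁ : ℕ}

lemma le_fib_add_four (hm : m₁ < m) (h : (Nat.fib n : ℤ) - Nat.fib n₁ = trib m - trib m₁) :
    m ≤ Nat.fib n + 4 := by
  rcases lt_or_ge m 4 with hm₄ | hm₄
  · lia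
  obtain ⟨k, rfl⟩ := Nat.exists_eq_add_of_le' hm₄
  have hrec : trib (k + 4) = trib (k + 3) + trib (k + 2) + trib (k + 1) := rfl
  have hm₁ : trib m₁ ≤ trib (k + 3) := monotone_trib (by lia)
  have hzero : trib 0 ≤ trib (k + 1) := monotone_trib (k + 1).zero_le
  have hk := le_trib_add_two k
  simp only [trib] at hzero
  lia

theorem le_477_and_le_4185_of_fib_sub_eq_trib_sub {t : ℝ} (ht : t ^ 3 = t ^ 2 + t + 1) (hn : n₁ < n)
    (hm : m₁ < m) (h : (Nat.fib n : ℤ) - Nat.fib n₁ = trib m - trib m₁) :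
    n ≤ 477 ∧ m ≤ 4185 := by
  rcases lt_or_ge n 20 with hn₂₀ | hn₂₀
  · have hfib : Nat.fib n ≤ Nat.fib 19 := Nat.fib_mono (by lia)
    have hle := le_fib_add_four hm h
    norm_num at hfib
    lia
  · have hS := isNearSolution_of_fib_sub_eq_trib_sub ht hn hm hn₂₀ h
    have hn' := hS.le_477 ht
    have hmn := hS.le
    lia

end SmallIndices

end FibTrib

/-- If `n > n₁ ≥ 2`, `m > m₁ ≥ 2` and `F n - F n₁ = T m - T m₁`, then
`max {(n-n₁)·log α, (m-m₁)·log α_T} < 1.66×10³⁰·(log n)²` and `n < 8×10⁵¹`. -/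
theorem fib_trib_max_bound (α αT : ℝ)
    (hα : α = (1 + Real.sqrt 5) / 2)
    (hroot : αT ^ 3 - αT ^ 2 - αT - 1 = 0)
    (huniq : ∀ x : ℝ, x ^ 3 - x ^ 2 - x - 1 = 0 → x = αT)
    (n m n₁ m₁ : ℕ) (hn₁ : 2 ≤ n₁) (hn : n₁ < n) (hm₁ : 2 ≤ m₁) (hm : m₁ < m)
    (h : (Nat.fib n : ℤ) - Nat.fib n₁ = trib m - trib m₁) :
    max (((n : ℝ) - n₁) * Real.log α) (((m : ℝ) - m₁) * Real.log αT) <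
        1.66 * 10 ^ 30 * Real.log n ^ 2 ∧
      n < 8 * 10 ^ 51 := by
  have ht : αT ^ 3 = αT ^ 2 + αT + 1 := by linarith
  obtain ⟨hn', hm'⟩ := FibTrib.le_477_and_le_4185_of_fib_sub_eq_trib_sub ht hn hm h
  have hlog : 1 ≤ Real.log n ^ 2 := by
    have : (3 : ℝ) ≤ n := by exact_mod_cast Nat.lt_of_le_of_lt hn₁ hn
    refine one_le_pow₀ ((Real.le_log_iff_exp_le (by linarith)).2 ?_)
    linarith [Real.exp_one_lt_three]
  have hα₁ : Real.log α ≤ 1 := by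
    rw [hα]
    exact (Real.log_le_sub_one_of_pos Real.goldenRatio_pos).trans
      (by linarith [Real.goldenRatio_lt_two])
  have hαT : Real.log αT ≤ 1 := by
    have : 0 < αT := by linarith [FibTrib.le_tribonacci ht]
    linarith [Real.log_le_sub_one_of_pos this, FibTrib.tribonacci_le ht]
  have hgap {k k₁ : ℕ} {l : ℝ} (hk : k₁ < k) (hk' : k ≤ 5000) (hl : l ≤ 1) :
      ((k : ℝ) - k₁) * l < 1.66 * 10 ^ 30 * Real.log n ^ 2 := by
    have hk₁ : (k₁ : ℝ) ≤ k := by exact_mod_cast hk.le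
    have hk₂ : (k : ℝ) ≤ 5000 := by exact_mod_cast hk'
    nlinarith [mul_le_of_le_one_right (sub_nonneg.2 hk₁) hl, k₁.cast_nonneg (α := ℝ)]
  exact ⟨max_lt (hgap hn (by lia) hα₁) (hgap hm (by lia) hαT), by lia⟩
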